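/- For every q ≥ 2 there exists a constant C(q) > 0 such that for every p ∈ [2, ∞], every dimension d ∈ ℕ and every f ∈ ℓ^p(ℤ^d), one has ‖ sup_{t ∈ 𝔻} |𝓜_t^q f| ‖_{ℓ^p(ℤ^d)} ≤ C(q) ‖f‖_{ℓ^p(ℤ^d)}, where the supremum is over all dyadic t. -/

import Mathlib

open scoped ENNReal NNReal

open Classical in
noncomputable def latticeBall (q : ℝ) (d : ℕ) (t : ℝ) : Finset (Fin d → ℤ) :=
  (Finset.Icc (fun _ => -(⌈t⌉₊ : ℤ)) (fun _ => (⌈t⌉₊ : ℤ))).filter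
    (fun x => ∑ i, |(x i : ℝ)| ^ q ≤ t ^ q)

noncomputable def avgOp (q : ℝ) (d : ℕ) (t : ℝ) (f : (Fin d → ℤ) → ℂ) (x : Fin d → ℤ) : ℂ :=
  ((latticeBall q d t).card : ℂ)⁻¹ * ∑ y ∈ latticeBall q d t, f (x - y)

noncomputable def lpNorm (p : ℝ≥0∞) {d : ℕ} (g : (Fin d → ℤ) → ℝ≥0∞) : ℝ≥0∞ :=
  if p = ∞ then ⨆ x, g x else (∑' x, g x ^ p.toReal) ^ (1 / p.toReal)

/-!
Write `M_t` for the convolution operator `avgOp q d t` and `κ = t / d^(1/q)` for its normalised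
radius. The supremum over dyadic `t` is controlled on `ℓ²` by comparing the multiplier of `M_t` with
that of an operator whose maximal function is bounded independently of the dimension.

Near the frequency `0` the multiplier of `M_t` at `φ` is within `O(z)` of `1`, where
`z = min(κ^q, κ²) * ∑ sin²(φ_i / 2)`, and so is the Cesàro mean of the first
`K ≈ d * min(κ^q, κ²)` powers of the lazy random walk, because one step of the walk has multiplier
`1 - (∑ sin²(φ_i / 2)) / d`. For small `κ` most coordinates of a point of
the ball are `0` or `±1`, and the multiplier is large again near `(π, …, π)`, where it is a bounded
multiple of the Cesàro mean of the walk twisted by the character `(π, …, π)`. Away from these two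
frequencies the multiplier is small: for small `κ` because averaging over permutations of the
coordinates produces a product of many averaged cosines, for large `κ` because either all
frequencies are small and the coordinates equidistribute, or a single shift already yields the gain.
Hence the squared errors at the radii `t = 2^n` sum to a bounded function of the frequency, and
Plancherel bounds the square function of the errors. The Cesàro means themselves are dominated by
the maximal ergodic theorem for the random walk, with a constant independent of `d`.

Since `M_t` is a positive average, `|M_t f|^p ≤ (M_t |f|^(p/2))²`, so the case of finite `p ≥ 2`
follows from `ℓ²`; for `p = ∞` the averages are bounded by `sup |f|`.
-/

open Finset
open scoped BigOperators

namespace DyadicMaximal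

/-! ### Lattice points in power balls -/

/-- The lattice points `x ∈ ℤ^d` with `∑ |x_i|^q ≤ N`, for `0 < q`. Parametrising by `N = t ^ q`
instead of the radius `t` turns fixing a coordinate `x_i = a` into the translation
`N ↦ N - |a|^q`. -/
noncomputable def powerBall (q : ℝ) (d : ℕ) (N : ℝ) : Finset (Fin d → ℤ) :=
  open Classical in
  {x ∈ Icc (fun _ ↦ -(⌈N ^ q⁻¹⌉₊ : ℤ)) (fun _ ↦ (⌈N ^ q⁻¹⌉₊ : ℤ)) | ∑ i, |(x i : ℝ)| ^ q ≤ N}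

section PowerBall

variable {q : ℝ} {d : ℕ}

lemma abs_rpow_nonneg (q x : ℝ) : 0 ≤ |x| ^ q :=
  Real.rpow_nonneg (abs_nonneg x) q

lemma one_le_abs_intCast {a : ℤ} (ha : a ≠ 0) : (1 : ℝ) ≤ |(a : ℝ)| := by
  exact_mod_cast Int.one_le_abs ha

lemma mem_powerBall (hq : 0 < q) {N : ℝ} {x : Fin d → ℤ} :
    x ∈ powerBall q d N ↔ ∑ i, |(x i : ℝ)| ^ q ≤ N := by
  rw [powerBall, mem_filter, and_iff_right_iff_imp]
  intro hx
  have hcoord (i : Fin d) : |x i| ≤ (⌈N ^ q⁻¹⌉₊ : ℤ) := by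
    have hi : |(x i : ℝ)| ^ q ≤ N :=
      (single_le_sum (f := fun i ↦ |(x i : ℝ)| ^ q) (fun j _ ↦ abs_rpow_nonneg q _)
        (mem_univ i)).trans hx
    have hi' : |(x i : ℝ)| ≤ N ^ q⁻¹ :=
      (Real.le_rpow_inv_iff_of_pos (abs_nonneg _) ((abs_rpow_nonneg q _).trans hi) hq).2 hi
    exact_mod_cast hi'.trans (Nat.le_ceil _)
  rw [mem_Icc]
  exact ⟨fun i ↦ (abs_le.1 (hcoord i)).1, fun i ↦ (abs_le.1 (hcoord i)).2⟩

lemma powerBall_mono (hq : 0 < q) {M N : ℝ} (h : M ≤ N) : powerBall q d M ⊆ powerBall q d N :=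
  fun _ hx ↦ (mem_powerBall hq).2 (((mem_powerBall hq).1 hx).trans h)

lemma powerBall_nonempty (hq : 0 < q) {N : ℝ} (hN : 0 ≤ N) : (powerBall q d N).Nonempty :=
  ⟨0, (mem_powerBall hq).2 (by simpa [Real.zero_rpow hq.ne'] using hN)⟩

lemma card_powerBall_pos (hq : 0 < q) {N : ℝ} (hN : 0 ≤ N) : (0 : ℝ) < #(powerBall q d N) := by
  exact_mod_cast (powerBall_nonempty hq hN).card_pos

lemma sum_abs_rpow_update (q : ℝ) (y : Fin d → ℤ) (i : Fin d) (a : ℤ) :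
    ∑ j, |(Function.update y i a j : ℝ)| ^ q
      = ∑ j, |(y j : ℝ)| ^ q - |(y i : ℝ)| ^ q + |(a : ℝ)| ^ q := by
  have hrest : ∑ j ∈ univ.erase i, |(Function.update y i a j : ℝ)| ^ q
      = ∑ j ∈ univ.erase i, |(y j : ℝ)| ^ q :=
    sum_congr rfl fun j hj ↦ by rw [Function.update_of_ne (ne_of_mem_erase hj)]
  rw [← add_sum_erase _ _ (mem_univ i), ← add_sum_erase univ (fun j ↦ |(y j : ℝ)| ^ q) (mem_univ i),
    hrest, Function.update_self]
  ring

lemma card_powerBall_slice (hq : 0 < q) (N : ℝ) (i : Fin d) (a : ℤ) :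
    #{y ∈ powerBall q d N | y i = a} = #{y ∈ powerBall q d (N - |(a : ℝ)| ^ q) | y i = 0} := by
  refine card_bij' (fun y _ ↦ Function.update y i 0) (fun y _ ↦ Function.update y i a)
    ?_ ?_ ?_ ?_
  all_goals
    intro y hy
    rw [mem_filter, mem_powerBall hq] at hy
  · rw [mem_filter, mem_powerBall hq, sum_abs_rpow_update, hy.2]
    simp only [Int.cast_zero, abs_zero, Real.zero_rpow hq.ne', Function.update_self, and_true]
    linarith
  · rw [mem_filter, mem_powerBall hq, sum_abs_rpow_update, hy.2]
    simp only [Int.cast_zero, abs_zero, Real.zero_rpow hq.ne', Function.update_self, and_true]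
    linarith
  · rw [Function.update_idem, ← hy.2, Function.update_eq_self]
  · rw [Function.update_idem, ← hy.2, Function.update_eq_self]

lemma sum_card_filter_coord (s : Finset (Fin d → ℤ)) (p : ℤ → Prop) [DecidablePred p] :
    ∑ y ∈ s, #{i | p (y i)} = ∑ i, #{y ∈ s | p (y i)} :=
  sum_card_bipartiteAbove_eq_sum_card_bipartiteBelow fun (y : Fin d → ℤ) i ↦ p (y i)

lemma card_coord_ne_zero_le (hq : 0 < q) {N : ℝ} {y : Fin d → ℤ} (hy : y ∈ powerBall q d N) :
    (#{i | y i ≠ 0} : ℝ) ≤ N := by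
  refine le_trans ?_ ((mem_powerBall hq).1 hy)
  rw [card_filter, Nat.cast_sum]
  refine sum_le_sum fun i _ ↦ ?_
  split_ifs with h
  · exact_mod_cast Real.one_le_rpow (one_le_abs_intCast h) hq.le
  · simpa only [Nat.cast_zero] using abs_rpow_nonneg q (y i)

end PowerBall

/-! ### Power balls of small radius -/

section SmallRadius

variable {q : ℝ} {d : ℕ}

lemma two_mul_card_slice_zero_le (hq : 0 < q) (N : ℝ) (i : Fin d) :
    2 * #{y ∈ powerBall q d (N - 1) | y i = 0} ≤ #{y ∈ powerBall q d N | y i ≠ 0} := by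
  have hslice (a : ℤ) (ha : |(a : ℝ)| = 1) :
      #{y ∈ powerBall q d N | y i = a} = #{y ∈ powerBall q d (N - 1) | y i = 0} := by
    rw [card_powerBall_slice hq, ha, Real.one_rpow]
  have hdisj : Disjoint {y ∈ powerBall q d N | y i = 1} {y ∈ powerBall q d N | y i = -1} :=
    disjoint_filter.2 fun y _ h ↦ by omega
  calc 2 * #{y ∈ powerBall q d (N - 1) | y i = 0}
      = #({y ∈ powerBall q d N | y i = 1} ∪ {y ∈ powerBall q d N | y i = -1}) := by
        rw [card_union_of_disjoint hdisj, hslice 1 (by simp), hslice (-1) (by simp), two_mul]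
    _ ≤ #{y ∈ powerBall q d N | y i ≠ 0} := by
        rw [← filter_or]
        exact card_le_card (monotone_filter_right _ fun y _ h ↦ by omega)

lemma card_powerBall_sub_one_mul_le (hq : 0 < q) (N : ℝ) :
    (#(powerBall q d (N - 1)) : ℝ) * (2 * (d - N)) ≤ N * #(powerBall q d N) := by
  have hzero : ∀ y ∈ powerBall q d (N - 1), d - N ≤ (#{i | y i = 0} : ℝ) := fun y hy ↦ by
    have hne := card_coord_ne_zero_le hq hy
    have hsplit := card_filter_add_card_filter_not (s := univ) fun i ↦ y i = 0
    rw [card_univ, Fintype.card_fin] at hsplit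
    have hsplit' : (#{i | y i = 0} : ℝ) + #{i | y i ≠ 0} = d := by exact_mod_cast hsplit
    linarith
  calc (#(powerBall q d (N - 1)) : ℝ) * (2 * (d - N))
      = 2 * (#(powerBall q d (N - 1)) • (d - N)) := by rw [nsmul_eq_mul]; ring
    _ ≤ 2 * ∑ y ∈ powerBall q d (N - 1), (#{i | y i = 0} : ℝ) := by
        gcongr
        exact card_nsmul_le_sum _ _ _ hzero
    _ = ∑ i : Fin d, ((2 * #{y ∈ powerBall q d (N - 1) | y i = 0} : ℕ) : ℝ) := by
        rw [← Nat.cast_sum, ← Nat.cast_sum, sum_card_filter_coord _ (· = 0), ← mul_sum]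
        push_cast
        rfl
    _ ≤ ∑ i : Fin d, (#{y ∈ powerBall q d N | y i ≠ 0} : ℝ) :=
        sum_le_sum fun i _ ↦ mod_cast two_mul_card_slice_zero_le hq N i
    _ = ∑ y ∈ powerBall q d N, (#{i | y i ≠ 0} : ℝ) := by
        exact_mod_cast (sum_card_filter_coord (powerBall q d N) (· ≠ 0)).symm
    _ ≤ #(powerBall q d N) • N := sum_le_card_nsmul _ _ _ fun y hy ↦ card_coord_ne_zero_le hq hy
    _ = N * #(powerBall q d N) := by rw [nsmul_eq_mul, mul_comm]

lemma card_powerBall_sub_natCast_le (hq : 0 < q) {N : ℝ} (hd : 0 < d) (hN : 0 ≤ N)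
    (hNd : N ≤ d / 2) (r : ℕ) :
    (#(powerBall q d (N - r)) : ℝ) ≤ (N / d) ^ r * #(powerBall q d N) := by
  have hd' : (0 : ℝ) < d := by exact_mod_cast hd
  induction r with
  | zero => simp
  | succ r ih =>
    have hstep : (#(powerBall q d (N - r - 1)) : ℝ) ≤ N / d * #(powerBall q d (N - r)) := by
      rw [div_mul_eq_mul_div, le_div_iff₀ hd']
      calc (#(powerBall q d (N - r - 1)) : ℝ) * d
          ≤ #(powerBall q d (N - r - 1)) * (2 * (d - (N - r))) := by
            gcongr
            linarith [r.cast_nonneg (α := ℝ)]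
        _ ≤ (N - r) * #(powerBall q d (N - r)) := card_powerBall_sub_one_mul_le hq (N - r)
        _ ≤ N * #(powerBall q d (N - r)) := by
            gcongr
            linarith [r.cast_nonneg (α := ℝ)]
    calc (#(powerBall q d (N - (r + 1 : ℕ))) : ℝ)
        = #(powerBall q d (N - r - 1)) := by push_cast; rw [sub_sub]
      _ ≤ N / d * ((N / d) ^ r * #(powerBall q d N)) := hstep.trans (by gcongr)
      _ = (N / d) ^ (r + 1) * #(powerBall q d N) := by rw [pow_succ', mul_assoc]

lemma mul_pow_floor_le {θ x : ℝ} (hθ : 0 ≤ θ) (hθ2 : θ ≤ 1 / 2) (hx : 2 ≤ x) :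
    x * θ ^ ⌊x⌋₊ ≤ 16 * θ ^ 2 / x := by
  obtain ⟨j, hj⟩ := Nat.exists_eq_add_of_le (Nat.le_floor (by exact_mod_cast hx) : 2 ≤ ⌊x⌋₊)
  have hgrowth (j : ℕ) : ((j : ℝ) + 3) ^ 2 ≤ 16 * 2 ^ j := by
    induction j with
    | zero => norm_num
    | succ j ih =>
      push_cast
      rw [pow_succ (2 : ℝ)]
      nlinarith [(Nat.cast_nonneg j : (0 : ℝ) ≤ j)]
  have hxj : x ≤ j + 3 := by
    have := (Nat.lt_floor_add_one x).le
    rw [hj] at this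
    push_cast at this
    linarith
  rw [le_div_iff₀ (by linarith)]
  calc x * θ ^ ⌊x⌋₊ * x = x ^ 2 * (θ ^ 2 * θ ^ j) := by rw [hj, pow_add]; ring
    _ ≤ (16 * 2 ^ j) * (θ ^ 2 * (1 / 2) ^ j) := by
        gcongr
        exact (pow_le_pow_left₀ (by linarith) hxj 2).trans (hgrowth j)
    _ = 16 * θ ^ 2 * (2 * (1 / 2)) ^ j := by rw [mul_pow]; ring
    _ = 16 * θ ^ 2 := by norm_num

lemma card_slice_mul_abs_rpow_le (hq : 1 ≤ q) {N : ℝ} (hd : 0 < d) (hN : 0 ≤ N)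
    (hNd : N ≤ d / 2) (i : Fin d) {a : ℤ} (ha : 2 ≤ |a|) :
    (#{y ∈ powerBall q d N | y i = a} : ℝ) * |(a : ℝ)| ^ q
      ≤ |(a : ℝ)| ^ (-q) * (16 * (N / d) ^ 2 * #(powerBall q d N)) := by
  have hq0 : 0 < q := by linarith
  have hθ : N / d ≤ 1 / 2 := by
    rw [div_le_iff₀ (by exact_mod_cast hd)]
    linarith
  have hx : 2 ≤ |(a : ℝ)| ^ q := by
    have ha' : (2 : ℝ) ≤ |(a : ℝ)| := by exact_mod_cast ha
    exact ha'.trans (Real.self_le_rpow_of_one_le (by linarith) hq)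
  set x : ℝ := |(a : ℝ)| ^ q
  have hslice : (#{y ∈ powerBall q d N | y i = a} : ℝ)
      ≤ (N / d) ^ ⌊x⌋₊ * #(powerBall q d N) := by
    refine le_trans ?_ (card_powerBall_sub_natCast_le hq0 hd hN hNd ⌊x⌋₊)
    rw [card_powerBall_slice hq0]
    refine Nat.cast_le.2 ((card_filter_le _ _).trans (card_le_card (powerBall_mono hq0 ?_)))
    exact sub_le_sub_left (Nat.floor_le (by linarith)) N
  calc (#{y ∈ powerBall q d N | y i = a} : ℝ) * x
      ≤ (N / d) ^ ⌊x⌋₊ * #(powerBall q d N) * x := by gcongr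
    _ = (x * (N / d) ^ ⌊x⌋₊) * #(powerBall q d N) := by ring
    _ ≤ (16 * (N / d) ^ 2 / x) * #(powerBall q d N) := by
        gcongr
        exact mul_pow_floor_le (by positivity) hθ hx
    _ = |(a : ℝ)| ^ (-q) * (16 * (N / d) ^ 2 * #(powerBall q d N)) := by
        rw [Real.rpow_neg (abs_nonneg _)]
        ring

lemma sum_large_coord_rpow_le (hq : 1 < q) {N : ℝ} (hd : 0 < d) (hN : 0 ≤ N) (hNd : N ≤ d / 2)
    (i : Fin d) :
    ∑ y ∈ powerBall q d N, (if 2 ≤ |y i| then |(y i : ℝ)| ^ q else 0)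
      ≤ (∑' a : ℤ, |(a : ℝ)| ^ (-q)) * (16 * (N / d) ^ 2 * #(powerBall q d N)) := by
  set I := (powerBall q d N).image (fun y ↦ y i)
  have hfiber : ∀ a ∈ I,
      ∑ y ∈ powerBall q d N with y i = a, (if 2 ≤ |y i| then |(y i : ℝ)| ^ q else 0)
        ≤ |(a : ℝ)| ^ (-q) * (16 * (N / d) ^ 2 * #(powerBall q d N)) := fun a _ ↦ by
    rw [sum_congr rfl (g := fun _ ↦ if 2 ≤ |a| then |(a : ℝ)| ^ q else 0)
      fun y hy ↦ by rw [(mem_filter.1 hy).2], sum_const, nsmul_eq_mul]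
    split_ifs with ha
    · exact card_slice_mul_abs_rpow_le hq.le hd hN hNd i ha
    · rw [mul_zero]
      have := abs_rpow_nonneg (-q) a
      positivity
  rw [← sum_fiberwise_of_maps_to (t := I) fun y hy ↦ mem_image_of_mem (fun y ↦ y i) hy]
  refine (sum_le_sum hfiber).trans ?_
  rw [← sum_mul]
  gcongr
  exact (Real.summable_abs_int_rpow hq).sum_le_tsum I fun a _ ↦ abs_rpow_nonneg (-q) a

lemma sum_abs_rpow_eq_card_add (hq : 0 < q) (y : Fin d → ℤ) :
    ∑ i, |(y i : ℝ)| ^ q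
      = #{i | |y i| = 1} + ∑ i, (if 2 ≤ |y i| then |(y i : ℝ)| ^ q else 0) := by
  rw [card_filter, Nat.cast_sum, ← sum_add_distrib]
  refine sum_congr rfl fun i _ ↦ ?_
  rcases eq_or_ne (y i) 0 with h0 | h0
  · simp [h0, Real.zero_rpow hq.ne']
  by_cases h1 : |y i| = 1
  · have : |(y i : ℝ)| = 1 := by exact_mod_cast h1
    simp [this, h1]
  · have : 2 ≤ |y i| := by have := Int.one_le_abs h0; omega
    simp [this, h1]

-- A point outside `powerBall q d (N - 1)` with few coordinates `±1` carries mass at least `N / 4`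
-- on its coordinates of modulus at least two, and on average that mass is `O(N² / d)`.
lemma card_few_unit_coords_le (hq : 1 < q) {N : ℝ} (hd : 0 < d) (hN : 4 ≤ N) (hNd : N ≤ d / 2) :
    (#{y ∈ powerBall q d N | (#{i | |y i| = 1} : ℝ) < N / 2} : ℝ)
      ≤ (1 + 64 * ∑' a : ℤ, |(a : ℝ)| ^ (-q)) * (N / d) * #(powerBall q d N) := by
  have hq0 : 0 < q := by linarith
  have : (0 : ℝ) < d := by exact_mod_cast hd
  set C : ℝ := ∑' a : ℤ, |(a : ℝ)| ^ (-q)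
  set B := powerBall q d N
  set b : (Fin d → ℤ) → ℝ := fun y ↦ ∑ i, (if 2 ≤ |y i| then |(y i : ℝ)| ^ q else 0)
  have hb (y : Fin d → ℤ) : 0 ≤ b y := sum_nonneg fun i _ ↦ by
    split_ifs
    exacts [abs_rpow_nonneg q _, le_rfl]
  have hsub : {y ∈ B | (#{i | |y i| = 1} : ℝ) < N / 2}
      ⊆ powerBall q d (N - (1 : ℕ)) ∪ {y ∈ B | N / 4 ≤ b y} := fun y hy ↦ by
    rw [mem_filter] at hy
    rw [mem_union, mem_filter, mem_powerBall hq0, sum_abs_rpow_eq_card_add hq0, Nat.cast_one]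
    by_contra! hcon
    linarith [hcon.1, hcon.2 hy.1, hy.2]
  have hinner : (#(powerBall q d (N - (1 : ℕ))) : ℝ) ≤ N / d * #B := by
    simpa only [pow_one] using card_powerBall_sub_natCast_le hq0 hd (by linarith) hNd 1
  have hmass : (#{y ∈ B | N / 4 ≤ b y} : ℝ) * (N / 4) ≤ 64 * C * (N / d) * #B * (N / 4) :=
    calc (#{y ∈ B | N / 4 ≤ b y} : ℝ) * (N / 4)
        = #{y ∈ B | N / 4 ≤ b y} • (N / 4) := (nsmul_eq_mul _ _).symm
      _ ≤ ∑ y ∈ B with N / 4 ≤ b y, b y :=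
          card_nsmul_le_sum _ _ _ fun y hy ↦ (mem_filter.1 hy).2
      _ ≤ ∑ y ∈ B, b y := sum_le_sum_of_subset_of_nonneg (filter_subset _ _) fun y _ _ ↦ hb y
      _ = ∑ i, ∑ y ∈ B, (if 2 ≤ |y i| then |(y i : ℝ)| ^ q else 0) := sum_comm
      _ ≤ ∑ _i : Fin d, C * (16 * (N / d) ^ 2 * #B) :=
          sum_le_sum fun i _ ↦ sum_large_coord_rpow_le hq hd (by linarith) hNd i
      _ = 64 * C * (N / d) * #B * (N / 4) := by
          rw [sum_const, nsmul_eq_mul, card_univ, Fintype.card_fin]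
          field_simp
          ring
  calc (#{y ∈ B | (#{i | |y i| = 1} : ℝ) < N / 2} : ℝ)
      ≤ #(powerBall q d (N - (1 : ℕ))) + #{y ∈ B | N / 4 ≤ b y} := by
        exact_mod_cast (card_le_card hsub).trans (card_union_le _ _)
    _ ≤ N / d * #B + 64 * C * (N / d) * #B :=
        add_le_add hinner (le_of_mul_le_mul_right hmass (by linarith))
    _ = (1 + 64 * C) * (N / d) * #B := by ring

end SmallRadius

/-! ### Power balls of large radius -/

section LargeRadius

variable {q : ℝ} {d : ℕ}

lemma hasSum_pow_natAbs {r : ℝ} (h0 : 0 ≤ r) (h1 : r < 1) :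
    HasSum (fun a : ℤ ↦ r ^ a.natAbs) ((1 - r)⁻¹ + r * (1 - r)⁻¹) := by
  have hgeom := hasSum_geometric_of_lt_one h0 h1
  refine HasSum.of_nat_of_neg_add_one (by simpa only [Int.natAbs_natCast] using hgeom) ?_
  have hneg (n : ℕ) : (-((n : ℤ) + 1)).natAbs = n + 1 := by omega
  simpa only [hneg, pow_succ'] using hgeom.mul_left r

lemma sum_exp_neg_abs_div_le (s : Finset ℤ) {κ : ℝ} (hκ : 2 ≤ κ) :
    ∑ a ∈ s, Real.exp (-(|(a : ℝ)| / κ)) ≤ 3 * κ := by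
  set r := Real.exp (-(1 / κ)) with hr
  have hκ0 : 0 < κ := by linarith
  have hr0 : 0 ≤ r := (Real.exp_pos _).le
  have hpow (a : ℤ) : Real.exp (-(|(a : ℝ)| / κ)) = r ^ a.natAbs := by
    rw [hr, ← Real.exp_nat_mul, Nat.cast_natAbs, Int.cast_abs]
    ring_nf
  have hr_le : r ≤ κ / (κ + 1) := by
    rw [hr, Real.exp_neg, inv_le_comm₀ (Real.exp_pos _) (by positivity), inv_div, add_div,
      div_self hκ0.ne', add_comm]
    exact Real.add_one_le_exp _
  have hr1 : r < 1 := hr_le.trans_lt ((div_lt_one (by positivity)).2 (by linarith))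
  have hinv : (1 - r)⁻¹ ≤ κ + 1 := by
    rw [inv_le_comm₀ (by linarith) (by positivity)]
    have : (κ + 1)⁻¹ = 1 - κ / (κ + 1) := by
      field_simp
      ring
    linarith
  calc ∑ a ∈ s, Real.exp (-(|(a : ℝ)| / κ))
      = ∑ a ∈ s, r ^ a.natAbs := sum_congr rfl fun a _ ↦ hpow a
    _ ≤ (1 - r)⁻¹ + r * (1 - r)⁻¹ :=
        sum_le_hasSum s (fun a _ ↦ by positivity) (hasSum_pow_natAbs hr0 hr1)
    _ = 2 * (1 - r)⁻¹ - 1 := by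
        have : 1 - r ≠ 0 := by linarith
        field_simp
        ring
    _ ≤ 3 * κ := by linarith

lemma card_le_of_abs_sub_le {s : Finset ℤ} {c r : ℝ} (hr : 0 ≤ r) (h : ∀ a ∈ s, |a - c| ≤ r) :
    (#s : ℝ) ≤ 2 * r + 1 := by
  have hsub : s ⊆ Icc ⌈c - r⌉ ⌊c + r⌋ := fun a ha ↦ by
    have := abs_le.1 (h a ha)
    rw [mem_Icc, Int.ceil_le, Int.le_floor]
    constructor <;> linarith
  calc (#s : ℝ) ≤ ((⌊c + r⌋ + 1 - ⌈c - r⌉).toNat : ℤ) := by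
        rw [← Int.card_Icc, Int.cast_natCast]
        exact Nat.cast_le.2 (card_le_card hsub)
    _ = max (⌊c + r⌋ + 1 - ⌈c - r⌉ : ℝ) 0 := by rw [Int.toNat_eq_max]; push_cast; rfl
    _ ≤ 2 * r + 1 :=
        max_le (by linarith [Int.floor_le (c + r), Int.le_ceil (c - r)]) (by linarith)

lemma abs_intCast_le_of_mem_Icc_floor {x : ℝ} (hx : 0 ≤ x) {a : ℤ}
    (ha : a ∈ Icc (-(⌊x⌋₊ : ℤ)) ⌊x⌋₊) : |(a : ℝ)| ≤ x :=
  le_trans (by exact_mod_cast abs_le.2 (mem_Icc.1 ha)) (Nat.floor_le hx)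

lemma le_card_Icc_floor (x : ℝ) : x ≤ #(Icc (-(⌊x⌋₊ : ℤ)) ⌊x⌋₊) := by
  have hcard : #(Icc (-(⌊x⌋₊ : ℤ)) ⌊x⌋₊) = 2 * ⌊x⌋₊ + 1 := by
    rw [Int.card_Icc]
    omega
  rw [hcard]
  push_cast
  linarith [Nat.lt_floor_add_one x, (⌊x⌋₊).cast_nonneg (α := ℝ)]

lemma pow_le_card_powerBall (hq : 0 < q) {κ : ℝ} (hκ : 0 ≤ κ) :
    κ ^ d ≤ (#(powerBall q d (d * κ ^ q)) : ℝ) := by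
  have hsub : Fintype.piFinset (fun _ : Fin d ↦ Icc (-(⌊κ⌋₊ : ℤ)) ⌊κ⌋₊)
      ⊆ powerBall q d (d * κ ^ q) := fun y hy ↦ by
    rw [Fintype.mem_piFinset] at hy
    rw [mem_powerBall hq]
    calc ∑ i, |(y i : ℝ)| ^ q ≤ ∑ _i : Fin d, κ ^ q := sum_le_sum fun i _ ↦
          Real.rpow_le_rpow (abs_nonneg _) (abs_intCast_le_of_mem_Icc_floor hκ (hy i)) hq.le
      _ = d * κ ^ q := by simp
  calc κ ^ d ≤ (#(Icc (-(⌊κ⌋₊ : ℤ)) ⌊κ⌋₊) : ℝ) ^ d := by gcongr; exact le_card_Icc_floor κ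
    _ = #(Fintype.piFinset (fun _ : Fin d ↦ Icc (-(⌊κ⌋₊ : ℤ)) ⌊κ⌋₊)) := by simp
    _ ≤ #(powerBall q d (d * κ ^ q)) := mod_cast card_le_card hsub

lemma card_le_sum_pow_of_one_le_prod {α : Type*} {D : Finset (Fin d → α)}
    {w : α → ℝ} (hw : ∀ a, 0 ≤ w a) (hD : ∀ y ∈ D, 1 ≤ ∏ i, w (y i)) :
    ∃ s : Finset α, (#D : ℝ) ≤ (∑ a ∈ s, w a) ^ d := by
  classical
  refine ⟨D.biUnion fun y ↦ univ.image y, ?_⟩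
  set s := D.biUnion fun y ↦ univ.image y
  have hsub : D ⊆ Fintype.piFinset fun _ ↦ s := fun y hy ↦ Fintype.mem_piFinset.2 fun i ↦
    mem_biUnion.2 ⟨y, hy, mem_image_of_mem y (mem_univ i)⟩
  calc (#D : ℝ) = #D • (1 : ℝ) := by simp
    _ ≤ ∑ y ∈ D, ∏ i, w (y i) := card_nsmul_le_sum _ _ _ hD
    _ ≤ ∑ y ∈ Fintype.piFinset fun _ ↦ s, ∏ i, w (y i) :=
        sum_le_sum_of_subset_of_nonneg hsub fun y _ _ ↦ prod_nonneg fun i _ ↦ hw (y i)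
    _ = (∑ a ∈ s, w a) ^ d := by rw [sum_prod_piFinset s fun _ a ↦ w a]; simp

/-- The weight of the Chernoff argument showing that few points of `powerBall q d (d * κ ^ q)`
have half of their coordinates of modulus at most `κ / 10000`. -/
noncomputable def smallCoordWeight (κ : ℝ) (a : ℤ) : ℝ :=
  Real.exp (2 - |(a : ℝ)| / κ) * (if |(a : ℝ)| ≤ κ / 10000 then 10000 else 1) / 100

lemma smallCoordWeight_nonneg (κ : ℝ) (a : ℤ) : 0 ≤ smallCoordWeight κ a := by
  rw [smallCoordWeight]
  split_ifs <;> positivity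

lemma sum_smallCoordWeight_le (s : Finset ℤ) {κ : ℝ} (hκ : 10000 ≤ κ) :
    ∑ a ∈ s, smallCoordWeight κ a ≤ κ / 2 := by
  have : 0 < κ := by linarith
  have hle : ∀ a ∈ s, smallCoordWeight κ a ≤ Real.exp 2 / 100 *
      (Real.exp (-(|(a : ℝ)| / κ)) + 10000 * (if |(a : ℝ)| ≤ κ / 10000 then 1 else 0)) := by
    intro a _
    have := Real.exp_pos (-(|(a : ℝ)| / κ))
    have hexp_le : Real.exp (-(|(a : ℝ)| / κ)) ≤ 1 := by
      rw [Real.exp_le_one_iff, neg_nonpos]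
      positivity
    rw [smallCoordWeight, sub_eq_add_neg, Real.exp_add, mul_assoc, mul_div_right_comm]
    gcongr
    split_ifs <;> linarith
  have hexp_two : Real.exp 2 ≤ 7.4 := by
    rw [show (2 : ℝ) = 1 + 1 by norm_num, Real.exp_add]
    nlinarith [Real.exp_one_lt_d9, Real.exp_pos 1]
  calc ∑ a ∈ s, smallCoordWeight κ a
      ≤ Real.exp 2 / 100 *
          (∑ a ∈ s, Real.exp (-(|(a : ℝ)| / κ))
            + 10000 * #{a ∈ s | |((a : ℤ) : ℝ)| ≤ κ / 10000}) := by
        refine (sum_le_sum hle).trans_eq ?_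
        rw [← mul_sum, sum_add_distrib, ← mul_sum, sum_boole]
    _ ≤ 7.4 / 100 * (3 * κ + 10000 * (2 * (κ / 10000) + 1)) := by
        gcongr
        · exact sum_exp_neg_abs_div_le s (by linarith)
        · exact card_le_of_abs_sub_le (c := 0) (by positivity) fun a ha ↦ by
            simpa using (mem_filter.1 ha).2
    _ ≤ κ / 2 := by linarith

lemma sum_abs_div_le_two_mul (hq : 1 ≤ q) {κ : ℝ} (hκ : 0 < κ) {y : Fin d → ℤ}
    (hy : y ∈ powerBall q d (d * κ ^ q)) : ∑ i, |(y i : ℝ)| / κ ≤ 2 * d := by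
  have hcoord (x : ℝ) (hx : 0 ≤ x) : x ≤ 1 + x ^ q := by
    rcases le_total x 1 with h | h
    · linarith [Real.rpow_nonneg hx q]
    · linarith [Real.self_le_rpow_of_one_le h hq]
  calc ∑ i, |(y i : ℝ)| / κ ≤ ∑ i, (1 + |(y i : ℝ)| ^ q / κ ^ q) := sum_le_sum fun i _ ↦ by
        rw [← Real.div_rpow (abs_nonneg _) hκ.le]
        exact hcoord _ (by positivity)
    _ = d + (∑ i, |(y i : ℝ)| ^ q) / κ ^ q := by rw [sum_add_distrib, sum_div]; simp
    _ ≤ d + d := by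
        gcongr
        exact (div_le_iff₀ (by positivity)).2 ((mem_powerBall (by linarith)).1 hy)
    _ = 2 * d := by ring

lemma one_le_prod_smallCoordWeight (hq : 1 ≤ q) {κ : ℝ} (hκ : 0 < κ) {y : Fin d → ℤ}
    (hy : y ∈ powerBall q d (d * κ ^ q)) (hsmall : d ≤ 2 * #{i | |(y i : ℝ)| ≤ κ / 10000}) :
    1 ≤ ∏ i, smallCoordWeight κ (y i) := by
  have hprod : ∏ i, smallCoordWeight κ (y i) = Real.exp (∑ i, (2 - |(y i : ℝ)| / κ))
      * 10000 ^ #{i | |(y i : ℝ)| ≤ κ / 10000} / 100 ^ d := by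
    simp only [smallCoordWeight, prod_div_distrib, prod_mul_distrib, Real.exp_sum, prod_ite,
      prod_const, one_pow, mul_one, card_univ, Fintype.card_fin]
  have hexponent : 0 ≤ ∑ i, (2 - |(y i : ℝ)| / κ) := by
    rw [sum_sub_distrib, sum_const, card_univ, Fintype.card_fin, nsmul_eq_mul]
    linarith [sum_abs_div_le_two_mul hq hκ hy]
  rw [hprod, one_le_div (by positivity)]
  calc (100 : ℝ) ^ d ≤ 100 ^ (2 * #{i | |(y i : ℝ)| ≤ κ / 10000}) :=
        pow_le_pow_right₀ (by norm_num) hsmall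
    _ = 1 * 10000 ^ #{i | |(y i : ℝ)| ≤ κ / 10000} := by rw [pow_mul]; norm_num
    _ ≤ _ := by gcongr; exact Real.one_le_exp hexponent

lemma card_many_small_coords_le (hq : 1 ≤ q) {κ : ℝ} (hκ : 10000 ≤ κ) :
    (#{y ∈ powerBall q d (d * κ ^ q) | d ≤ 2 * #{i | |(y i : ℝ)| ≤ κ / 10000}} : ℝ)
      ≤ (1 / 2) ^ d * #(powerBall q d (d * κ ^ q)) := by
  have hκ0 : 0 < κ := by linarith
  set D := {y ∈ powerBall q d (d * κ ^ q) | d ≤ 2 * #{i | |(y i : ℝ)| ≤ κ / 10000}}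
  obtain ⟨s, hs⟩ := card_le_sum_pow_of_one_le_prod (D := D) (smallCoordWeight_nonneg κ)
    fun y hy ↦ one_le_prod_smallCoordWeight hq hκ0 (mem_filter.1 hy).1 (mem_filter.1 hy).2
  calc (#D : ℝ) ≤ (∑ a ∈ s, smallCoordWeight κ a) ^ d := hs
    _ ≤ (κ / 2) ^ d := by
        gcongr
        exacts [sum_nonneg fun a _ ↦ smallCoordWeight_nonneg κ a, sum_smallCoordWeight_le s hκ]
    _ = (1 / 2) ^ d * κ ^ d := by rw [← mul_pow]; ring
    _ ≤ (1 / 2) ^ d * #(powerBall q d (d * κ ^ q)) := by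
        gcongr
        exact pow_le_card_powerBall (by linarith) hκ0.le

lemma exists_coord_large (hq : 1 ≤ q) (hd : 0 < d) {κ : ℝ} (hκ : 10000 ≤ κ) :
    ∃ i : Fin d, (#(powerBall q d (d * κ ^ q)) : ℝ)
      ≤ 4 * #{y ∈ powerBall q d (d * κ ^ q) | ¬ |(y i : ℝ)| ≤ κ / 10000} := by
  set B := powerBall q d (d * κ ^ q)
  set p : ℤ → Prop := fun a ↦ |(a : ℝ)| ≤ κ / 10000
  set G : Finset (Fin d → ℤ) := {y ∈ B | ¬ d ≤ 2 * #{i | p (y i)}}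
  have hG : (#B : ℝ) ≤ 2 * #G := by
    have hsplit : (#{y ∈ B | d ≤ 2 * #{i | p (y i)}} : ℝ) + #G = #B := mod_cast
      card_filter_add_card_filter_not (s := B) fun y ↦ d ≤ 2 * #{i | p (y i)}
    have hpow : ((1 : ℝ) / 2) ^ d * #B ≤ 1 / 2 * #B := by
      gcongr
      exact pow_le_of_le_one (by norm_num) (by norm_num) hd.ne'
    linarith [card_many_small_coords_le hq hκ (d := d)]
  have hcount : ∀ y ∈ G, (d : ℝ) ≤ 2 * #{i | ¬ p (y i)} := fun y hy ↦ by
    have hsplit := card_filter_add_card_filter_not (s := univ) fun i ↦ p (y i)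
    rw [card_univ, Fintype.card_fin] at hsplit
    have : d ≤ 2 * #{i | ¬ p (y i)} := by
      have := (mem_filter.1 hy).2
      omega
    exact_mod_cast this
  obtain ⟨i, -, hi⟩ := exists_le_of_sum_le (s := univ) (f := fun _ : Fin d ↦ (#G : ℝ))
    (g := fun i ↦ (2 * #{y ∈ B | ¬ p (y i)} : ℝ)) ⟨⟨0, hd⟩, mem_univ _⟩ <| by
      calc ∑ _i : Fin d, (#G : ℝ) = #G • (d : ℝ) := by simp [mul_comm]
        _ ≤ ∑ y ∈ G, 2 * (#{i | ¬ p (y i)} : ℝ) := card_nsmul_le_sum _ _ _ hcount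
        _ ≤ ∑ y ∈ B, 2 * (#{i | ¬ p (y i)} : ℝ) :=
            sum_le_sum_of_subset_of_nonneg (filter_subset _ _) fun _ _ _ ↦ by positivity
        _ = ∑ i, 2 * (#{y ∈ B | ¬ p (y i)} : ℝ) := by
            rw [← mul_sum, ← mul_sum]
            exact_mod_cast congrArg (2 * ·) (sum_card_filter_coord B fun a ↦ ¬ p a)
  exact ⟨i, by linarith⟩

lemma two_mul_abs_tdiv_two_le (a : ℤ) : 2 * |a.tdiv 2| ≤ |a| := by
  rw [Int.abs_eq_natAbs, Int.abs_eq_natAbs, Int.natAbs_tdiv]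
  exact_mod_cast Nat.mul_div_le a.natAbs 2

lemma abs_tdiv_two_rpow_le (hq : 1 ≤ q) (a : ℤ) :
    |((a.tdiv 2 : ℤ) : ℝ)| ^ q ≤ |(a : ℝ)| ^ q - |(a : ℝ)| ^ q / 2 := by
  have hhalf : |((a.tdiv 2 : ℤ) : ℝ)| ≤ |(a : ℝ)| / 2 := by
    have : 2 * |((a.tdiv 2 : ℤ) : ℝ)| ≤ |(a : ℝ)| := by exact_mod_cast two_mul_abs_tdiv_two_le a
    linarith
  calc |((a.tdiv 2 : ℤ) : ℝ)| ^ q ≤ (|(a : ℝ)| / 2) ^ q :=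
        Real.rpow_le_rpow (abs_nonneg _) hhalf (by linarith)
    _ = |(a : ℝ)| ^ q / 2 ^ q := Real.div_rpow (abs_nonneg _) zero_le_two q
    _ ≤ |(a : ℝ)| ^ q / 2 := by
        have := abs_rpow_nonneg q a
        gcongr
        exact Real.self_le_rpow_of_one_le one_le_two hq
    _ = |(a : ℝ)| ^ q - |(a : ℝ)| ^ q / 2 := by ring

lemma card_large_coord_le (hq : 1 ≤ q) (N : ℝ) {b : ℝ} (hb : 0 ≤ b) (i : Fin d) :
    #{y ∈ powerBall q d N | ¬ |(y i : ℝ)| ≤ b} ≤ 3 * #(powerBall q d (N - b ^ q / 2)) := by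
  have hq0 : 0 < q := by linarith
  set T := {y ∈ powerBall q d N | ¬ |(y i : ℝ)| ≤ b}
  -- Halving the `i`-th coordinate is injective once the remainder is remembered.
  let halve (y : Fin d → ℤ) : (Fin d → ℤ) × ℤ :=
    (Function.update y i ((y i).tdiv 2), (y i).tmod 2)
  have hmaps : ∀ y ∈ T, halve y ∈ powerBall q d (N - b ^ q / 2) ×ˢ Icc (-1) 1 := fun y hy ↦ by
    rw [mem_filter, mem_powerBall hq0, not_le] at hy
    rw [mem_product, mem_powerBall hq0, sum_abs_rpow_update, mem_Icc]
    refine ⟨?_, by have := Int.tmod_two_eq (y i); grind⟩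
    linarith [hy.1, Real.rpow_le_rpow hb hy.2.le hq0.le, abs_tdiv_two_rpow_le hq (y i)]
  have hinj : Function.Injective halve := fun y y' h ↦ by
    simp only [halve, Prod.mk.injEq] at h
    funext j
    rcases eq_or_ne j i with rfl | hj
    · have hdiv := congrFun h.1 j
      rw [Function.update_self, Function.update_self] at hdiv
      rw [← Int.mul_tdiv_add_tmod (y j) 2, ← Int.mul_tdiv_add_tmod (y' j) 2, hdiv, h.2]
    · simpa only [Function.update_of_ne hj] using congrFun h.1 j
  calc #T ≤ #(powerBall q d (N - b ^ q / 2) ×ˢ Icc (-1 : ℤ) 1) :=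
        card_le_card_of_injOn halve hmaps hinj.injOn
    _ = 3 * #(powerBall q d (N - b ^ q / 2)) := by rw [card_product, mul_comm]; rfl

lemma card_powerBall_le_twelve_mul (hq : 1 ≤ q) {κ N : ℝ} (hκ : 10000 ≤ κ)
    (hN : (d + 1) * κ ^ q ≤ N) {c : ℝ} (hc : 0 ≤ c) (hcκ : c ≤ κ / 20000) :
    (#(powerBall q d N) : ℝ) ≤ 12 * #(powerBall q d (N - c ^ q)) := by
  have hq0 : 0 < q := by linarith
  have hκ0 : 0 < κ := by linarith
  rcases d.eq_zero_or_pos with rfl | hd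
  · have hcN : 0 ≤ N - c ^ q := by
      have := Real.rpow_le_rpow hc (by linarith : c ≤ κ) hq0.le
      push_cast at hN
      linarith
    have hone : (#(powerBall q 0 N) : ℝ) ≤ 1 := mod_cast card_le_one_of_subsingleton _
    have hpos : (1 : ℝ) ≤ #(powerBall q 0 (N - c ^ q)) :=
      mod_cast (powerBall_nonempty hq0 hcN).card_pos
    linarith
  have hd' : (0 : ℝ) < d := by exact_mod_cast hd
  have hκq : 0 < κ ^ q := Real.rpow_pos_of_pos hκ0 q
  have hdN : d * κ ^ q ≤ N := by linarith
  obtain ⟨κ', hκ', hN'⟩ : ∃ κ', κ ≤ κ' ∧ N = d * κ' ^ q := by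
    have hNd : κ ^ q ≤ N / d := by rwa [le_div_iff₀ hd', mul_comm]
    refine ⟨(N / d) ^ q⁻¹, (Real.le_rpow_inv_iff_of_pos hκ0.le (hκq.le.trans hNd) hq0).2 hNd, ?_⟩
    rw [Real.rpow_inv_rpow (hκq.le.trans hNd) hq0.ne']
    field_simp
  obtain ⟨i, hi⟩ := exists_coord_large hq hd (hκ.trans hκ')
  rw [← hN'] at hi
  have hcκ' : c ^ q ≤ (κ' / 10000) ^ q / 2 := by
    calc c ^ q ≤ (κ' / 10000 / 2) ^ q := Real.rpow_le_rpow hc (by linarith) hq0.le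
      _ = (κ' / 10000) ^ q / 2 ^ q := Real.div_rpow (by linarith) zero_le_two q
      _ ≤ (κ' / 10000) ^ q / 2 := by
          have : 0 ≤ κ' / 10000 := by linarith
          gcongr
          exact Real.self_le_rpow_of_one_le one_le_two hq
  have hhalve := card_large_coord_le hq N (by linarith : 0 ≤ κ' / 10000) i
  have hmono := card_le_card
    (powerBall_mono (d := d) hq0 (by linarith : N - (κ' / 10000) ^ q / 2 ≤ N - c ^ q))
  have : (#{y ∈ powerBall q d N | ¬ |(y i : ℝ)| ≤ κ' / 10000} : ℝ)
      ≤ 3 * #(powerBall q d (N - c ^ q)) := mod_cast hhalve.trans (by gcongr)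
  linarith

lemma card_powerBall_slice_zero (hq : 0 < q) (N : ℝ) (i : Fin (d + 1)) :
    #{y ∈ powerBall q (d + 1) N | y i = 0} = #(powerBall q d N) := by
  have hsum (z : Fin d → ℤ) :
      ∑ j, |((i.insertNth 0 z : Fin (d + 1) → ℤ) j : ℝ)| ^ q = ∑ j, |(z j : ℝ)| ^ q := by
    rw [Fin.sum_univ_succAbove _ i]
    simp [Real.zero_rpow hq.ne']
  refine card_bij' (fun y _ ↦ i.removeNth y) (fun z _ ↦ i.insertNth 0 z) ?_ ?_ ?_ ?_
  · intro y hy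
    obtain ⟨hyN, hyi⟩ := mem_filter.1 hy
    rwa [mem_powerBall hq, ← hsum, ← hyi, Fin.insertNth_self_removeNth, ← mem_powerBall hq]
  · intro z hz
    rw [mem_filter, mem_powerBall hq, hsum, ← mem_powerBall hq, Fin.insertNth_apply_same]
    exact ⟨hz, rfl⟩
  · intro y hy
    rw [← (mem_filter.1 hy).2, Fin.insertNth_self_removeNth]
  · intro z _
    rw [Fin.removeNth_insertNth]

lemma card_powerBall_slice_le (hq : 1 ≤ q) {κ : ℝ} (hκ : 10000 ≤ κ) (i : Fin d) (a : ℤ) :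
    (#{y ∈ powerBall q d (d * κ ^ q) | y i = a} : ℝ)
      ≤ 240000 / κ * #(powerBall q d (d * κ ^ q)) := by
  have hq0 : 0 < q := by linarith
  have hκ0 : 0 < κ := by linarith
  obtain ⟨m, rfl⟩ : ∃ m, d = m + 1 := ⟨d - 1, by have := i.pos; omega⟩
  set N := ((m + 1 : ℕ) : ℝ) * κ ^ q with hN
  have hslice (c : ℤ) :
      #{y ∈ powerBall q (m + 1) N | y i = c} = #(powerBall q m (N - |(c : ℝ)| ^ q)) := by
    rw [card_powerBall_slice hq0, card_powerBall_slice_zero hq0]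
  set b := κ / 20000
  have hb : 0 ≤ b := by positivity
  have hcentral : ∀ c ∈ Icc (-(⌊b⌋₊ : ℤ)) ⌊b⌋₊,
      (#(powerBall q m N) : ℝ) / 12 ≤ #{y ∈ powerBall q (m + 1) N | y i = c} := fun c hc ↦ by
    rw [hslice, div_le_iff₀' (by norm_num)]
    exact card_powerBall_le_twelve_mul hq hκ (by rw [hN]; push_cast; rfl) (abs_nonneg _)
      (abs_intCast_le_of_mem_Icc_floor hb hc)
  have htotal : b * (#(powerBall q m N) / 12) ≤ #(powerBall q (m + 1) N) :=
    calc b * ((#(powerBall q m N) : ℝ) / 12)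
        ≤ #(Icc (-(⌊b⌋₊ : ℤ)) ⌊b⌋₊) • ((#(powerBall q m N) : ℝ) / 12) := by
          rw [nsmul_eq_mul]
          gcongr
          exact le_card_Icc_floor b
      _ ≤ ∑ c ∈ Icc (-(⌊b⌋₊ : ℤ)) ⌊b⌋₊, (#{y ∈ powerBall q (m + 1) N | y i = c} : ℝ) :=
          card_nsmul_le_sum _ _ _ hcentral
      _ ≤ #(powerBall q (m + 1) N) := by
          rw [← Nat.cast_sum, sum_card_fiberwise_eq_card_filter]
          exact_mod_cast card_filter_le _ _
  have hmax : (#{y ∈ powerBall q (m + 1) N | y i = a} : ℝ) ≤ #(powerBall q m N) := by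
    rw [hslice]
    exact Nat.cast_le.2 (card_le_card (powerBall_mono hq0 (by linarith [abs_rpow_nonneg q a])))
  rw [div_mul_eq_mul_div, le_div_iff₀ hκ0]
  calc (#{y ∈ powerBall q (m + 1) N | y i = a} : ℝ) * κ ≤ #(powerBall q m N) * κ := by gcongr
    _ = 240000 * (b * (#(powerBall q m N) / 12)) := by ring
    _ ≤ 240000 * #(powerBall q (m + 1) N) := by gcongr

end LargeRadius

/-! ### Averages over permutations -/

section Concentration

lemma exp_neg_le_two_div_add {S M : ℝ} (hS : 0 ≤ S) (hM : 0 < M) :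
    Real.exp (-S) ≤ 2 / M + 4 / M ^ 2 * (S - M) ^ 2 := by
  have hsq : 0 ≤ 4 / M ^ 2 * (S - M) ^ 2 := by positivity
  have hdiv : 0 ≤ 2 / M := by positivity
  rcases le_or_gt (M / 2) S with h | h
  · have : Real.exp (-S) ≤ 2 / M := by
      rw [Real.exp_neg, ← inv_div]
      exact inv_anti₀ (by positivity) (by linarith [Real.add_one_le_exp S])
    linarith
  · have : 1 ≤ 4 / M ^ 2 * (S - M) ^ 2 := by
      rw [div_mul_eq_mul_div, le_div_iff₀ (by positivity)]
      nlinarith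
    linarith [Real.exp_le_one_iff.2 (by linarith : -S ≤ 0)]

variable {Ω ι : Type*} [Fintype Ω] [Fintype ι] {X : ι → Ω → ℝ} {c : ℝ}

lemma expect_sq_sum_le (h0 : ∀ r w, 0 ≤ X r w) (h1 : ∀ r w, X r w ≤ 1) (hc : 0 ≤ c)
    (hpair : ∀ r s, r ≠ s → 𝔼 w, X r w * X s w ≤ (1 + c) * ((𝔼 w, X r w) * 𝔼 w, X s w)) :
    𝔼 w, (∑ r, X r w) ^ 2 ≤ (∑ r, 𝔼 w, X r w) + (1 + c) * (∑ r, 𝔼 w, X r w) ^ 2 := by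
  classical
  have hterm (r s : ι) : 𝔼 w, X r w * X s w
      ≤ (if r = s then 𝔼 w, X r w else 0) + (1 + c) * ((𝔼 w, X r w) * 𝔼 w, X s w) := by
    split_ifs with h
    · subst h
      have : 𝔼 w, X r w * X r w ≤ 𝔼 w, X r w :=
        expect_le_expect fun w _ ↦ mul_le_of_le_one_left (h0 r w) (h1 r w)
      have : 0 ≤ (1 + c) * ((𝔼 w, X r w) * 𝔼 w, X r w) :=
        mul_nonneg (by linarith) (mul_self_nonneg _)
      linarith
    · linarith [hpair r s h]
  calc 𝔼 w, (∑ r, X r w) ^ 2 = ∑ r, ∑ s, 𝔼 w, X r w * X s w := by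
        simp only [sq, sum_mul_sum, expect_sum_comm]
    _ ≤ ∑ r, ∑ s, ((if r = s then 𝔼 w, X r w else 0)
          + (1 + c) * ((𝔼 w, X r w) * 𝔼 w, X s w)) :=
        sum_le_sum fun r _ ↦ sum_le_sum fun s _ ↦ hterm r s
    _ = (∑ r, 𝔼 w, X r w) + (1 + c) * (∑ r, 𝔼 w, X r w) ^ 2 := by
        simp only [sum_add_distrib, sum_ite_eq, mem_univ, if_true, ← mul_sum, sq, sum_mul_sum]

-- Chebyshev's inequality: the variance of the sum is `O(M)` when the pairs are almost uncorrelated.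
lemma expect_exp_neg_sum_le (h0 : ∀ r w, 0 ≤ X r w) (h1 : ∀ r w, X r w ≤ 1) (hc : 0 ≤ c)
    (hpair : ∀ r s, r ≠ s → 𝔼 w, X r w * X s w ≤ (1 + c) * ((𝔼 w, X r w) * 𝔼 w, X s w))
    {C : ℝ} (hcC : c * ∑ r, 𝔼 w, X r w ≤ C) (hM : 0 < ∑ r, 𝔼 w, X r w) :
    𝔼 w, Real.exp (-∑ r, X r w) ≤ (6 + 4 * C) / ∑ r, 𝔼 w, X r w := by
  have : Nonempty Ω := by
    by_contra hΩ
    rw [not_nonempty_iff] at hΩ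
    simp at hM
  set M := ∑ r, 𝔼 w, X r w
  have hmean : 𝔼 w, ∑ r, X r w = M := expect_sum_comm _ _ _
  have hvar : 𝔼 w, (∑ r, X r w - M) ^ 2 ≤ (1 + C) * M :=
    calc 𝔼 w, (∑ r, X r w - M) ^ 2
        = 𝔼 w, (∑ r, X r w) ^ 2 - 2 * M * 𝔼 w, ∑ r, X r w + M ^ 2 := by
          rw [mul_expect, ← expect_sub_distrib, ← Fintype.expect_const (ι := Ω) (M ^ 2),
            ← expect_add_distrib]
          exact expect_congr rfl fun w _ ↦ by ring
      _ ≤ M + (1 + c) * M ^ 2 - 2 * M * M + M ^ 2 := by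
          rw [hmean]
          linarith [expect_sq_sum_le h0 h1 hc hpair]
      _ = (1 + c * M) * M := by ring
      _ ≤ (1 + C) * M := by gcongr
  calc 𝔼 w, Real.exp (-∑ r, X r w)
      ≤ 𝔼 w, (2 / M + 4 / M ^ 2 * (∑ r, X r w - M) ^ 2) := expect_le_expect fun w _ ↦
        exp_neg_le_two_div_add (sum_nonneg fun r _ ↦ h0 r w) hM
    _ = 2 / M + 4 / M ^ 2 * 𝔼 w, (∑ r, X r w - M) ^ 2 := by
        rw [expect_add_distrib, Fintype.expect_const, mul_expect]
    _ ≤ 2 / M + 4 / M ^ 2 * ((1 + C) * M) := by gcongr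
    _ = (6 + 4 * C) / M := by field_simp; ring

end Concentration

section Permutations

lemma expect_smul_eq {G X : Type*} [Group G] [Fintype G] [MulAction G X] [Fintype X]
    [MulAction.IsPretransitive G X] (f : X → ℝ) (x : X) : 𝔼 g : G, f (g • x) = 𝔼 y, f y := by
  have : Nonempty X := ⟨x⟩
  have horbit (y : X) : 𝔼 g : G, f (g • y) = 𝔼 g : G, f (g • x) := by
    obtain ⟨h, rfl⟩ := MulAction.exists_smul_eq G x y
    exact Fintype.expect_equiv (Equiv.mulRight h) _ _ fun g ↦ by simp [mul_smul]
  calc 𝔼 g : G, f (g • x) = 𝔼 y, 𝔼 g : G, f (g • y) := by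
        simp only [horbit, Fintype.expect_const]
    _ = 𝔼 g : G, 𝔼 y, f (g • y) := expect_comm _ _ _
    _ = 𝔼 _g : G, 𝔼 y, f y := expect_congr rfl fun g _ ↦
        Fintype.expect_equiv (MulAction.toPerm g) _ _ fun _ ↦ rfl
    _ = 𝔼 y, f y := Fintype.expect_const _

variable {α : Type*} [Fintype α]

lemma sum_embedding_le {β : Type*} [Fintype β] [DecidableEq β] {F : (β → α) → ℝ}
    (hF : ∀ v, 0 ≤ F v) : ∑ e : β ↪ α, F e ≤ ∑ v, F v := by
  classical
  calc ∑ e : β ↪ α, F e = ∑ v ∈ univ.image fun e : β ↪ α ↦ (e : β → α), F v :=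
        (sum_image DFunLike.coe_injective.injOn).symm
    _ ≤ ∑ v, F v := sum_le_sum_of_subset_of_nonneg (subset_univ _) fun v _ _ ↦ hF v

lemma sum_embedding_eq {β : Type*} [Fintype β] [DecidableEq β] {F : (β → α) → ℝ}
    (hF : ∀ v, ¬ Function.Injective v → F v = 0) : ∑ e : β ↪ α, F e = ∑ v, F v :=
  sum_of_injOn (fun e ↦ (e : β → α)) DFunLike.coe_injective.injOn (by simp)
    (fun v _ hv ↦ hF v fun hinj ↦ hv ⟨⟨v, hinj⟩, by simp, rfl⟩) fun _ _ ↦ rfl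

lemma sum_fin_succ_arrow {n : ℕ} (F : (Fin (n + 1) → α) → ℝ) :
    ∑ v, F v = ∑ a, ∑ w : Fin n → α, F (Fin.cons a w) := by
  rw [← Equiv.sum_comp (Fin.consEquiv fun _ ↦ α) F, Fintype.sum_prod_type]
  rfl

variable [DecidableEq α]

lemma expect_perm_apply (f : α → ℝ) (a : α) : 𝔼 π : Equiv.Perm α, f (π a) = 𝔼 b, f b :=
  expect_smul_eq f a

lemma expect_perm_embedding {k : ℕ} (e : Fin k ↪ α) (F : (Fin k → α) → ℝ) :
    𝔼 π : Equiv.Perm α, F (π ∘ e)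
      = (∑ e' : Fin k ↪ α, F e') / (Fintype.card α).descFactorial k := by
  have := Equiv.Perm.isMultiplyPretransitive α k
  have h := expect_smul_eq (G := Equiv.Perm α) (fun e' : Fin k ↪ α ↦ F e') e
  rwa [Fintype.expect_eq_sum_div_card (fun e' : Fin k ↪ α ↦ F e'), Fintype.card_embedding_eq,
    Fintype.card_fin] at h

lemma cast_descFactorial_two (n : ℕ) : (n.descFactorial 2 : ℝ) = n * (n - 1) := by
  rcases n with _ | n <;> simp [Nat.descFactorial_succ, mul_comm]

lemma expect_perm_apply_mul_apply_le {f g : α → ℝ} (hf : ∀ a, 0 ≤ f a) (hg : ∀ a, 0 ≤ g a)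
    {a b : α} (hab : a ≠ b) :
    𝔼 π : Equiv.Perm α, f (π a) * g (π b)
      ≤ (1 + 2 / Fintype.card α) * ((𝔼 c, f c) * 𝔼 c, g c) := by
  have hinj : Function.Injective ![a, b] := by
    simpa [Function.Injective, Fin.forall_fin_two, eq_comm] using hab
  have hcard : (2 : ℝ) ≤ Fintype.card α := by
    have := Fintype.card_le_of_injective _ hinj
    rw [Fintype.card_fin] at this
    exact_mod_cast this
  have hsum : ∑ e : Fin 2 ↪ α, f (e 0) * g (e 1) ≤ (∑ c, f c) * ∑ c, g c := by
    refine (sum_embedding_le (F := fun v ↦ f (v 0) * g (v 1))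
      fun v ↦ mul_nonneg (hf _) (hg _)).trans_eq ?_
    simp only [sum_fin_succ_arrow, Fin.cons_zero, Fin.cons_one, Fintype.sum_unique, sum_mul_sum]
  have hpos : 0 ≤ (∑ c, f c) * ∑ c, g c :=
    mul_nonneg (sum_nonneg fun c _ ↦ hf c) (sum_nonneg fun c _ ↦ hg c)
  rw [show 𝔼 π : Equiv.Perm α, f (π a) * g (π b) = _ from
    expect_perm_embedding ⟨![a, b], hinj⟩ fun v ↦ f (v 0) * g (v 1), cast_descFactorial_two,
    Fintype.expect_eq_sum_div_card, Fintype.expect_eq_sum_div_card]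
  set n : ℝ := (Fintype.card α : ℝ)
  calc (∑ e : Fin 2 ↪ α, f (e 0) * g (e 1)) / (n * (n - 1))
      ≤ ((∑ c, f c) * ∑ c, g c) / (n * (n - 1)) := by
        gcongr
        nlinarith
    _ ≤ ((∑ c, f c) * ∑ c, g c) * ((n + 2) / n ^ 3) := by
        rw [div_eq_mul_one_div]
        refine mul_le_mul_of_nonneg_left ?_ hpos
        rw [div_le_div_iff₀ (by nlinarith) (by positivity)]
        nlinarith [mul_nonneg (by linarith : 0 ≤ n) (by linarith : 0 ≤ n - 2)]
    _ = (1 + 2 / n) * ((∑ c, f c) / n * ((∑ c, g c) / n)) := by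
        field_simp

lemma expect_perm_exp_neg_sum_le {g : α → α → ℝ} (h0 : ∀ a b, 0 ≤ g a b) (h1 : ∀ a b, g a b ≤ 1)
    (hM : 0 < ∑ a, 𝔼 b, g a b) :
    𝔼 π : Equiv.Perm α, Real.exp (-∑ a, g a (π a)) ≤ 14 / ∑ a, 𝔼 b, g a b := by
  have hmean (a : α) : 𝔼 π : Equiv.Perm α, g a (π a) = 𝔼 b, g a b := expect_perm_apply _ a
  have : Nonempty α := by
    by_contra hα
    rw [not_nonempty_iff] at hα
    simp at hM
  have hMcard : ∑ a, 𝔼 b, g a b ≤ Fintype.card α := by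
    refine (sum_le_card_nsmul _ _ 1 fun a _ ↦ ?_).trans_eq (by simp)
    exact expect_le univ_nonempty fun b _ ↦ h1 a b
  have h := expect_exp_neg_sum_le (X := fun a (π : Equiv.Perm α) ↦ g a (π a))
    (c := 2 / Fintype.card α) (C := 2) (fun a π ↦ h0 a _) (fun a π ↦ h1 a _) (by positivity)
    (fun a b hab ↦ by
      simpa only [hmean] using expect_perm_apply_mul_apply_le (h0 a) (h0 b) hab)
    (by
      simp only [hmean]
      rw [div_mul_eq_mul_div, div_le_iff₀ (by positivity)]
      gcongr)
    (by simpa only [hmean] using hM)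
  simp only [hmean] at h
  norm_num at h
  exact h

lemma cast_descFactorial_four {n : ℕ} (hn : 3 ≤ n) :
    (n.descFactorial 4 : ℝ) = n * (n - 1) * ((n - 2) * (n - 3)) := by
  obtain ⟨m, rfl⟩ := Nat.exists_eq_add_of_le' hn
  simp only [Nat.descFactorial_succ, add_tsub_cancel_right, Nat.reduceSubDiff,
    Nat.add_one_sub_one, tsub_zero, Nat.descFactorial_zero, mul_one]
  push_cast
  ring

lemma expect_perm_apply_apply {D : α → α → ℝ} (hD : ∀ a, D a a = 0) {a b : α} (hab : a ≠ b) :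
    𝔼 π : Equiv.Perm α, D (π a) (π b)
      = (∑ c, ∑ e, D c e) / (Fintype.card α * (Fintype.card α - 1)) := by
  have hinj : Function.Injective ![a, b] := by
    simpa [Function.Injective, Fin.forall_fin_two, eq_comm] using hab
  have hsum : ∑ e : Fin 2 ↪ α, D (e 0) (e 1) = ∑ c, ∑ e, D c e := by
    refine (sum_embedding_eq (F := fun v ↦ D (v 0) (v 1)) fun v hv ↦ ?_).trans ?_
    · have : v 0 = v 1 := by
        contrapose! hv
        simpa [Function.Injective, Fin.forall_fin_two, eq_comm] using hv
      rw [this, hD]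
    · simp only [sum_fin_succ_arrow, Fin.cons_zero, Fin.cons_one, Fintype.sum_unique]
  rw [← hsum, ← cast_descFactorial_two]
  exact expect_perm_embedding ⟨![a, b], hinj⟩ fun v ↦ D (v 0) (v 1)

lemma expect_perm_apply_apply_mul_le {D : α → α → ℝ} (h0 : ∀ a b, 0 ≤ D a b)
    (hcard : 8 ≤ Fintype.card α) {a b a' b' : α} (hinj : Function.Injective ![a, b, a', b']) :
    𝔼 π : Equiv.Perm α, D (π a) (π b) * D (π a') (π b')
      ≤ (1 + 8 / Fintype.card α)
        * ((∑ c, ∑ e, D c e) / (Fintype.card α * (Fintype.card α - 1))) ^ 2 := by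
  have hsum : ∑ e : Fin 4 ↪ α, D (e 0) (e 1) * D (e 2) (e 3) ≤ (∑ c, ∑ e, D c e) ^ 2 := by
    refine (sum_embedding_le (F := fun v ↦ D (v 0) (v 1) * D (v 2) (v 3))
      fun v ↦ mul_nonneg (h0 _ _) (h0 _ _)).trans_eq ?_
    simp only [sum_fin_succ_arrow, Fintype.sum_unique]
    change ∑ c, ∑ e, ∑ c', ∑ e', D c e * D c' e' = _
    simp only [← mul_sum, ← sum_mul, sq]
  rw [show 𝔼 π : Equiv.Perm α, D (π a) (π b) * D (π a') (π b') = _ from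
    expect_perm_embedding ⟨_, hinj⟩ fun v ↦ D (v 0) (v 1) * D (v 2) (v 3),
    cast_descFactorial_four (by omega)]
  have hn : (8 : ℝ) ≤ Fintype.card α := mod_cast hcard
  set n : ℝ := (Fintype.card α : ℝ)
  have hpos : 0 < n * (n - 1) := by nlinarith
  have hpos' : 0 < (n - 2) * (n - 3) := by nlinarith
  have hratio : 1 / (n * (n - 1) * ((n - 2) * (n - 3))) ≤ (1 + 8 / n) / (n * (n - 1)) ^ 2 := by
    rw [div_le_div_iff₀ (by positivity) (by positivity), one_add_div (by positivity),
      div_mul_eq_mul_div, le_div_iff₀ (by linarith)]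
    have : n * (n - 1) * n ≤ (n + 8) * ((n - 2) * (n - 3)) := by nlinarith
    nlinarith
  calc (∑ e : Fin 4 ↪ α, D (e 0) (e 1) * D (e 2) (e 3)) / (n * (n - 1) * ((n - 2) * (n - 3)))
      ≤ (∑ c, ∑ e, D c e) ^ 2 * (1 / (n * (n - 1) * ((n - 2) * (n - 3)))) := by
        rw [mul_one_div]
        gcongr
    _ ≤ (∑ c, ∑ e, D c e) ^ 2 * ((1 + 8 / n) / (n * (n - 1)) ^ 2) := by gcongr
    _ = (1 + 8 / n) * ((∑ c, ∑ e, D c e) / (n * (n - 1))) ^ 2 := by rw [div_pow]; ring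

lemma expect_perm_exp_neg_sum_pair_le {ι : Type*} [Fintype ι] {a b : ι → α}
    (hab : Function.Injective (Sum.elim a b)) {D : α → α → ℝ} (h0 : ∀ a b, 0 ≤ D a b)
    (h1 : ∀ a b, D a b ≤ 1) (hD : ∀ a, D a a = 0) (hcard : 8 ≤ Fintype.card α)
    (hM : 0 < Fintype.card ι * 𝔼 c, 𝔼 e, D c e) :
    𝔼 π : Equiv.Perm α, Real.exp (-∑ r, D (π (a r)) (π (b r)))
      ≤ 38 / (Fintype.card ι * 𝔼 c, 𝔼 e, D c e) := by
  obtain ⟨ha, hb, hne⟩ := Sum.elim_injective.1 hab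
  have hn : (8 : ℝ) ≤ Fintype.card α := mod_cast hcard
  have hmean (r : ι) := expect_perm_apply_apply hD (hne r r)
  have hmean_le : (∑ c, ∑ e, D c e) / (Fintype.card α * (Fintype.card α - 1)) ≤ 1 := by
    have : Nonempty ι := by
      by_contra hι
      rw [not_nonempty_iff] at hι
      simp at hM
    rw [← hmean (Classical.arbitrary ι)]
    exact expect_le univ_nonempty fun π _ ↦ h1 _ _
  have hcard_le : (Fintype.card ι : ℝ) ≤ Fintype.card α :=
    mod_cast Fintype.card_le_of_injective a ha
  have hT : 0 ≤ ∑ c, ∑ e, D c e := sum_nonneg fun c _ ↦ sum_nonneg fun e _ ↦ h0 c e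
  have hle : Fintype.card ι * 𝔼 c, 𝔼 e, D c e
      ≤ ∑ r, 𝔼 π : Equiv.Perm α, D (π (a r)) (π (b r)) := by
    simp only [hmean, sum_const, card_univ, nsmul_eq_mul, Fintype.expect_eq_sum_div_card,
      ← sum_div, div_div]
    gcongr <;> nlinarith
  have h := expect_exp_neg_sum_le (X := fun r (π : Equiv.Perm α) ↦ D (π (a r)) (π (b r)))
    (c := 8 / Fintype.card α) (C := 8) (fun r π ↦ h0 _ _) (fun r π ↦ h1 _ _) (by positivity)
    (fun r s hrs ↦ by
      simp only [hmean, ← sq]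
      refine expect_perm_apply_apply_mul_le h0 hcard ?_
      simp [Function.Injective, Fin.forall_fin_succ, ha.eq_iff, hb.eq_iff, hne,
        fun i j ↦ (hne i j).symm, hrs, hrs.symm])
    (by
      simp only [hmean, sum_const, card_univ, nsmul_eq_mul]
      rw [div_mul_eq_mul_div, div_le_iff₀ (by positivity)]
      gcongr
      exact mul_le_of_le_one_right (by positivity) hmean_le |>.trans hcard_le)
    (hM.trans_le hle)
  calc 𝔼 π : Equiv.Perm α, Real.exp (-∑ r, D (π (a r)) (π (b r)))
      ≤ 38 / ∑ r, 𝔼 π : Equiv.Perm α, D (π (a r)) (π (b r)) := h.trans_eq (by norm_num)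
    _ ≤ 38 / (Fintype.card ι * 𝔼 c, 𝔼 e, D c e) := by gcongr

end Permutations

/-! ### The multiplier of a ball -/

section Multiplier

variable {q N : ℝ} {d : ℕ}

lemma expect_powerBall_comp_perm {E : Type*} [AddCommMonoid E] [Module ℚ≥0 E] (hq : 0 < q)
    (σ : Equiv.Perm (Fin d)) (F : (Fin d → ℤ) → E) :
    𝔼 y ∈ powerBall q d N, F (y ∘ σ) = 𝔼 y ∈ powerBall q d N, F y := by
  refine expect_equiv (σ.symm.arrowCongr (Equiv.refl ℤ)) (fun y ↦ ?_) fun y _ ↦ rfl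
  rw [mem_powerBall hq, mem_powerBall hq, ← Equiv.sum_comp σ fun i ↦ |(y i : ℝ)| ^ q]
  rfl

lemma expect_powerBall_units_mul {E : Type*} [AddCommMonoid E] [Module ℚ≥0 E] (hq : 0 < q)
    (ε : Fin d → ℤˣ) (F : (Fin d → ℤ) → E) :
    𝔼 y ∈ powerBall q d N, F (fun j ↦ ε j * y j) = 𝔼 y ∈ powerBall q d N, F y := by
  refine expect_equiv (Equiv.piCongrRight fun j ↦ Units.mulLeft (ε j)) (fun y ↦ ?_) fun y _ ↦ rfl
  have (j : Fin d) : |((ε j * y j : ℤ) : ℝ)| = |(y j : ℝ)| := by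
    rcases Int.units_eq_one_or (ε j) with h | h <;> simp [h]
  simp only [mem_powerBall hq, Equiv.piCongrRight_apply, Pi.map_apply, Units.mulLeft_apply, this]

lemma expect_powerBall_prod_symmetrize (hq : 0 < q) (F : Fin d → ℤ → ℂ) :
    𝔼 y ∈ powerBall q d N, ∏ j, F j (y j)
      = 𝔼 y ∈ powerBall q d N, ∏ j, (F j (y j) + F j (-y j)) / 2 := by
  calc 𝔼 y ∈ powerBall q d N, ∏ j, F j (y j)
      = 𝔼 ε : Fin d → ℤˣ, 𝔼 y ∈ powerBall q d N, ∏ j, F j (ε j * y j) := by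
        rw [← Fintype.expect_const (ι := Fin d → ℤˣ) (𝔼 y ∈ powerBall q d N, ∏ j, F j (y j))]
        exact expect_congr rfl fun ε _ ↦
          (expect_powerBall_units_mul hq ε fun y ↦ ∏ j, F j (y j)).symm
    _ = 𝔼 y ∈ powerBall q d N, 𝔼 ε : Fin d → ℤˣ, ∏ j, F j (ε j * y j) := expect_comm _ _ _
    _ = 𝔼 y ∈ powerBall q d N, ∏ j, (F j (y j) + F j (-y j)) / 2 := by
        refine expect_congr rfl fun y _ ↦ ?_
        rw [Fintype.expect_eq_sum_div_card, ← Fintype.piFinset_univ,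
          ← prod_univ_sum (fun _ ↦ univ) fun j (e : ℤˣ) ↦ F j (e * y j), prod_div_distrib]
        simp [UnitsInt.univ]

/-- The Fourier multiplier of the average over `powerBall q d N`, at the frequency `φ`. -/
noncomputable def ballMultiplier (q : ℝ) (d : ℕ) (N : ℝ) (φ : Fin d → ℝ) : ℝ :=
  𝔼 y ∈ powerBall q d N, ∏ j, Real.cos (y j * φ j)

lemma expect_powerBall_prod_exp (hq : 0 < q) (φ : Fin d → ℝ) :
    𝔼 y ∈ powerBall q d N, ∏ j, Complex.exp (Complex.I * (y j * φ j))
      = ballMultiplier q d N φ := by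
  rw [expect_powerBall_prod_symmetrize hq fun j a ↦ Complex.exp (Complex.I * (a * φ j)),
    ballMultiplier, Complex.ofReal_expect]
  push_cast
  refine expect_congr rfl fun y _ ↦ prod_congr rfl fun j _ ↦ ?_
  rw [Complex.cos]
  ring_nf

lemma abs_prod_cos_le_one {ι : Type*} (s : Finset ι) (θ : ι → ℝ) :
    |∏ j ∈ s, Real.cos (θ j)| ≤ 1 := by
  rw [abs_prod]
  exact prod_le_one (fun j _ ↦ abs_nonneg _) fun j _ ↦ Real.abs_cos_le_one _

lemma abs_ballMultiplier_le_one (hq : 0 < q) (hN : 0 ≤ N) (φ : Fin d → ℝ) :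
    |ballMultiplier q d N φ| ≤ 1 :=
  (abs_expect_le _ _).trans
    (expect_le (powerBall_nonempty hq hN) fun _ _ ↦ abs_prod_cos_le_one _ _)

end Multiplier

section NearConstant

variable {q κ : ℝ} {d : ℕ}

lemma abs_prod_sub_one_le {ι : Type*} (s : Finset ι) {a : ι → ℝ} (h : ∀ i, |a i| ≤ 1) :
    |∏ i ∈ s, a i - 1| ≤ ∑ i ∈ s, |a i - 1| := by
  classical
  induction s using Finset.induction_on with
  | empty => simp
  | insert i s hi ih =>
    rw [prod_insert hi, sum_insert hi]
    calc |a i * ∏ j ∈ s, a j - 1| = |(a i - 1) + a i * (∏ j ∈ s, a j - 1)| := by ring_nf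
      _ ≤ |a i - 1| + |a i| * |∏ j ∈ s, a j - 1| := by
          rw [← abs_mul]
          exact abs_add_le _ _
      _ ≤ |a i - 1| + 1 * ∑ j ∈ s, |a j - 1| := by gcongr; exact h i
      _ = |a i - 1| + ∑ j ∈ s, |a j - 1| := by rw [one_mul]

lemma abs_sin_natCast_mul_le (n : ℕ) (x : ℝ) : |Real.sin (n * x)| ≤ n * |Real.sin x| := by
  induction n with
  | zero => simp
  | succ n ih =>
    push_cast
    rw [add_mul, one_mul, Real.sin_add]
    calc |Real.sin (n * x) * Real.cos x + Real.cos (n * x) * Real.sin x|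
        ≤ |Real.sin (n * x)| * |Real.cos x| + |Real.cos (n * x)| * |Real.sin x| := by
          rw [← abs_mul, ← abs_mul]
          exact abs_add_le _ _
      _ ≤ n * |Real.sin x| * 1 + 1 * |Real.sin x| := by
          gcongr <;> exact Real.abs_cos_le_one _
      _ = (n + 1) * |Real.sin x| := by ring

lemma abs_sin_intCast_mul_le (a : ℤ) (x : ℝ) : |Real.sin (a * x)| ≤ |(a : ℝ)| * |Real.sin x| := by
  obtain ⟨n, rfl | rfl⟩ := a.eq_nat_or_neg <;> simpa using abs_sin_natCast_mul_le n x

lemma abs_cos_intCast_mul_sub_one_le (a : ℤ) (x : ℝ) :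
    |Real.cos (a * x) - 1| ≤ 2 * ((a : ℝ) ^ 2 * Real.sin (x / 2) ^ 2) := by
  have hcos : Real.cos (a * x) - 1 = -(2 * Real.sin (a * (x / 2)) ^ 2) := by
    rw [Real.sin_sq_eq_half_sub]
    ring_nf
  rw [hcos, abs_neg, abs_of_nonneg (by positivity), ← mul_pow]
  gcongr 2 * ?_
  exact sq_le_sq.2 (by rw [abs_mul]; exact abs_sin_intCast_mul_le a (x / 2))

lemma expect_powerBall_abs_rpow_le {N : ℝ} (hq : 0 < q) (hN : 0 ≤ N) (i : Fin d) :
    𝔼 y ∈ powerBall q d N, |(y i : ℝ)| ^ q ≤ N / d := by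
  have hd : (0 : ℝ) < d := Nat.cast_pos.2 i.pos
  have hsymm (j : Fin d) :
      𝔼 y ∈ powerBall q d N, |(y j : ℝ)| ^ q = 𝔼 y ∈ powerBall q d N, |(y i : ℝ)| ^ q := by
    rw [← expect_powerBall_comp_perm hq (Equiv.swap i j)]
    simp
  rw [le_div_iff₀' hd]
  calc d * 𝔼 y ∈ powerBall q d N, |(y i : ℝ)| ^ q
      = 𝔼 y ∈ powerBall q d N, ∑ j, |(y j : ℝ)| ^ q := by
        rw [expect_sum_comm, sum_congr rfl fun j _ ↦ hsymm j]
        simp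
    _ ≤ N := expect_le (powerBall_nonempty hq hN) fun y hy ↦ (mem_powerBall hq).1 hy

lemma expect_powerBall_sq_le (hq : 2 ≤ q) (hκ : 0 < κ) (i : Fin d) :
    𝔼 y ∈ powerBall q d (d * κ ^ q), (y i : ℝ) ^ 2 ≤ 2 * min (κ ^ q) (κ ^ 2) := by
  have hq0 : 0 < q := by linarith
  have hκq : 0 < κ ^ q := by positivity
  have hne := powerBall_nonempty (d := d) hq0 (N := d * κ ^ q) (by positivity)
  have hmoment : 𝔼 y ∈ powerBall q d (d * κ ^ q), |(y i : ℝ)| ^ q ≤ κ ^ q := by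
    have hd : (d : ℝ) ≠ 0 := Nat.cast_ne_zero.2 i.pos.ne'
    simpa [hd] using expect_powerBall_abs_rpow_le (N := d * κ ^ q) hq0 (by positivity) i
  have hsq_le (a : ℤ) : (a : ℝ) ^ 2 ≤ |(a : ℝ)| ^ q := by
    rcases eq_or_ne a 0 with rfl | ha
    · simp [hq0.ne']
    · rw [← sq_abs, ← Real.rpow_two]
      exact Real.rpow_le_rpow_of_exponent_le (one_le_abs_intCast ha) hq
  have hscaled (x : ℝ) : x ^ 2 ≤ κ ^ 2 * (1 + |x| ^ q / κ ^ q) := by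
    rw [← Real.div_rpow (abs_nonneg _) hκ.le, ← sq_abs, ← div_le_iff₀' (by positivity), ← div_pow]
    rcases le_total (|x| / κ) 1 with h | h
    · have : 0 ≤ (|x| / κ) ^ q := by positivity
      linarith [pow_le_one₀ (n := 2) (by positivity) h]
    · have := Real.rpow_le_rpow_of_exponent_le h hq
      rw [Real.rpow_two] at this
      linarith
  rw [mul_min_of_nonneg _ _ zero_le_two]
  refine le_min ?_ ?_
  · calc 𝔼 y ∈ powerBall q d (d * κ ^ q), (y i : ℝ) ^ 2 ≤ κ ^ q :=
          (expect_le_expect fun y _ ↦ hsq_le (y i)).trans hmoment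
      _ ≤ 2 * κ ^ q := by linarith
  · calc 𝔼 y ∈ powerBall q d (d * κ ^ q), (y i : ℝ) ^ 2
        ≤ 𝔼 y ∈ powerBall q d (d * κ ^ q), κ ^ 2 * (1 + |(y i : ℝ)| ^ q / κ ^ q) :=
          expect_le_expect fun y _ ↦ hscaled (y i)
      _ = κ ^ 2 * (1 + (𝔼 y ∈ powerBall q d (d * κ ^ q), |(y i : ℝ)| ^ q) / κ ^ q) := by
          rw [← mul_expect, expect_add_distrib, expect_const hne, expect_div]
      _ ≤ κ ^ 2 * (1 + κ ^ q / κ ^ q) := by gcongr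
      _ = 2 * κ ^ 2 := by field_simp; norm_num

lemma abs_ballMultiplier_sub_le (hq : 2 ≤ q) (hκ : 0 < κ) {θ : ℝ} (hθ : Real.sin θ = 0)
    (φ : Fin d → ℝ) :
    |ballMultiplier q d (d * κ ^ q) φ - ballMultiplier q d (d * κ ^ q) fun _ ↦ θ|
      ≤ 4 * min (κ ^ q) (κ ^ 2) * ∑ j, Real.sin ((φ j - θ) / 2) ^ 2 := by
  have hfactor (a : ℤ) (x : ℝ) :
      Real.cos (a * x) = Real.cos (a * θ) * Real.cos (a * (x - θ)) := by
    have : Real.sin (a * θ) = 0 := by simpa [hθ] using abs_sin_intCast_mul_le a θ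
    rw [show (a : ℝ) * x = a * θ + a * (x - θ) by ring, Real.cos_add, this]
    ring
  have hpoint (y : Fin d → ℤ) : |∏ j, Real.cos (y j * φ j) - ∏ j, Real.cos (y j * θ)|
      ≤ ∑ j, 2 * Real.sin ((φ j - θ) / 2) ^ 2 * (y j : ℝ) ^ 2 := by
    simp only [hfactor _ (φ _), prod_mul_distrib]
    rw [← mul_sub_one, abs_mul]
    calc |∏ j, Real.cos (y j * θ)| * |∏ j, Real.cos (y j * (φ j - θ)) - 1|
        ≤ 1 * ∑ j, |Real.cos (y j * (φ j - θ)) - 1| := by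
          gcongr
          · exact abs_prod_cos_le_one _ _
          · exact abs_prod_sub_one_le _ fun j ↦ Real.abs_cos_le_one _
      _ ≤ ∑ j, 2 * Real.sin ((φ j - θ) / 2) ^ 2 * (y j : ℝ) ^ 2 := by
          rw [one_mul]
          exact sum_le_sum fun j _ ↦
            (abs_cos_intCast_mul_sub_one_le _ _).trans_eq (by ring)
  rw [ballMultiplier, ballMultiplier, ← expect_sub_distrib]
  calc |𝔼 y ∈ powerBall q d (d * κ ^ q),
          (∏ j, Real.cos (y j * φ j) - ∏ j, Real.cos (y j * θ))|
      ≤ 𝔼 y ∈ powerBall q d (d * κ ^ q),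
          ∑ j, 2 * Real.sin ((φ j - θ) / 2) ^ 2 * (y j : ℝ) ^ 2 :=
        (abs_expect_le _ _).trans (expect_le_expect fun y _ ↦ hpoint y)
    _ = ∑ j, 2 * Real.sin ((φ j - θ) / 2) ^ 2
          * 𝔼 y ∈ powerBall q d (d * κ ^ q), (y j : ℝ) ^ 2 := by
        simp only [expect_sum_comm, mul_expect]
    _ ≤ ∑ j, 2 * Real.sin ((φ j - θ) / 2) ^ 2 * (2 * min (κ ^ q) (κ ^ 2)) := by
        gcongr with j
        exact expect_powerBall_sq_le hq hκ j
    _ = 4 * min (κ ^ q) (κ ^ 2) * ∑ j, Real.sin ((φ j - θ) / 2) ^ 2 := by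
        rw [← sum_mul, ← mul_sum]
        ring

end NearConstant

/-! ### Decay of the multiplier at small radii -/

section PermutationAverage

variable {q N : ℝ} {d : ℕ}

lemma ballMultiplier_eq_expect_perm (hq : 0 < q) (φ : Fin d → ℝ) :
    ballMultiplier q d N φ
      = 𝔼 y ∈ powerBall q d N, 𝔼 π : Equiv.Perm (Fin d), ∏ j, Real.cos (y j * φ (π j)) := by
  rw [← expect_comm, ← Fintype.expect_const (ι := Equiv.Perm (Fin d)) (ballMultiplier q d N φ)]
  refine expect_congr rfl fun π _ ↦ ?_
  rw [ballMultiplier, ← expect_powerBall_comp_perm hq π fun y ↦ ∏ j, Real.cos (y j * φ (π j))]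
  exact expect_congr rfl fun y _ ↦ (Equiv.prod_comp π fun j ↦ Real.cos (y j * φ j)).symm

lemma abs_ballMultiplier_le_of_card_le (hq : 0 < q) (hN : 0 ≤ N) {φ : Fin d → ℝ} {β Q : ℝ}
    (hQ : 0 ≤ Q) (P : (Fin d → ℤ) → Prop) [DecidablePred P]
    (hgood : ∀ y ∈ powerBall q d N, ¬P y →
      |𝔼 π : Equiv.Perm (Fin d), ∏ j, Real.cos (y j * φ (π j))| ≤ Q)
    (hbad : (#{y ∈ powerBall q d N | P y} : ℝ) ≤ β * #(powerBall q d N)) :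
    |ballMultiplier q d N φ| ≤ β + Q := by
  have hne := powerBall_nonempty (d := d) hq hN
  have hpoint : ∀ y ∈ powerBall q d N,
      |𝔼 π : Equiv.Perm (Fin d), ∏ j, Real.cos (y j * φ (π j))| ≤ (if P y then 1 else 0) + Q := by
    intro y hy
    split_ifs with h
    · calc |𝔼 π : Equiv.Perm (Fin d), ∏ j, Real.cos (y j * φ (π j))| ≤ 1 :=
            (abs_expect_le _ _).trans
              (expect_le univ_nonempty fun _ _ ↦ abs_prod_cos_le_one _ _)
        _ ≤ 1 + Q := by linarith
    · rw [zero_add]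
      exact hgood y hy h
  calc |ballMultiplier q d N φ|
      ≤ 𝔼 y ∈ powerBall q d N, ((if P y then 1 else 0) + Q) := by
        rw [ballMultiplier_eq_expect_perm hq]
        exact (abs_expect_le _ _).trans (expect_le_expect hpoint)
    _ = #{y ∈ powerBall q d N | P y} / #(powerBall q d N) + Q := by
        rw [expect_add_distrib, expect_const hne, expect_eq_sum_div_card, sum_boole]
    _ ≤ β + Q := by
        gcongr
        exact div_le_of_le_mul₀ (Nat.cast_nonneg _)
          (nonneg_of_mul_nonneg_left ((Nat.cast_nonneg _).trans hbad)
            (Nat.cast_pos.2 hne.card_pos)) hbad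

end PermutationAverage

section SwapAverage

variable {α : Type*} [DecidableEq α]

lemma expect_perm_prod_mul_eq [Fintype α] {ι : Type*} {a b : ι → α}
    (hab : Function.Injective (Sum.elim a b)) (x : α → ℝ) (s : Finset ι) {W : Equiv.Perm α → ℝ}
    (hW : ∀ r ∈ s, ∀ π, W (π * Equiv.swap (a r) (b r)) = W π) :
    𝔼 π : Equiv.Perm α, (∏ r ∈ s, x (π (a r))) * W π
      = 𝔼 π : Equiv.Perm α, (∏ r ∈ s, (x (π (a r)) + x (π (b r))) / 2) * W π := by
  classical
  induction s using Finset.induction_on generalizing W with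
  | empty => rfl
  | insert r s hr ih =>
    have hne {t : ι} (ht : t ∈ s) : r ≠ t := fun h ↦ hr (h ▸ ht)
    have hswap {t u : ι} (htu : t ≠ u) :
        Equiv.swap (a t) (b t) (a u) = a u ∧ Equiv.swap (a t) (b t) (b u) = b u := by
      have h (v w : ι ⊕ ι) (hvw : v ≠ w) := hab.ne hvw
      constructor
      · exact Equiv.swap_apply_of_ne_of_ne (h (.inl u) (.inl t) (by simpa using htu.symm))
          (h (.inl u) (.inr t) (by simp))
      · exact Equiv.swap_apply_of_ne_of_ne (h (.inr u) (.inl t) (by simp))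
          (h (.inr u) (.inr t) (by simpa using htu.symm))
    set V : Equiv.Perm α → ℝ := fun π ↦ (∏ t ∈ s, (x (π (a t)) + x (π (b t))) / 2) * W π
    have hV (π : Equiv.Perm α) : V (π * Equiv.swap (a r) (b r)) = V π := by
      simp only [V, hW r (mem_insert_self r s), Equiv.Perm.mul_apply]
      congr 1
      refine prod_congr rfl fun t ht ↦ ?_
      rw [(hswap (hne ht)).1, (hswap (hne ht)).2]
    have hexchange : 𝔼 π, x (π (b r)) * V π = 𝔼 π, x (π (a r)) * V π := by
      rw [← Fintype.expect_equiv (Equiv.mulRight (Equiv.swap (a r) (b r)))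
        (fun π ↦ x (π (a r)) * V π) (fun π ↦ x (π (b r)) * V π) fun π ↦ ?_]
      simp [hV]
    calc 𝔼 π : Equiv.Perm α, (∏ t ∈ insert r s, x (π (a t))) * W π
        = 𝔼 π : Equiv.Perm α, (∏ t ∈ s, x (π (a t))) * (x (π (a r)) * W π) :=
          expect_congr rfl fun π _ ↦ by rw [prod_insert hr]; ring
      _ = 𝔼 π, x (π (a r)) * V π := by
          rw [ih fun t ht π ↦ ?_]
          · exact expect_congr rfl fun π _ ↦ by ring
          · rw [hW t (mem_insert_of_mem ht), Equiv.Perm.mul_apply, (hswap (hne ht).symm).1]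
      _ = 𝔼 π, (x (π (a r)) * V π + x (π (b r)) * V π) / 2 := by
          rw [← expect_div, expect_add_distrib, hexchange, add_self_div_two]
      _ = 𝔼 π : Equiv.Perm α,
            (∏ t ∈ insert r s, (x (π (a t)) + x (π (b t))) / 2) * W π :=
          expect_congr rfl fun π _ ↦ by rw [prod_insert hr]; ring

/-- The off-diagonal loss of the averaged cosine factor attached to a pair of coordinates: the
absolute value of the mean of `cos (φ i)` and `cos (φ j)` is `1 - cosPairLoss φ i j`. -/
noncomputable def cosPairLoss (φ : α → ℝ) (i j : α) : ℝ :=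
  if i = j then 0 else 1 - |Real.cos (φ i) + Real.cos (φ j)| / 2

lemma cosPairLoss_nonneg (φ : α → ℝ) (i j : α) : 0 ≤ cosPairLoss φ i j := by
  rw [cosPairLoss]
  split_ifs
  · exact le_rfl
  · linarith [abs_add_le (Real.cos (φ i)) (Real.cos (φ j)), Real.abs_cos_le_one (φ i),
      Real.abs_cos_le_one (φ j)]

lemma cosPairLoss_le_one (φ : α → ℝ) (i j : α) : cosPairLoss φ i j ≤ 1 := by
  rw [cosPairLoss]
  split_ifs
  · exact zero_le_one
  · linarith [abs_nonneg (Real.cos (φ i) + Real.cos (φ j))]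

lemma abs_cos_add_cos_div_two_le (φ : α → ℝ) {i j : α} (hij : i ≠ j) :
    |(Real.cos (φ i) + Real.cos (φ j)) / 2| ≤ Real.exp (-cosPairLoss φ i j) := by
  rw [cosPairLoss, if_neg hij, abs_div, abs_two]
  linarith [Real.add_one_le_exp (-(1 - |Real.cos (φ i) + Real.cos (φ j)| / 2))]

lemma sum_cosPairLoss [Fintype α] (φ : α → ℝ) :
    ∑ i, ∑ j, cosPairLoss φ i j
      = ∑ i, ∑ j, (1 - |Real.cos (φ i) + Real.cos (φ j)| / 2) - ∑ i, (1 - |Real.cos (φ i)|) := by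
  rw [← sum_sub_distrib]
  refine sum_congr rfl fun i _ ↦ ?_
  have hdiag : 1 - |Real.cos (φ i)| = 1 - |Real.cos (φ i) + Real.cos (φ i)| / 2 := by
    rw [← two_mul, abs_mul, abs_two]
    ring
  rw [eq_sub_iff_add_eq, hdiag,
    ← Fintype.sum_ite_eq i fun j ↦ 1 - |Real.cos (φ i) + Real.cos (φ j)| / 2, ← sum_add_distrib]
  refine sum_congr rfl fun j _ ↦ ?_
  rw [cosPairLoss]
  split_ifs <;> ring

end SwapAverage

section CosineSums

variable {α : Type*} [Fintype α]

lemma sum_one_sub_abs_cos_le (φ : α → ℝ) :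
    ∑ i, (1 - |Real.cos (φ i)|)
      ≤ 2 * min (∑ i, Real.sin (φ i / 2) ^ 2) (∑ i, Real.cos (φ i / 2) ^ 2) := by
  rw [mul_min_of_nonneg _ _ zero_le_two, mul_sum, mul_sum]
  have hcos (i : α) : Real.cos (φ i) = 2 * Real.cos (φ i / 2) ^ 2 - 1 := by
    rw [← Real.cos_two_mul, mul_div_cancel₀ _ two_ne_zero]
  refine le_min (sum_le_sum fun i _ ↦ ?_) (sum_le_sum fun i _ ↦ ?_)
  · linarith [le_abs_self (Real.cos (φ i)), hcos i, Real.sin_sq_add_cos_sq (φ i / 2)]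
  · linarith [neg_abs_le (Real.cos (φ i)), hcos i]

lemma sum_sin_sq_mul_sum_cos_sq_le (φ : α → ℝ) :
    (∑ i, Real.sin (φ i / 2) ^ 2) * (∑ i, Real.cos (φ i / 2) ^ 2)
      ≤ ∑ i, ∑ j, (1 - |Real.cos (φ i) + Real.cos (φ j)| / 2) := by
  have hpoint (i j : α) :
      (Real.sin (φ i / 2) ^ 2 * Real.cos (φ j / 2) ^ 2
        + Real.sin (φ j / 2) ^ 2 * Real.cos (φ i / 2) ^ 2) / 2
        ≤ 1 - |Real.cos (φ i) + Real.cos (φ j)| / 2 := by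
    have hcos (i : α) : Real.cos (φ i) = 2 * Real.cos (φ i / 2) ^ 2 - 1 := by
      rw [← Real.cos_two_mul, mul_div_cancel₀ _ two_ne_zero]
    rw [Real.sin_sq, Real.sin_sq, hcos i, hcos j]
    have hi := Real.cos_sq_le_one (φ i / 2)
    have hj := Real.cos_sq_le_one (φ j / 2)
    have := sq_nonneg (Real.cos (φ i / 2))
    have := sq_nonneg (Real.cos (φ j / 2))
    rcases abs_cases (2 * Real.cos (φ i / 2) ^ 2 - 1 + (2 * Real.cos (φ j / 2) ^ 2 - 1)) with
      ⟨h, _⟩ | ⟨h, _⟩ <;> rw [h] <;> nlinarith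
  calc (∑ i, Real.sin (φ i / 2) ^ 2) * (∑ i, Real.cos (φ i / 2) ^ 2)
      = ∑ i, ∑ j, (Real.sin (φ i / 2) ^ 2 * Real.cos (φ j / 2) ^ 2
          + Real.sin (φ j / 2) ^ 2 * Real.cos (φ i / 2) ^ 2) / 2 := by
        simp only [← sum_div, sum_add_distrib]
        rw [sum_comm (f := fun i j ↦ Real.sin (φ j / 2) ^ 2 * Real.cos (φ i / 2) ^ 2),
          ← sum_mul_sum, add_self_div_two]
    _ ≤ ∑ i, ∑ j, (1 - |Real.cos (φ i) + Real.cos (φ j)| / 2) :=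
        sum_le_sum fun i _ ↦ sum_le_sum fun j _ ↦ hpoint i j

lemma min_sum_sin_sq_sum_cos_sq_le [DecidableEq α] (h8 : 8 ≤ Fintype.card α) (φ : α → ℝ) :
    Fintype.card α / 4 * min (∑ i, Real.sin (φ i / 2) ^ 2) (∑ i, Real.cos (φ i / 2) ^ 2)
      ≤ ∑ i, ∑ j, cosPairLoss φ i j := by
  have hsum : ∑ i, Real.sin (φ i / 2) ^ 2 + ∑ i, Real.cos (φ i / 2) ^ 2 = Fintype.card α := by
    simp [← sum_add_distrib]
  have hprod := sum_sin_sq_mul_sum_cos_sq_le φ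
  have hdiag := sum_one_sub_abs_cos_le φ
  have hS : 0 ≤ ∑ i, Real.sin (φ i / 2) ^ 2 := sum_nonneg fun _ _ ↦ sq_nonneg _
  have hS' : 0 ≤ ∑ i, Real.cos (φ i / 2) ^ 2 := sum_nonneg fun _ _ ↦ sq_nonneg _
  have h8' : (8 : ℝ) ≤ Fintype.card α := by exact_mod_cast h8
  rw [sum_cosPairLoss]
  set S := ∑ i, Real.sin (φ i / 2) ^ 2
  set S' := ∑ i, Real.cos (φ i / 2) ^ 2
  have hmin : min S S' * (Fintype.card α / 2) ≤ S * S' := by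
    rw [← min_mul_max S S', ← hsum, ← min_add_max S S']
    gcongr
    linarith [min_le_max (a := S) (b := S')]
  nlinarith [le_min hS hS']

end CosineSums

section SmallRadius

variable {q N : ℝ} {d : ℕ}

lemma exists_embedding_units_zeros (hq : 0 < q) (hNd : N ≤ d / 2) {y : Fin d → ℤ}
    (hy : y ∈ powerBall q d N) : Nonempty ({i // |y i| = 1} ↪ {i // y i = 0}) := by
  refine Function.Embedding.nonempty_of_card_le ?_
  rw [Fintype.card_subtype, Fintype.card_subtype]
  have hunits : #{i | |y i| = 1} ≤ #{i | y i ≠ 0} :=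
    card_le_card <| monotone_filter_right _ fun i _ hi h0 ↦ by simp [h0] at hi
  have hsplit := card_filter_add_card_filter_not (s := (univ : Finset (Fin d))) (y · = 0)
  rw [card_fin] at hsplit
  have hsplit' : (#{i | y i = 0} : ℝ) + #{i | y i ≠ 0} = d := by exact_mod_cast hsplit
  have hnonzero := card_coord_ne_zero_le hq hy
  have : (#{i | y i ≠ 0} : ℝ) ≤ #{i | y i = 0} := by linarith
  exact hunits.trans (Nat.cast_le.1 this)

lemma injective_sumElim_units_zeros {y : Fin d → ℤ} (e : {i // |y i| = 1} ↪ {i // y i = 0}) :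
    Function.Injective
      (Sum.elim (fun r : {i // |y i| = 1} ↦ (r : Fin d)) fun r ↦ (e r : Fin d)) := by
  refine Subtype.val_injective.sumElim (Subtype.val_injective.comp e.injective) fun r s h ↦ ?_
  have := r.2
  rw [h, (e s).2] at this
  simp at this

lemma abs_expect_perm_prod_cos_le_exp {y : Fin d → ℤ} (φ : Fin d → ℝ)
    (e : {i // |y i| = 1} ↪ {i // y i = 0}) :
    |𝔼 π : Equiv.Perm (Fin d), ∏ j, Real.cos (y j * φ (π j))|
      ≤ 𝔼 π : Equiv.Perm (Fin d),
          Real.exp (-∑ r : {i // |y i| = 1}, cosPairLoss φ (π r) (π (e r))) := by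
  set a : {i // |y i| = 1} → Fin d := Subtype.val
  set b : {i // |y i| = 1} → Fin d := fun r ↦ e r
  have hab : Function.Injective (Sum.elim a b) := injective_sumElim_units_zeros e
  set W : Equiv.Perm (Fin d) → ℝ := fun π ↦ ∏ j with |y j| ≠ 1, Real.cos (y j * φ (π j))
  have hW (r) (π : Equiv.Perm (Fin d)) : W (π * Equiv.swap (a r) (b r)) = W π := by
    refine prod_congr rfl fun j hj ↦ ?_
    rcases eq_or_ne j (b r) with rfl | hjb
    · simp [b, (e r).2]
    · rw [Equiv.Perm.mul_apply, Equiv.swap_apply_of_ne_of_ne (fun h ↦ ?_) hjb]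
      exact (mem_filter.1 hj).2 (h ▸ r.2)
  have hfactor (π : Equiv.Perm (Fin d)) :
      ∏ j, Real.cos (y j * φ (π j)) = (∏ r, Real.cos (φ (π (a r)))) * W π := by
    rw [← prod_filter_mul_prod_filter_not univ (|y ·| = 1),
      prod_subtype (p := fun i ↦ |y i| = 1) _ (by simp)]
    refine congr_arg (· * W π) (prod_congr rfl fun r _ ↦ ?_)
    rcases (abs_eq zero_le_one).1 r.2 with h | h <;> simp [h, a]
  rw [expect_congr rfl fun π _ ↦ hfactor π,
    expect_perm_prod_mul_eq hab (fun i ↦ Real.cos (φ i)) univ fun r _ ↦ hW r]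
  refine (abs_expect_le _ _).trans (expect_le_expect fun π _ ↦ ?_)
  rw [abs_mul, abs_prod, ← sum_neg_distrib, Real.exp_sum,
    ← mul_one (∏ r, Real.exp _)]
  gcongr with r _
  · exact abs_cos_add_cos_div_two_le φ (π.injective.ne (hab.ne Sum.inl_ne_inr))
  · exact abs_prod_cos_le_one _ _

lemma abs_expect_perm_prod_cos_le (hq : 0 < q) (hN : 4 ≤ N) (hNd : N ≤ d / 2) {φ : Fin d → ℝ}
    (hφ : 0 < min (∑ j, Real.sin (φ j / 2) ^ 2) (∑ j, Real.cos (φ j / 2) ^ 2))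
    {y : Fin d → ℤ} (hy : y ∈ powerBall q d N) (hunits : N / 2 ≤ #{i | |y i| = 1}) :
    |𝔼 π : Equiv.Perm (Fin d), ∏ j, Real.cos (y j * φ (π j))|
      ≤ 304 / (N / d * min (∑ j, Real.sin (φ j / 2) ^ 2) (∑ j, Real.cos (φ j / 2) ^ 2)) := by
  have hd : (8 : ℝ) ≤ d := by linarith
  have hcard : 8 ≤ Fintype.card (Fin d) := by
    rw [Fintype.card_fin]
    exact_mod_cast hd
  obtain ⟨e⟩ := exists_embedding_units_zeros hq hNd hy
  set m := min (∑ j, Real.sin (φ j / 2) ^ 2) (∑ j, Real.cos (φ j / 2) ^ 2)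
  have hmean : N / d * m / 8
      ≤ Fintype.card {i // |y i| = 1} * 𝔼 i, 𝔼 j, cosPairLoss φ i j := by
    have hloss := min_sum_sin_sq_sum_cos_sq_le hcard φ
    simp only [Fintype.expect_eq_sum_div_card, ← sum_div, Fintype.card_fin] at hloss ⊢
    rw [Fintype.card_subtype]
    calc N / d * m / 8 = N / 2 * (d / 4 * m / d / d) := by field_simp; norm_num
      _ ≤ #{i | |y i| = 1} * ((∑ i, ∑ j, cosPairLoss φ i j) / d / d) := by gcongr
  have hpos : 0 < N / d * m / 8 := by positivity
  calc |𝔼 π : Equiv.Perm (Fin d), ∏ j, Real.cos (y j * φ (π j))|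
      ≤ 38 / (Fintype.card {i // |y i| = 1} * 𝔼 i, 𝔼 j, cosPairLoss φ i j) :=
        (abs_expect_perm_prod_cos_le_exp φ e).trans <|
          expect_perm_exp_neg_sum_pair_le (injective_sumElim_units_zeros e)
            (cosPairLoss_nonneg φ) (cosPairLoss_le_one φ) (fun i ↦ if_pos rfl) hcard
            (hpos.trans_le hmean)
    _ ≤ 38 / (N / d * m / 8) := by gcongr
    _ = 304 / (N / d * m) := by field_simp; norm_num

lemma abs_ballMultiplier_le_of_le (hq : 1 < q) (hN : 4 ≤ N) (hNd : N ≤ d / 2) {φ : Fin d → ℝ}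
    (hφ : 0 < min (∑ j, Real.sin (φ j / 2) ^ 2) (∑ j, Real.cos (φ j / 2) ^ 2)) :
    |ballMultiplier q d N φ| ≤ (1 + 64 * ∑' a : ℤ, |(a : ℝ)| ^ (-q)) * (N / d)
      + 304 / (N / d * min (∑ j, Real.sin (φ j / 2) ^ 2) (∑ j, Real.cos (φ j / 2) ^ 2)) := by
  have hd : 0 < d := by
    have : (0 : ℝ) < d := by linarith
    exact_mod_cast this
  have hq0 : 0 < q := by linarith
  refine abs_ballMultiplier_le_of_card_le hq0 (by linarith) (by positivity)
    (fun y ↦ (#{i | |y i| = 1} : ℝ) < N / 2) (fun y hy h ↦ ?_)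
    (card_few_unit_coords_le hq hd hN hNd)
  exact abs_expect_perm_prod_cos_le hq0 hN hNd hφ hy (not_lt.1 h)

end SmallRadius

/-! ### Decay of the multiplier at large radii -/

section Resonance

lemma mul_abs_sub_round_le_abs_sin (x : ℝ) :
    2 / Real.pi * |x - round (x / Real.pi) * Real.pi| ≤ |Real.sin x| := by
  have hpi := Real.pi_pos
  have hdist : |x - round (x / Real.pi) * Real.pi| ≤ Real.pi / 2 := by
    have hscale : x - round (x / Real.pi) * Real.pi
        = (x / Real.pi - round (x / Real.pi)) * Real.pi := by field_simp
    rw [hscale, abs_mul, abs_of_pos hpi]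
    nlinarith [abs_sub_round (x / Real.pi)]
  simpa [Real.sin_sub_int_mul_pi, abs_mul] using Real.mul_abs_le_abs_sin hdist

lemma card_le_of_abs_sin_le {s : Finset ℤ} {x R δ : ℝ} (hx : x ≠ 0) (hR : 0 ≤ R)
    (hδ : 0 ≤ δ) (hs : ∀ a ∈ s, |a * x| ≤ R) (hsin : ∀ a ∈ s, |Real.sin (a * x)| ≤ δ * |x|) :
    (#s : ℝ) ≤ (4 * δ + 1) * (2 * R + 2) := by
  have hpi := Real.pi_pos
  set f : ℤ → ℤ := fun a ↦ round (a * x / Real.pi)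
  have hfiber : ∀ b ∈ s.image f, #{a ∈ s | f a = b} ≤ ⌊4 * δ + 1⌋₊ := by
    intro b _
    refine Nat.le_floor ((card_le_of_abs_sub_le (c := b * Real.pi / x) (r := 2 * δ)
      (by positivity) fun a ha ↦ ?_).trans_eq (by ring))
    obtain ⟨has, rfl⟩ := mem_filter.1 ha
    have hdist := (mul_abs_sub_round_le_abs_sin (a * x)).trans (hsin a has)
    have hsub : (a : ℝ) - f a * Real.pi / x = (a * x - f a * Real.pi) / x := by field_simp
    rw [hsub, abs_div, div_le_iff₀ (abs_pos.2 hx)]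
    rw [div_mul_eq_mul_div, div_le_iff₀ hpi] at hdist
    have : δ * |x| * Real.pi ≤ δ * |x| * 4 := by gcongr; exact Real.pi_le_four
    linarith
  have himage : (#(s.image f) : ℝ) ≤ 2 * R + 2 := by
    refine (card_le_of_abs_sub_le (c := 0) (r := R + 1 / 2) (by positivity) ?_).trans_eq (by ring)
    simp only [mem_image, forall_exists_index, and_imp, forall_apply_eq_imp_iff₂, sub_zero]
    intro a ha
    have hquot : |a * x / Real.pi| ≤ R := by
      rw [abs_div, abs_of_pos hpi]
      exact (div_le_self (abs_nonneg _) (by linarith [Real.pi_gt_three])).trans (hs a ha)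
    calc |(f a : ℝ)| = |a * x / Real.pi - (a * x / Real.pi - f a)| := by rw [sub_sub_cancel]
      _ ≤ |a * x / Real.pi| + |a * x / Real.pi - f a| := abs_sub _ _
      _ ≤ R + 1 / 2 := add_le_add hquot (abs_sub_round _)
  calc (#s : ℝ) ≤ ⌊4 * δ + 1⌋₊ * #(s.image f) := by
        exact_mod_cast card_le_mul_card_image s _ hfiber
    _ ≤ (4 * δ + 1) * (2 * R + 2) := by
        gcongr
        exact Nat.floor_le (by positivity)

lemma card_filter_lt_le_of_expect_le {ι : Type*} {s : Finset ι} {f : ι → ℝ} {c β : ℝ}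
    (hf : ∀ y ∈ s, 0 ≤ f y) (hc : 0 < c) (h : 𝔼 y ∈ s, f y ≤ β * c) :
    (#{y ∈ s | c < f y} : ℝ) ≤ β * #s := by
  have hmarkov : #{y ∈ s | c < f y} * c ≤ β * #s * c := by
    calc #{y ∈ s | c < f y} * c = ∑ y ∈ s with c < f y, c := by rw [sum_const, nsmul_eq_mul]
      _ ≤ ∑ y ∈ s with c < f y, f y := sum_le_sum fun y hy ↦ (mem_filter.1 hy).2.le
      _ ≤ ∑ y ∈ s, f y := sum_le_sum_of_subset_of_nonneg (filter_subset _ _) fun y hy _ ↦ hf y hy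
      _ = #s * 𝔼 y ∈ s, f y := by rw [← nsmul_eq_mul, card_smul_expect]
      _ ≤ #s * (β * c) := by gcongr
      _ = β * #s * c := by ring
  exact le_of_mul_le_mul_right hmarkov hc

variable {q κ L : ℝ} {d : ℕ}

lemma card_powerBall_lt_abs_le (hq : 2 ≤ q) (hκ : 0 < κ) (hL : 1 ≤ L) (j : Fin d) :
    (#{y ∈ powerBall q d (d * κ ^ q) | L * κ < |(y j : ℝ)|} : ℝ)
      ≤ 1 / L ^ 2 * #(powerBall q d (d * κ ^ q)) := by
  have hL0 : 0 < L := by linarith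
  have hmoment : 𝔼 y ∈ powerBall q d (d * κ ^ q), |(y j : ℝ)| ^ q
      ≤ 1 / L ^ 2 * (L ^ 2 * κ ^ q) := by
    have hd : (d : ℝ) ≠ 0 := Nat.cast_ne_zero.2 j.pos.ne'
    refine (expect_powerBall_abs_rpow_le (by linarith) (by positivity) j).trans_eq ?_
    field_simp
  refine (Nat.cast_le.2 (card_le_card (monotone_filter_right _ fun y _ hy ↦ ?_))).trans
    (card_filter_lt_le_of_expect_le (fun y _ ↦ abs_rpow_nonneg q (y j)) (by positivity) hmoment)
  calc L ^ 2 * κ ^ q = L ^ (2 : ℝ) * κ ^ q := by rw [Real.rpow_two]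
    _ ≤ L ^ q * κ ^ q := by gcongr
    _ = (L * κ) ^ q := (Real.mul_rpow hL0.le hκ.le).symm
    _ < |(y j : ℝ)| ^ q := Real.rpow_lt_rpow (by positivity) hy (by linarith)

lemma card_powerBall_abs_sin_le_of_abs_le (hq : 1 ≤ q) (hκ : 10000 ≤ κ) (hL : 1 ≤ L)
    (hLκ : L ^ 5 ≤ κ) {x : ℝ} (hx : x ≠ 0) (hxL : κ * |x| ≤ L ^ 2) (j : Fin d) :
    (#{y ∈ powerBall q d (d * κ ^ q) | |(y j : ℝ)| ≤ L * κ ∧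
        |Real.sin (y j * x)| ≤ κ / L ^ 5 * |x|} : ℝ)
      ≤ 4800000 / L ^ 2 * #(powerBall q d (d * κ ^ q)) := by
  have : 0 < L := by linarith
  have hL3 : 1 ≤ L ^ 3 := one_le_pow₀ hL
  set P := {y ∈ powerBall q d (d * κ ^ q) | |(y j : ℝ)| ≤ L * κ ∧
    |Real.sin (y j * x)| ≤ κ / L ^ 5 * |x|}
  set A := P.image (· j)
  have hA : (#A : ℝ) ≤ (4 * (κ / L ^ 5) + 1) * (2 * L ^ 3 + 2) := by
    refine card_le_of_abs_sin_le hx (by positivity) (by positivity) ?_ ?_ <;>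
      simp only [A, P, forall_mem_image, mem_filter] <;> rintro y ⟨-, habs, hsin⟩
    · calc |(y j : ℝ) * x| = |(y j : ℝ)| * |x| := abs_mul _ _
        _ ≤ L * κ * |x| := by gcongr
        _ ≤ L * L ^ 2 := by rw [mul_assoc]; gcongr
        _ = L ^ 3 := by ring
    · exact hsin
  have hfiber : ∀ a ∈ A, (#{y ∈ P | y j = a} : ℝ)
      ≤ 240000 / κ * #(powerBall q d (d * κ ^ q)) := fun a _ ↦
    (Nat.cast_le.2 (card_le_card (filter_subset_filter _ (filter_subset _ _)))).trans
      (card_powerBall_slice_le hq hκ j a)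
  have hone : 1 ≤ κ / L ^ 5 := (one_le_div (by positivity)).2 hLκ
  calc (#P : ℝ) = ∑ a ∈ A, (#{y ∈ P | y j = a} : ℝ) := by
        rw [card_eq_sum_card_image (· j) P, Nat.cast_sum]
    _ ≤ #A * (240000 / κ * #(powerBall q d (d * κ ^ q))) := by
        rw [← nsmul_eq_mul]
        exact sum_le_card_nsmul _ _ _ hfiber
    _ ≤ (5 * (κ / L ^ 5)) * (4 * L ^ 3) * (240000 / κ * #(powerBall q d (d * κ ^ q))) := by
        gcongr
        exact hA.trans (by gcongr <;> linarith)
    _ = 4800000 / L ^ 2 * #(powerBall q d (d * κ ^ q)) := by field_simp; ring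

lemma card_powerBall_abs_sin_le (hq : 2 ≤ q) (hκ : 10000 ≤ κ) (hL : 1 ≤ L) (hLκ : L ^ 5 ≤ κ)
    {x : ℝ} (hx : x ≠ 0) (hxL : κ * |x| ≤ L ^ 2) (j : Fin d) :
    (#{y ∈ powerBall q d (d * κ ^ q) | |Real.sin (y j * x)| ≤ κ / L ^ 5 * |x|} : ℝ)
      ≤ 4800001 / L ^ 2 * #(powerBall q d (d * κ ^ q)) := by
  set B := powerBall q d (d * κ ^ q)
  have hcover : #{y ∈ B | |Real.sin (y j * x)| ≤ κ / L ^ 5 * |x|}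
      ≤ #{y ∈ B | |(y j : ℝ)| ≤ L * κ ∧ |Real.sin (y j * x)| ≤ κ / L ^ 5 * |x|}
        + #{y ∈ B | L * κ < |(y j : ℝ)|} := by
    refine (card_le_card fun y hy ↦ ?_).trans (card_union_le _ _)
    obtain ⟨hyB, hsin⟩ := mem_filter.1 hy
    rcases le_or_gt |(y j : ℝ)| (L * κ) with h | h
    · exact mem_union_left _ (mem_filter.2 ⟨hyB, h, hsin⟩)
    · exact mem_union_right _ (mem_filter.2 ⟨hyB, h⟩)
  calc (#{y ∈ B | |Real.sin (y j * x)| ≤ κ / L ^ 5 * |x|} : ℝ)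
      ≤ 4800000 / L ^ 2 * #B + 1 / L ^ 2 * #B :=
        (Nat.cast_le.2 hcover).trans <| (Nat.cast_add _ _).trans_le <| add_le_add
          (card_powerBall_abs_sin_le_of_abs_le (by linarith) hκ hL hLκ hx hxL j)
          (card_powerBall_lt_abs_le hq (by linarith) hL j)
    _ = 4800001 / L ^ 2 * #B := by ring

/-- The `ℓ²` mass of the frequencies `φ i`, summed over the coordinates `y j` at which
`sin (y j * φ i)` is smaller than its expected size. -/
noncomputable def resonantMass (δ : ℝ) (φ : Fin d → ℝ) (y : Fin d → ℤ) : ℝ :=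
  ∑ j, ∑ i, if |Real.sin (y j * φ i)| ≤ δ * |φ i| then φ i ^ 2 else 0

lemma resonantMass_nonneg (δ : ℝ) (φ : Fin d → ℝ) (y : Fin d → ℤ) : 0 ≤ resonantMass δ φ y :=
  sum_nonneg fun _ _ ↦ sum_nonneg fun _ _ ↦ by split_ifs <;> positivity

lemma expect_resonantMass_le (hq : 2 ≤ q) (hκ : 10000 ≤ κ) (hL : 1 ≤ L) (hLκ : L ^ 5 ≤ κ)
    {φ : Fin d → ℝ} (hφ : ∀ i, κ * |φ i| ≤ L ^ 2) :
    𝔼 y ∈ powerBall q d (d * κ ^ q), resonantMass (κ / L ^ 5) φ y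
      ≤ 4800001 / L ^ 2 * (d * ∑ i, φ i ^ 2) := by
  have hentry (j i : Fin d) : 𝔼 y ∈ powerBall q d (d * κ ^ q),
      (if |Real.sin (y j * φ i)| ≤ κ / L ^ 5 * |φ i| then φ i ^ 2 else 0)
        ≤ 4800001 / L ^ 2 * φ i ^ 2 := by
    rcases eq_or_ne (φ i) 0 with h | h
    · simp [h]
    · rw [expect_eq_sum_div_card, ← sum_filter, sum_const, nsmul_eq_mul, mul_div_right_comm]
      exact mul_le_mul_of_nonneg_right
        ((div_le_iff₀ (card_powerBall_pos (by linarith) (by positivity))).2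
          (card_powerBall_abs_sin_le hq hκ hL hLκ h (hφ i) j)) (sq_nonneg _)
  simp only [resonantMass, expect_sum_comm]
  calc _ ≤ ∑ _j : Fin d, ∑ i, 4800001 / L ^ 2 * φ i ^ 2 :=
        sum_le_sum fun j _ ↦ sum_le_sum fun i _ ↦ hentry j i
    _ = 4800001 / L ^ 2 * (d * ∑ i, φ i ^ 2) := by
        rw [sum_const, card_fin, nsmul_eq_mul, ← mul_sum]
        ring

lemma abs_cos_le_exp_neg_sin_sq (x : ℝ) : |Real.cos x| ≤ Real.exp (-(Real.sin x ^ 2 / 2)) := by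
  refine abs_le_of_sq_le_sq ?_ (Real.exp_pos _).le
  rw [← Real.exp_nat_mul, Real.cos_sq']
  refine (Real.one_sub_le_exp_neg _).trans_eq ?_
  congr 1
  push_cast
  ring

lemma abs_expect_perm_prod_cos_le_of_resonantMass_le {δ : ℝ} (hδ : 0 < δ) {φ : Fin d → ℝ}
    (hφ : 0 < ∑ i, φ i ^ 2) {y : Fin d → ℤ}
    (hy : resonantMass δ φ y ≤ d * (∑ i, φ i ^ 2) / 2) :
    |𝔼 π : Equiv.Perm (Fin d), ∏ j, Real.cos (y j * φ (π j))| ≤ 56 / (δ ^ 2 * ∑ i, φ i ^ 2) := by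
  have hd : (0 : ℝ) < d := by
    obtain ⟨i, -, -⟩ := exists_ne_zero_of_sum_ne_zero hφ.ne'
    exact Nat.cast_pos.2 i.pos
  set Φ := ∑ i, φ i ^ 2
  have hpoint (j i : Fin d) : δ ^ 2 / 2 *
      (φ i ^ 2 - if |Real.sin (y j * φ i)| ≤ δ * |φ i| then φ i ^ 2 else 0)
        ≤ Real.sin (y j * φ i) ^ 2 / 2 := by
    split_ifs with h
    · rw [sub_self, mul_zero]
      positivity
    · have hsq : (δ * |φ i|) ^ 2 ≤ |Real.sin (y j * φ i)| ^ 2 := by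
        gcongr
        exact (not_le.1 h).le
      rw [mul_pow, sq_abs, sq_abs] at hsq
      linarith
  have hmean : δ ^ 2 * Φ / 4 ≤ ∑ j, 𝔼 i, Real.sin (y j * φ i) ^ 2 / 2 := by
    simp only [Fintype.expect_eq_sum_div_card, Fintype.card_fin]
    rw [← sum_div, le_div_iff₀ hd]
    calc δ ^ 2 * Φ / 4 * d = δ ^ 2 / 2 * (d * Φ - d * Φ / 2) := by ring
      _ ≤ δ ^ 2 / 2 * (d * Φ - resonantMass δ φ y) := by gcongr
      _ = ∑ j, ∑ i, δ ^ 2 / 2 *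
            (φ i ^ 2 - if |Real.sin (y j * φ i)| ≤ δ * |φ i| then φ i ^ 2 else 0) := by
          simp only [← mul_sum, sum_sub_distrib, resonantMass, sum_const, card_fin, nsmul_eq_mul, Φ]
      _ ≤ ∑ j, ∑ i, Real.sin (y j * φ i) ^ 2 / 2 :=
          sum_le_sum fun j _ ↦ sum_le_sum fun i _ ↦ hpoint j i
  have hpos : 0 < δ ^ 2 * Φ / 4 := by positivity
  calc |𝔼 π : Equiv.Perm (Fin d), ∏ j, Real.cos (y j * φ (π j))|
      ≤ 𝔼 π : Equiv.Perm (Fin d), Real.exp (-∑ j, Real.sin (y j * φ (π j)) ^ 2 / 2) := by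
        refine (abs_expect_le _ _).trans (expect_le_expect fun π _ ↦ ?_)
        rw [abs_prod, ← sum_neg_distrib, Real.exp_sum]
        gcongr
        exact abs_cos_le_exp_neg_sin_sq _
    _ ≤ 14 / ∑ j, 𝔼 i, Real.sin (y j * φ i) ^ 2 / 2 :=
        expect_perm_exp_neg_sum_le (g := fun j i ↦ Real.sin (y j * φ i) ^ 2 / 2)
          (fun j i ↦ by positivity) (fun j i ↦ by linarith [Real.sin_sq_le_one (y j * φ i)])
          (hpos.trans_le hmean)
    _ ≤ 14 / (δ ^ 2 * Φ / 4) := by gcongr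
    _ = 56 / (δ ^ 2 * Φ) := by field_simp; norm_num

lemma abs_ballMultiplier_le_of_forall_abs_le (hq : 2 ≤ q) (hκ : 10000 ≤ κ) (hL : 1 ≤ L)
    (hLκ : L ^ 5 ≤ κ) {φ : Fin d → ℝ} (hφ : ∀ i, κ * |φ i| ≤ L ^ 2)
    (hφL : L ^ 12 ≤ κ ^ 2 * ∑ i, φ i ^ 2) :
    |ballMultiplier q d (d * κ ^ q) φ| ≤ 9600058 / L ^ 2 := by
  have : 0 < L := by linarith
  have : 0 < κ := by linarith
  have hΦ : 0 < ∑ i, φ i ^ 2 := by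
    by_contra! h
    have : 0 < L ^ 12 := by positivity
    nlinarith [sq_nonneg κ]
  have hd : (0 : ℝ) < d := by
    obtain ⟨i, -, -⟩ := exists_ne_zero_of_sum_ne_zero hΦ.ne'
    exact Nat.cast_pos.2 i.pos
  have hmarkov : 𝔼 y ∈ powerBall q d (d * κ ^ q), resonantMass (κ / L ^ 5) φ y
      ≤ 9600002 / L ^ 2 * (d * (∑ i, φ i ^ 2) / 2) :=
    (expect_resonantMass_le hq hκ hL hLκ hφ).trans_eq (by ring)
  have hgood : 56 / ((κ / L ^ 5) ^ 2 * ∑ i, φ i ^ 2) ≤ 56 / L ^ 2 := by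
    gcongr
    rw [div_pow, div_mul_eq_mul_div, le_div_iff₀ (by positivity)]
    calc L ^ 2 * (L ^ 5) ^ 2 = L ^ 12 := by ring
      _ ≤ κ ^ 2 * ∑ i, φ i ^ 2 := hφL
  calc |ballMultiplier q d (d * κ ^ q) φ| ≤ 9600002 / L ^ 2 + 56 / L ^ 2 :=
        abs_ballMultiplier_le_of_card_le (by linarith) (by positivity) (by positivity)
          (fun y ↦ d * (∑ i, φ i ^ 2) / 2 < resonantMass (κ / L ^ 5) φ y)
          (fun y _ hy ↦ (abs_expect_perm_prod_cos_le_of_resonantMass_le (by positivity) hΦ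
            (not_lt.1 hy)).trans hgood)
          (card_filter_lt_le_of_expect_le (fun y _ ↦ resonantMass_nonneg _ φ y) (by positivity)
            hmarkov)
    _ = 9600058 / L ^ 2 := by ring

end Resonance

section Shift

variable {q N : ℝ} {d : ℕ} {i : Fin d}

lemma norm_one_sub_mul_norm_sum_le {ι : Type*} [DecidableEq ι] (T : ι ↪ ι) {F : ι → ℂ} {c : ℂ}
    (hF : ∀ y, ‖F y‖ = 1) (hT : ∀ y, F (T y) = c * F y) (s : Finset ι) :
    ‖1 - c‖ * ‖∑ y ∈ s, F y‖ ≤ 2 * #(s \ s.map T) := by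
  have hnorm (u : Finset ι) : ‖∑ y ∈ u, F y‖ ≤ #u := by
    simpa [hF] using norm_sum_le u F
  have hcard : #(s.map T \ s) = #(s \ s.map T) := card_sdiff_comm (card_map T)
  calc ‖1 - c‖ * ‖∑ y ∈ s, F y‖ = ‖∑ y ∈ s \ s.map T, F y - ∑ y ∈ s.map T \ s, F y‖ := by
        rw [← norm_mul, sum_sdiff_sub_sum_sdiff, sum_map, sub_mul, one_mul, mul_sum]
        simp only [hT]
    _ ≤ #(s \ s.map T) + #(s.map T \ s) := (norm_sub_le _ _).trans (add_le_add (hnorm _) (hnorm _))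
    _ = 2 * #(s \ s.map T) := by rw [hcard, two_mul]

lemma update_mem_powerBall (hq : 0 < q) {y : Fin d → ℤ} (hy : y ∈ powerBall q d N) {a : ℤ}
    (ha : |a| ≤ |y i|) : Function.update y i a ∈ powerBall q d N := by
  rw [mem_powerBall hq] at hy ⊢
  have hpow : |(a : ℝ)| ^ q ≤ |(y i : ℝ)| ^ q :=
    Real.rpow_le_rpow (abs_nonneg _) (mod_cast ha) hq.le
  rw [sum_abs_rpow_update]
  linarith

lemma sub_single_mem_powerBall (hq : 0 < q) {y z : Fin d → ℤ} (hy : y ∈ powerBall q d N)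
    (hz : z ∈ powerBall q d N) (hyz : Function.update y i 0 = Function.update z i 0)
    (hlt : y i < z i) : z - Pi.single i 1 ∈ powerBall q d N := by
  have hz_sub : z - Pi.single i 1 = Function.update z i (z i - 1) := by
    ext j
    rcases eq_or_ne j i with rfl | hj <;> simp [*]
  have hy_sub : z - Pi.single i 1 = Function.update y i (z i - 1) := by
    rw [hz_sub, ← Function.update_idem 0 (z i - 1) z, ← hyz, Function.update_idem]
  rcases le_or_gt 1 (z i) with h | h
  · rw [hz_sub]
    exact update_mem_powerBall hq hz (by grind)
  · rw [hy_sub]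
    exact update_mem_powerBall hq hy (by grind)

/-- The translation of the lattice by one in the coordinate `i`, along which the sums defining
`ballMultiplier` are compared. -/
def coordShift (i : Fin d) : (Fin d → ℤ) ↪ (Fin d → ℤ) :=
  (Equiv.addRight (Pi.single i 1)).toEmbedding

lemma card_powerBall_sdiff_map_coordShift_le (hq : 0 < q) (i : Fin d) :
    #(powerBall q d N \ (powerBall q d N).map (coordShift i))
      ≤ #{y ∈ powerBall q d N | y i = 0} := by
  have hmax {y z : Fin d → ℤ} (hy : y ∈ powerBall q d N)
      (hz : z ∈ powerBall q d N \ (powerBall q d N).map (coordShift i))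
      (hyz : Function.update y i 0 = Function.update z i 0) : z i ≤ y i := by
    obtain ⟨hzB, hzT⟩ := mem_sdiff.1 hz
    by_contra! hlt
    exact hzT (mem_map.2 ⟨_, sub_single_mem_powerBall hq hy hzB hyz hlt, sub_add_cancel _ _⟩)
  refine card_le_card_of_injOn (Function.update · i 0) (fun y hy ↦ ?_) fun y hy z hz hyz ↦ ?_
  · exact mem_filter.2 ⟨update_mem_powerBall hq (mem_sdiff.1 hy).1 (by simp), by simp⟩
  · have hi : y i = z i := (hmax (mem_sdiff.1 hz).1 hy hyz.symm).antisymm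
      (hmax (mem_sdiff.1 hy).1 hz hyz)
    calc y = Function.update (Function.update y i 0) i (y i) := by simp
      _ = Function.update (Function.update z i 0) i (z i) := by
        rw [hi]
        exact congrArg (Function.update · i (z i)) hyz
      _ = z := by simp

lemma abs_ballMultiplier_mul_abs_sin_le (hq : 0 < q) (φ : Fin d → ℝ) (i : Fin d) :
    |ballMultiplier q d N φ| * |Real.sin (φ i / 2)| * #(powerBall q d N)
      ≤ #{y ∈ powerBall q d N | y i = 0} := by
  set F : (Fin d → ℤ) → ℂ := fun y ↦ ∏ j, Complex.exp (Complex.I * (y j * φ j))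
  have hF (y) : ‖F y‖ = 1 := by
    rw [norm_prod]
    exact prod_eq_one fun j _ ↦ mod_cast Complex.norm_exp_I_mul_ofReal (y j * φ j)
  have hshift (y) : F (coordShift i y) = Complex.exp (Complex.I * φ i) * F y := by
    have hsplit (j) : Complex.exp (Complex.I * (coordShift i y j * φ j))
        = Complex.exp (Complex.I * ((Pi.single i 1 : Fin d → ℤ) j * φ j))
          * Complex.exp (Complex.I * (y j * φ j)) := by
      rw [← Complex.exp_add]
      simp only [coordShift, Equiv.coe_toEmbedding, Equiv.coe_addRight, Pi.add_apply, Int.cast_add]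
      ring_nf
    simp only [F, hsplit]
    rw [prod_mul_distrib, Fintype.prod_eq_single i fun j hj ↦ by simp [hj]]
    simp
  have hsum : ‖∑ y ∈ powerBall q d N, F y‖ = #(powerBall q d N) * |ballMultiplier q d N φ| := by
    rw [← card_smul_expect, expect_powerBall_prod_exp hq, nsmul_eq_mul, norm_mul,
      Complex.norm_natCast, Complex.norm_real, Real.norm_eq_abs]
  have hnorm : ‖1 - Complex.exp (Complex.I * φ i)‖ = 2 * |Real.sin (φ i / 2)| := by
    rw [norm_sub_rev, Complex.norm_exp_I_mul_ofReal_sub_one, Real.norm_eq_abs, abs_mul, abs_two]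
  have hle := norm_one_sub_mul_norm_sum_le (coordShift i) hF hshift (powerBall q d N)
  rw [hnorm, hsum] at hle
  have hcard : (#(powerBall q d N \ (powerBall q d N).map (coordShift i)) : ℝ)
      ≤ #{y ∈ powerBall q d N | y i = 0} :=
    Nat.cast_le.2 (card_powerBall_sdiff_map_coordShift_le hq i)
  linarith

end Shift

lemma abs_ballMultiplier_le_of_le_sum_sin_sq {q κ L : ℝ} {d : ℕ} (hq : 2 ≤ q) (hκ : 10000 ≤ κ)
    (hL : 1 ≤ L) (hLκ : L ^ 5 ≤ κ) {φ : Fin d → ℝ} (hφ : ∀ i, |φ i| ≤ Real.pi)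
    (hφL : L ^ 12 ≤ κ ^ 2 * ∑ i, Real.sin (φ i / 2) ^ 2) :
    |ballMultiplier q d (d * κ ^ q) φ| ≤ 9600058 / L ^ 2 := by
  have : 0 < κ := by linarith
  have : 0 < L := by linarith
  by_cases hsmall : ∀ i, κ * |φ i| ≤ L ^ 2
  · refine abs_ballMultiplier_le_of_forall_abs_le hq hκ hL hLκ hsmall (hφL.trans ?_)
    gcongr κ ^ 2 * ∑ i, ?_ with i
    refine sq_le_sq.2 ((Real.abs_sin_le_abs).trans ?_)
    rw [abs_div, abs_two]
    exact half_le_self (abs_nonneg _)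
  · push Not at hsmall
    obtain ⟨i, hi⟩ := hsmall
    have hcard := card_powerBall_pos (q := q) (d := d) (N := d * κ ^ q) (by linarith)
      (by positivity)
    have hsin : |φ i| / 4 ≤ |Real.sin (φ i / 2)| := by
      have := Real.pi_pos
      calc |φ i| / 4 ≤ |φ i| / Real.pi := by gcongr; exact Real.pi_le_four
        _ = 2 / Real.pi * |φ i / 2| := by rw [abs_div, abs_two]; field_simp
        _ ≤ |Real.sin (φ i / 2)| :=
          Real.mul_abs_le_abs_sin (by rw [abs_div, abs_two]; linarith [hφ i])
    have hslice : |ballMultiplier q d (d * κ ^ q) φ| * |Real.sin (φ i / 2)| ≤ 240000 / κ := by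
      refine le_of_mul_le_mul_right ?_ hcard
      exact (abs_ballMultiplier_mul_abs_sin_le (by linarith) φ i).trans
        (card_powerBall_slice_le (by linarith) hκ i 0)
    have := abs_nonneg (ballMultiplier q d (d * κ ^ q) φ)
    refine le_trans ?_ (div_le_div_of_nonneg_right (by norm_num : (960000 : ℝ) ≤ _) (by positivity))
    rw [le_div_iff₀ (by positivity)]
    calc |ballMultiplier q d (d * κ ^ q) φ| * L ^ 2
        ≤ |ballMultiplier q d (d * κ ^ q) φ| * (κ * |φ i|) := by gcongr
      _ = 4 * κ * (|ballMultiplier q d (d * κ ^ q) φ| * (|φ i| / 4)) := by ring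
      _ ≤ 4 * κ * (240000 / κ) := by
        gcongr
        exact le_trans (by gcongr) hslice
      _ = 960000 := by field_simp; norm_num

/-! ### Lacunary sums of multiplier errors -/

section Lacunary

/-- A bump `min z z⁻ˢ` around `z = 1`, whose sums along lacunary sequences are bounded. -/
noncomputable def lacunaryBump (s z : ℝ) : ℝ := min z (z ^ (-s))

variable {s z ρ : ℝ}

lemma lacunaryBump_nonneg (s : ℝ) (hz : 0 ≤ z) : 0 ≤ lacunaryBump s z :=
  le_min hz (Real.rpow_nonneg hz _)

lemma lacunaryBump_of_le_one (hs : 0 < s) (hz : 0 ≤ z) (hz1 : z ≤ 1) : lacunaryBump s z = z := by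
  refine min_eq_left ?_
  rcases hz.eq_or_lt with rfl | hz0
  · exact Real.rpow_nonneg le_rfl _
  · exact hz1.trans (Real.one_le_rpow_of_pos_of_le_one_of_nonpos hz0 hz1 (by linarith))

lemma lacunaryBump_of_one_le (hs : 0 ≤ s) (hz : 1 ≤ z) : lacunaryBump s z = z ^ (-s) :=
  min_eq_right ((Real.rpow_le_one_of_one_le_of_nonpos hz (by linarith)).trans hz)

lemma inv_le_lacunaryBump (hs : 0 ≤ s) (hs1 : s ≤ 1) (hz : 1 ≤ z) : z⁻¹ ≤ lacunaryBump s z := by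
  rw [lacunaryBump_of_one_le hs hz, ← Real.rpow_neg_one]
  exact Real.rpow_le_rpow_of_exponent_le hz (by linarith)

lemma sum_lacunaryBump_le_rpow (hs : 0 < s) (hρ : 2 ≤ ρ) {a : ℝ} (ha : 0 ≤ a) (m : ℕ) :
    ∑ n ∈ range m, lacunaryBump s (a * ρ ^ n) ≤ (1 - 2 ^ (-s))⁻¹ * a ^ (-s) := by
  have hratio : (2 : ℝ) ^ (-s) < 1 := Real.rpow_lt_one_of_one_lt_of_neg (by norm_num) (by linarith)
  set c : ℝ := (1 - 2 ^ (-s))⁻¹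
  have : 0 < c := inv_pos.2 (by linarith)
  have hc_mul : c * (1 - 2 ^ (-s)) = 1 := inv_mul_cancel₀ (by linarith)
  induction m generalizing a with
  | zero => simp only [range_zero, sum_empty]; positivity
  | succ m ih =>
    rw [sum_range_succ', pow_zero, mul_one]
    simp only [pow_succ', ← mul_assoc]
    calc ∑ n ∈ range m, lacunaryBump s (a * ρ * ρ ^ n) + lacunaryBump s a
        ≤ c * (a * ρ) ^ (-s) + a ^ (-s) := add_le_add (ih (by positivity)) (min_le_right _ _)
      _ = c * (a ^ (-s) * ρ ^ (-s)) + a ^ (-s) := by rw [Real.mul_rpow ha (by linarith)]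
      _ ≤ c * (a ^ (-s) * 2 ^ (-s)) + c * (1 - 2 ^ (-s)) * a ^ (-s) := by
        rw [hc_mul, one_mul]
        gcongr 3
        exact Real.rpow_le_rpow_of_nonpos (by norm_num) hρ (by linarith)
      _ = c * a ^ (-s) := by ring

lemma sum_lacunaryBump_le (hs : 0 < s) (hρ : 2 ≤ ρ) {a : ℝ} (ha : 0 ≤ a) (m : ℕ) :
    ∑ n ∈ range m, lacunaryBump s (a * ρ ^ n) ≤ (1 - 2 ^ (-s))⁻¹ + 2 := by
  have hratio : (2 : ℝ) ^ (-s) < 1 := Real.rpow_lt_one_of_one_lt_of_neg (by norm_num) (by linarith)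
  set c : ℝ := (1 - 2 ^ (-s))⁻¹
  have hc : 0 < c := inv_pos.2 (by linarith)
  have hlarge {b : ℝ} (hb : 1 ≤ b) (k : ℕ) :
      ∑ n ∈ range k, lacunaryBump s (b * ρ ^ n) ≤ c :=
    (sum_lacunaryBump_le_rpow hs hρ (by linarith) k).trans <| mul_le_of_le_one_right hc.le <|
      Real.rpow_le_one_of_one_le_of_nonpos hb (by linarith)
  have hsmall (k : ℕ) : ∀ b : ℝ, 0 ≤ b → b ≤ 1 →
      ∑ n ∈ range k, lacunaryBump s (b * ρ ^ n) ≤ c + 2 - b := by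
    induction k with
    | zero => intro b _ _; simp only [range_zero, sum_empty]; linarith
    | succ k ih =>
      intro b hb hb1
      rw [sum_range_succ', pow_zero, mul_one, lacunaryBump_of_le_one hs hb hb1]
      simp only [pow_succ', ← mul_assoc]
      rcases le_total (b * ρ) 1 with h | h
      · nlinarith [ih (b * ρ) (by positivity) h]
      · linarith [hlarge h k]
  rcases le_total a 1 with h | h
  · linarith [hsmall m a ha h]
  · linarith [hlarge h m]

end Lacunary

section Cesaro

/-- The Cesàro mean of the first `K` powers of `1 - s`: the symbol of the average of the first `K`
steps of a Markov operator with symbol `1 - s`. -/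
noncomputable def cesaroMean (K : ℕ) (s : ℝ) : ℝ := 𝔼 k ∈ range K, (1 - s) ^ k

variable {K : ℕ} {s : ℝ}

lemma cesaroMean_nonneg (hs : s ≤ 1) : 0 ≤ cesaroMean K s :=
  expect_nonneg fun k _ ↦ pow_nonneg (by linarith) k

lemma cesaroMean_le_one (hK : 0 < K) (hs : 0 ≤ s) (hs1 : s ≤ 1) : cesaroMean K s ≤ 1 :=
  expect_le (nonempty_range_iff.2 hK.ne') fun _ _ ↦ pow_le_one₀ (by linarith) (by linarith)

lemma abs_cesaroMean_le_one (hK : 0 < K) (hs : 0 ≤ s) (hs1 : s ≤ 1) : |cesaroMean K s| ≤ 1 := by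
  rw [abs_of_nonneg (cesaroMean_nonneg hs1)]
  exact cesaroMean_le_one hK hs hs1

lemma abs_one_sub_cesaroMean_le (hK : 0 < K) (hs : 0 ≤ s) (hs1 : s ≤ 1) :
    |1 - cesaroMean K s| ≤ K * s := by
  have hbernoulli : 1 - K * s ≤ cesaroMean K s := by
    refine le_expect (nonempty_range_iff.2 hK.ne') fun k hk ↦ ?_
    have hkK : (k : ℝ) * s ≤ K * s := by
      gcongr
      exact (mem_range.1 hk).le
    have hpow := one_add_mul_le_pow (a := -s) (by linarith) k
    rw [← sub_eq_add_neg] at hpow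
    linarith
  rw [abs_of_nonneg (sub_nonneg.2 (cesaroMean_le_one hK hs hs1))]
  linarith

lemma cesaroMean_le_inv (hs : 0 < s) (hs1 : s ≤ 1) : cesaroMean K s ≤ (K * s)⁻¹ := by
  have hgeom : (∑ k ∈ range K, (1 - s) ^ k) * s ≤ 1 := by
    have hsum := geom_sum_mul_neg (1 - s) K
    rw [sub_sub_cancel] at hsum
    linarith [pow_nonneg (sub_nonneg.2 hs1) K]
  rw [cesaroMean, expect_eq_sum_div_card, card_range, mul_inv, mul_comm, ← div_eq_mul_inv]
  gcongr
  rwa [← one_div, le_div_iff₀ hs]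

end Cesaro

section MultiplierError

/-- The length of the Cesàro means that approximate `ballMultiplier q d (d * κ ^ q)`: the inverse of
the scale `1 / (d * min (κ ^ q) (κ ^ 2))` at which the multiplier varies. -/
noncomputable def cesaroLength (q : ℝ) (d : ℕ) (κ : ℝ) : ℕ := ⌈d * min (κ ^ q) (κ ^ 2)⌉₊

/-- The coefficient of the approximation of `ballMultiplier q d (d * κ ^ q)` near the antipodal
frequency `(π, …, π)`, which is needed for small radii only. -/
noncomputable def antipodalCoeff (q : ℝ) (d : ℕ) (κ : ℝ) : ℝ :=
  if κ ^ q ≤ 1 / 2 then ballMultiplier q d (d * κ ^ q) fun _ ↦ Real.pi else 0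

/-- The error in approximating `ballMultiplier q d (d * κ ^ q)` by Cesàro means adapted to the
frequencies `0` and `(π, …, π)`. -/
noncomputable def multiplierError (q : ℝ) (d : ℕ) (κ : ℝ) (φ : Fin d → ℝ) : ℝ :=
  ballMultiplier q d (d * κ ^ q) φ
    - cesaroMean (cesaroLength q d κ) ((∑ j, Real.sin (φ j / 2) ^ 2) / d)
    - antipodalCoeff q d κ * cesaroMean (cesaroLength q d κ) ((∑ j, Real.cos (φ j / 2) ^ 2) / d)

variable {q κ : ℝ} {d : ℕ}

lemma sum_sin_sq_add_sum_cos_sq (φ : Fin d → ℝ) :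
    ∑ j, Real.sin (φ j / 2) ^ 2 + ∑ j, Real.cos (φ j / 2) ^ 2 = d := by
  simp [← sum_add_distrib, Real.sin_sq_add_cos_sq]

lemma min_rpow_sq_of_le_one (hq : 2 ≤ q) (hκ : 0 < κ) (hκ1 : κ ≤ 1) :
    min (κ ^ q) (κ ^ 2) = κ ^ q :=
  min_eq_left (Real.rpow_two κ ▸ Real.rpow_le_rpow_of_exponent_ge hκ hκ1 hq)

lemma min_rpow_sq_of_one_le (hq : 2 ≤ q) (hκ : 1 ≤ κ) : min (κ ^ q) (κ ^ 2) = κ ^ 2 :=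
  min_eq_right (Real.rpow_two κ ▸ Real.rpow_le_rpow_of_exponent_le hκ hq)

lemma one_le_mul_min_rpow_sq (hq : 2 ≤ q) (hκ : 0 < κ) (hd : 0 < d) (hN : 1 ≤ d * κ ^ q) :
    1 ≤ d * min (κ ^ q) (κ ^ 2) := by
  rcases le_total κ 1 with h | h
  · rwa [min_rpow_sq_of_le_one hq hκ h]
  · rw [min_rpow_sq_of_one_le hq h]
    exact one_le_mul_of_one_le_of_one_le (Nat.one_le_cast.2 hd) (one_le_pow₀ h)

lemma cesaroLength_pos (hκ : 0 < κ) (hd : 0 < d) : 0 < cesaroLength q d κ := by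
  have : (0 : ℝ) < d := Nat.cast_pos.2 hd
  exact Nat.ceil_pos.2 (by positivity)

lemma abs_one_sub_cesaroMean_cesaroLength_le (hq : 2 ≤ q) (hκ : 0 < κ) (hd : 0 < d)
    (hN : 1 ≤ d * κ ^ q) {S : ℝ} (hS : 0 ≤ S) (hSd : S ≤ d) :
    |1 - cesaroMean (cesaroLength q d κ) (S / d)| ≤ 2 * (min (κ ^ q) (κ ^ 2) * S) := by
  have hd0 : (0 : ℝ) < d := Nat.cast_pos.2 hd
  have hlength : (cesaroLength q d κ : ℝ) ≤ 2 * (d * min (κ ^ q) (κ ^ 2)) := by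
    have hceil : (cesaroLength q d κ : ℝ) < d * min (κ ^ q) (κ ^ 2) + 1 :=
      Nat.ceil_lt_add_one (by positivity)
    linarith [one_le_mul_min_rpow_sq hq hκ hd hN]
  calc |1 - cesaroMean (cesaroLength q d κ) (S / d)| ≤ cesaroLength q d κ * (S / d) :=
        abs_one_sub_cesaroMean_le (cesaroLength_pos hκ hd) (by positivity) ((div_le_one hd0).2 hSd)
    _ ≤ 2 * (d * min (κ ^ q) (κ ^ 2)) * (S / d) := by gcongr
    _ = 2 * (min (κ ^ q) (κ ^ 2) * S) := by field_simp

lemma abs_cesaroMean_cesaroLength_le (hκ : 0 < κ) (hd : 0 < d) {S : ℝ} (hS : 0 < S)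
    (hSd : S ≤ d) :
    |cesaroMean (cesaroLength q d κ) (S / d)| ≤ (min (κ ^ q) (κ ^ 2) * S)⁻¹ := by
  have hd0 : (0 : ℝ) < d := Nat.cast_pos.2 hd
  have hSd1 : S / d ≤ 1 := (div_le_one hd0).2 hSd
  rw [abs_of_nonneg (cesaroMean_nonneg hSd1)]
  refine (cesaroMean_le_inv (by positivity) hSd1).trans (inv_anti₀ (by positivity) ?_)
  calc min (κ ^ q) (κ ^ 2) * S = d * min (κ ^ q) (κ ^ 2) * (S / d) := by field_simp
    _ ≤ cesaroLength q d κ * (S / d) := by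
      gcongr
      exact Nat.le_ceil _

lemma abs_antipodalCoeff_le_one (hq : 0 < q) (hκ : 0 ≤ κ) : |antipodalCoeff q d κ| ≤ 1 := by
  unfold antipodalCoeff
  split_ifs
  · exact abs_ballMultiplier_le_one hq (by positivity) _
  · simp

lemma abs_multiplierError_le_three (hq : 0 < q) (hκ : 0 < κ) (hd : 0 < d) (φ : Fin d → ℝ) :
    |multiplierError q d κ φ| ≤ 3 := by
  have hd0 : (0 : ℝ) < d := Nat.cast_pos.2 hd
  have hadd := sum_sin_sq_add_sum_cos_sq φ
  have hsin : 0 ≤ ∑ j, Real.sin (φ j / 2) ^ 2 := sum_nonneg fun _ _ ↦ sq_nonneg _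
  have hcos : 0 ≤ ∑ j, Real.cos (φ j / 2) ^ 2 := sum_nonneg fun _ _ ↦ sq_nonneg _
  have hmean {S : ℝ} (hS : 0 ≤ S) (hSd : S ≤ d) :
      |cesaroMean (cesaroLength q d κ) (S / d)| ≤ 1 :=
    abs_cesaroMean_le_one (cesaroLength_pos hκ hd) (by positivity) ((div_le_one hd0).2 hSd)
  have hanti : |antipodalCoeff q d κ
      * cesaroMean (cesaroLength q d κ) ((∑ j, Real.cos (φ j / 2) ^ 2) / d)| ≤ 1 := by
    rw [abs_mul]
    exact mul_le_one₀ (abs_antipodalCoeff_le_one hq hκ.le) (abs_nonneg _)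
      (hmean hcos (by linarith))
  calc |multiplierError q d κ φ| ≤ 1 + 1 + 1 := by
        refine (abs_sub _ _).trans (add_le_add ((abs_sub _ _).trans (add_le_add ?_ ?_)) hanti)
        · exact abs_ballMultiplier_le_one hq (by positivity) φ
        · exact hmean hsin (by linarith)
    _ = 3 := by norm_num

lemma ballMultiplier_zero (hq : 0 < q) {N : ℝ} (hN : 0 ≤ N) :
    (ballMultiplier q d N fun _ ↦ 0) = 1 := by
  simp [ballMultiplier, expect_const (powerBall_nonempty hq hN)]

lemma abs_sub_cesaroMean_le (hq : 2 ≤ q) (hκ : 0 < κ) (hκ1 : κ ≤ 1) (hd : 0 < d)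
    (hN : 1 ≤ d * κ ^ q) {S S' : ℝ} (hS : 0 ≤ S) (hSS' : S ≤ S') (hadd : S + S' = d)
    {M B β γ : ℝ} (hB : 0 ≤ B) (hβ : |β| ≤ 1) (hγ : |γ| ≤ 1) (hnear : |M - β| ≤ 4 * (κ ^ q * S))
    (hfar : 0 < S → |M| ≤ B + 304 * (κ ^ q * S)⁻¹) :
    |M - β * cesaroMean (cesaroLength q d κ) (S / d) - γ * cesaroMean (cesaroLength q d κ) (S' / d)|
      ≤ B + 2 * (d * κ ^ q)⁻¹ + 305 * lacunaryBump (1 / 6) (κ ^ q * S) := by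
  have hκq : 0 < κ ^ q := by positivity
  have hmin := min_rpow_sq_of_le_one hq hκ hκ1
  set A := cesaroMean (cesaroLength q d κ) (S / d)
  set A' := cesaroMean (cesaroLength q d κ) (S' / d)
  have hd0 : (0 : ℝ) < d := Nat.cast_pos.2 hd
  have hmul {a b : ℝ} (ha : |a| ≤ 1) : |a * b| ≤ |b| :=
    (abs_mul a b).trans_le (mul_le_of_le_one_left (abs_nonneg b) ha)
  have hA' : |γ * A'| ≤ 2 * (d * κ ^ q)⁻¹ := by
    refine (hmul hγ).trans ((abs_cesaroMean_cesaroLength_le hκ hd (by linarith)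
      (by linarith)).trans ?_)
    rw [hmin]
    calc (κ ^ q * S')⁻¹ ≤ (κ ^ q * (d / 2))⁻¹ := by
          gcongr
          linarith
      _ = 2 * (d * κ ^ q)⁻¹ := by field_simp
  suffices hmain : |M - β * A| ≤ B + 305 * lacunaryBump (1 / 6) (κ ^ q * S) by
    linarith [abs_sub (M - β * A) (γ * A')]
  rcases le_or_gt (κ ^ q * S) 1 with h | h
  · rw [lacunaryBump_of_le_one (by norm_num) (by positivity) h]
    have hA : |β * (1 - A)| ≤ 2 * (κ ^ q * S) :=
      (hmul hβ).trans <| hmin ▸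
        abs_one_sub_cesaroMean_cesaroLength_le hq hκ hd hN hS (by linarith)
    calc |M - β * A| = |M - β + β * (1 - A)| := by ring_nf
      _ ≤ 4 * (κ ^ q * S) + 2 * (κ ^ q * S) := (abs_add_le _ _).trans (add_le_add hnear hA)
      _ ≤ B + 305 * (κ ^ q * S) := by linarith [mul_nonneg hκq.le hS]
  · have hS0 : 0 < S := pos_of_mul_pos_right (zero_lt_one.trans h) hκq.le
    have hA : |β * A| ≤ (κ ^ q * S)⁻¹ :=
      (hmul hβ).trans <| hmin ▸ abs_cesaroMean_cesaroLength_le hκ hd hS0 (by linarith)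
    calc |M - β * A| ≤ B + 304 * (κ ^ q * S)⁻¹ + (κ ^ q * S)⁻¹ :=
          (abs_sub _ _).trans (add_le_add (hfar hS0) hA)
      _ = B + 305 * (κ ^ q * S)⁻¹ := by ring
      _ ≤ B + 305 * lacunaryBump (1 / 6) (κ ^ q * S) := by
        gcongr
        exact inv_le_lacunaryBump (by norm_num) (by norm_num) h.le

lemma abs_multiplierError_le_of_rpow_le_half (hq : 2 ≤ q) (hκ : 0 < κ) (hκq : κ ^ q ≤ 1 / 2)
    (hN : 4 ≤ d * κ ^ q) (φ : Fin d → ℝ) :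
    |multiplierError q d κ φ| ≤ (1 + 64 * ∑' a : ℤ, |(a : ℝ)| ^ (-q)) * κ ^ q
      + 2 * (d * κ ^ q)⁻¹ + 305 * lacunaryBump (1 / 6)
        (κ ^ q * min (∑ j, Real.sin (φ j / 2) ^ 2) (∑ j, Real.cos (φ j / 2) ^ 2)) := by
  have hκ1 : κ ≤ 1 := by
    by_contra! h
    linarith [Real.one_le_rpow h.le (by linarith : 0 ≤ q)]
  have hmin := min_rpow_sq_of_le_one hq hκ hκ1
  have hd : 0 < d := by
    by_contra! h
    simp only [Nat.le_zero.1 h, Nat.cast_zero, zero_mul] at hN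
    linarith
  have hd0 : (0 : ℝ) < d := Nat.cast_pos.2 hd
  have hfar {S : ℝ} (hS : S = min (∑ j, Real.sin (φ j / 2) ^ 2) (∑ j, Real.cos (φ j / 2) ^ 2))
      (hS0 : 0 < S) : |ballMultiplier q d (d * κ ^ q) φ|
        ≤ (1 + 64 * ∑' a : ℤ, |(a : ℝ)| ^ (-q)) * κ ^ q + 304 * (κ ^ q * S)⁻¹ := by
    have hle := abs_ballMultiplier_le_of_le (q := q) (by linarith) hN (by nlinarith) (hS ▸ hS0)
    rwa [mul_div_cancel_left₀ _ hd0.ne', ← hS, div_eq_mul_inv 304] at hle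
  have hB : 0 ≤ (1 + 64 * ∑' a : ℤ, |(a : ℝ)| ^ (-q)) * κ ^ q := by
    have : 0 ≤ ∑' a : ℤ, |(a : ℝ)| ^ (-q) := tsum_nonneg fun a ↦ abs_rpow_nonneg _ a
    positivity
  have hadd := sum_sin_sq_add_sum_cos_sq φ
  have hsin : 0 ≤ ∑ j, Real.sin (φ j / 2) ^ 2 := sum_nonneg fun _ _ ↦ sq_nonneg _
  have hcos : 0 ≤ ∑ j, Real.cos (φ j / 2) ^ 2 := sum_nonneg fun _ _ ↦ sq_nonneg _
  have hq0 : 0 < q := by linarith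
  have hN0 : 0 ≤ d * κ ^ q := by positivity
  have hanti := abs_antipodalCoeff_le_one (q := q) (d := d) (κ := κ) (by linarith) hκ.le
  have hnear {θ : ℝ} (hθ : Real.sin θ = 0) := abs_ballMultiplier_sub_le hq hκ hθ φ
  simp only [hmin] at hnear
  rcases le_total (∑ j, Real.sin (φ j / 2) ^ 2) (∑ j, Real.cos (φ j / 2) ^ 2) with h | h
  · rw [min_eq_left h] at hfar ⊢
    rw [multiplierError, ← one_mul (cesaroMean _ ((∑ j, Real.sin (φ j / 2) ^ 2) / d))]
    refine abs_sub_cesaroMean_le hq hκ hκ1 hd (by linarith) hsin h hadd hB (by simp) hanti ?_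
      (hfar rfl)
    simpa [ballMultiplier_zero (d := d) hq0 hN0, mul_assoc] using hnear Real.sin_zero
  · rw [min_eq_right h] at hfar ⊢
    rw [multiplierError, sub_right_comm,
      ← one_mul (cesaroMean _ ((∑ j, Real.sin (φ j / 2) ^ 2) / d))]
    refine abs_sub_cesaroMean_le hq hκ hκ1 hd (by linarith) hcos h (by linarith) hB hanti
      (by simp) ?_ (hfar rfl)
    rw [antipodalCoeff, if_pos hκq]
    simpa [sub_div, Real.sin_sub_pi_div_two, mul_assoc] using hnear Real.sin_pi

lemma abs_ballMultiplier_le_min_rpow (hq : 2 ≤ q) (hκ : 10000 ≤ κ) {φ : Fin d → ℝ}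
    (hφ : ∀ i, |φ i| ≤ Real.pi) (hS : 1 ≤ κ ^ 2 * ∑ j, Real.sin (φ j / 2) ^ 2) :
    |ballMultiplier q d (d * κ ^ q) φ|
      ≤ 9600058 * min κ (κ ^ 2 * ∑ j, Real.sin (φ j / 2) ^ 2) ^ (-(1 / 6) : ℝ) := by
  set z := κ ^ 2 * ∑ j, Real.sin (φ j / 2) ^ 2
  have hmin : 1 ≤ min κ z := le_min (by linarith) hS
  have hmin0 : 0 ≤ min κ z := by linarith
  set L := min κ z ^ (1 / 12 : ℝ)
  have hL : 1 ≤ L := Real.one_le_rpow hmin (by norm_num)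
  have hL12 : L ^ 12 = min κ z := by
    rw [← Real.rpow_natCast, ← Real.rpow_mul hmin0]
    norm_num
  have hL2 : (L ^ 2)⁻¹ = min κ z ^ (-(1 / 6) : ℝ) := by
    rw [← Real.rpow_natCast, ← Real.rpow_mul hmin0, ← Real.rpow_neg hmin0]
    norm_num
  rw [← hL2, ← div_eq_mul_inv]
  refine abs_ballMultiplier_le_of_le_sum_sin_sq hq hκ hL ?_ hφ (hL12.trans_le (min_le_right _ _))
  calc L ^ 5 ≤ L ^ 12 := pow_le_pow_right₀ hL (by norm_num)
    _ ≤ κ := hL12.trans_le (min_le_left _ _)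

lemma abs_multiplierError_le_of_large (hq : 2 ≤ q) (hd : 0 < d) (hκ : 10000 ≤ κ) {φ : Fin d → ℝ}
    (hφ : ∀ i, |φ i| ≤ Real.pi) :
    |multiplierError q d κ φ| ≤ 9600059 * (lacunaryBump (1 / 6) κ
      + lacunaryBump (1 / 6) (κ ^ 2 * ∑ j, Real.sin (φ j / 2) ^ 2)) := by
  have hκ0 : 0 < κ := by linarith
  have hκ1 : 1 ≤ κ := by linarith
  have hκq : 1 ≤ κ ^ q := Real.one_le_rpow hκ1 (by linarith)
  have hmin := min_rpow_sq_of_one_le hq hκ1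
  have hN : 1 ≤ d * κ ^ q := one_le_mul_of_one_le_of_one_le (Nat.one_le_cast.2 hd) hκq
  have hS : 0 ≤ ∑ j, Real.sin (φ j / 2) ^ 2 := sum_nonneg fun _ _ ↦ sq_nonneg _
  have hSd : ∑ j, Real.sin (φ j / 2) ^ 2 ≤ d := by
    have hcos : 0 ≤ ∑ j, Real.cos (φ j / 2) ^ 2 := sum_nonneg fun _ _ ↦ sq_nonneg _
    linarith [sum_sin_sq_add_sum_cos_sq φ]
  have hbump := lacunaryBump_nonneg (1 / 6) hκ0.le
  rw [multiplierError, antipodalCoeff, if_neg (by linarith), zero_mul, sub_zero]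
  set A := cesaroMean (cesaroLength q d κ) ((∑ j, Real.sin (φ j / 2) ^ 2) / d)
  set S := ∑ j, Real.sin (φ j / 2) ^ 2
  rcases le_or_gt (κ ^ 2 * S) 1 with h | h
  · rw [lacunaryBump_of_le_one (z := κ ^ 2 * S) (by norm_num) (by positivity) h]
    have hnear : |ballMultiplier q d (d * κ ^ q) φ - 1| ≤ 4 * (κ ^ 2 * S) := by
      simpa [ballMultiplier_zero (by linarith : 0 < q) (by linarith : 0 ≤ d * κ ^ q), hmin,
        mul_assoc] using abs_ballMultiplier_sub_le hq hκ0 Real.sin_zero φ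
    have hmean := abs_one_sub_cesaroMean_cesaroLength_le hq hκ0 hd hN hS hSd
    rw [hmin] at hmean
    linarith [abs_sub_le (ballMultiplier q d (d * κ ^ q) φ) 1 A, mul_nonneg (sq_nonneg κ) hS]
  · have hS0 : 0 < S := pos_of_mul_pos_right (zero_lt_one.trans h) (sq_nonneg κ)
    have hmean := abs_cesaroMean_cesaroLength_le (q := q) hκ0 hd hS0 hSd
    rw [hmin] at hmean
    have hmult := abs_ballMultiplier_le_min_rpow hq hκ hφ h.le
    have hbump' := inv_le_lacunaryBump (s := 1 / 6) (by norm_num) (by norm_num) h.le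
    have hpow : min κ (κ ^ 2 * S) ^ (-(1 / 6) : ℝ)
        ≤ lacunaryBump (1 / 6) κ + lacunaryBump (1 / 6) (κ ^ 2 * S) := by
      rw [lacunaryBump_of_one_le (by norm_num) hκ1, lacunaryBump_of_one_le (by norm_num) h.le]
      rcases min_choice κ (κ ^ 2 * S) with hm | hm <;> rw [hm]
      · exact le_add_of_nonneg_right (by positivity)
      · exact le_add_of_nonneg_left (by positivity)
    linarith [abs_sub (ballMultiplier q d (d * κ ^ q) φ) A]

/-- The constant in the pointwise bound `abs_multiplierError_le`. -/
noncomputable def multiplierErrorConst (q : ℝ) : ℝ := 10 ^ 7 + 64 * ∑' a : ℤ, |(a : ℝ)| ^ (-q)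

lemma le_multiplierErrorConst (q : ℝ) : 10 ^ 7 ≤ multiplierErrorConst q :=
  le_add_of_nonneg_right <| mul_nonneg (by norm_num) <| tsum_nonneg fun a ↦ abs_rpow_nonneg _ a

lemma one_div_le_lacunaryBump (hq : 1 ≤ q) (hκ : 0 < κ) (hκq : 1 / 2 ≤ κ ^ q) (hle : κ ≤ 10000) :
    1 / 10000 ≤ lacunaryBump (1 / 6) κ := by
  rcases le_total κ 1 with h | h
  · rw [lacunaryBump_of_le_one (by norm_num) hκ.le h]
    linarith [Real.rpow_le_self_of_le_one hκ.le h hq]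
  · refine le_trans ?_ (inv_le_lacunaryBump (by norm_num) (by norm_num) h)
    rw [← one_div]
    exact one_div_le_one_div_of_le hκ hle

lemma abs_multiplierError_le (hq : 2 ≤ q) (hκ : 0 < κ) (hd : 0 < d) (hN : 1 ≤ d * κ ^ q)
    {φ : Fin d → ℝ} (hφ : ∀ i, |φ i| ≤ Real.pi) :
    |multiplierError q d κ φ| ≤ multiplierErrorConst q *
      (lacunaryBump (1 / 6) κ + lacunaryBump (1 / 6) (d * κ ^ q)
        + lacunaryBump (1 / 6)
          (κ ^ q * min (∑ j, Real.sin (φ j / 2) ^ 2) (∑ j, Real.cos (φ j / 2) ^ 2))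
        + lacunaryBump (1 / 6) (κ ^ 2 * ∑ j, Real.sin (φ j / 2) ^ 2)) := by
  have hsin : 0 ≤ ∑ j, Real.sin (φ j / 2) ^ 2 := sum_nonneg fun _ _ ↦ sq_nonneg _
  have hcos : 0 ≤ ∑ j, Real.cos (φ j / 2) ^ 2 := sum_nonneg fun _ _ ↦ sq_nonneg _
  set m := min (∑ j, Real.sin (φ j / 2) ^ 2) (∑ j, Real.cos (φ j / 2) ^ 2)
  have : 0 ≤ m := le_min hsin hcos
  have hC := le_multiplierErrorConst q
  have h₁ := lacunaryBump_nonneg (1 / 6) hκ.le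
  have h₂ := lacunaryBump_nonneg (1 / 6) (by positivity : 0 ≤ d * κ ^ q)
  have h₃ := lacunaryBump_nonneg (1 / 6) (by positivity : 0 ≤ κ ^ q * m)
  have h₄ := lacunaryBump_nonneg (1 / 6)
    (by positivity : 0 ≤ κ ^ 2 * ∑ j, Real.sin (φ j / 2) ^ 2)
  have hthree := abs_multiplierError_le_three (by linarith : 0 < q) hκ hd φ
  have hinv := inv_le_lacunaryBump (s := 1 / 6) (by norm_num) (by norm_num) hN
  by_cases hN4 : d * κ ^ q < 4
  · have hquarter : 4⁻¹ ≤ (d * κ ^ q)⁻¹ := inv_anti₀ (by positivity) hN4.le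
    nlinarith
  by_cases hhalf : κ ^ q ≤ 1 / 2
  · have hle := abs_multiplierError_le_of_rpow_le_half hq hκ hhalf (not_lt.1 hN4) φ
    have hκ1 : κ ≤ 1 := by
      by_contra! h
      linarith [Real.one_le_rpow h.le (by linarith : 0 ≤ q)]
    have hκq : κ ^ q ≤ lacunaryBump (1 / 6) κ := by
      rw [lacunaryBump_of_le_one (by norm_num) hκ.le hκ1]
      exact Real.rpow_le_self_of_le_one hκ.le hκ1 (by linarith)
    have hconst : 1 + 64 * ∑' a : ℤ, |(a : ℝ)| ^ (-q) ≤ multiplierErrorConst q := by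
      unfold multiplierErrorConst
      linarith
    have hfirst := mul_le_mul hconst hκq (by positivity) (by linarith)
    nlinarith
  by_cases hlarge : 10000 ≤ κ
  · have hle := abs_multiplierError_le_of_large hq hd hlarge hφ
    nlinarith
  have hmiddle := one_div_le_lacunaryBump (by linarith) hκ (not_le.1 hhalf).le (not_le.1 hlarge).le
  nlinarith

lemma sum_sq_multiplierError_le (hq : 2 ≤ q) (hκ : 0 < κ) (hd : 0 < d) (hN : 1 ≤ d * κ ^ q)
    {φ : Fin d → ℝ} (hφ : ∀ i, |φ i| ≤ Real.pi) (m : ℕ) :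
    ∑ n ∈ range m, multiplierError q d (κ * 2 ^ n) φ ^ 2
      ≤ 12 * multiplierErrorConst q * ((1 - 2 ^ (-(1 / 6) : ℝ))⁻¹ + 2) := by
  set S := ∑ j, Real.sin (φ j / 2) ^ 2
  set S' := ∑ j, Real.cos (φ j / 2) ^ 2
  have hS : 0 ≤ S := sum_nonneg fun _ _ ↦ sq_nonneg _
  have hS' : 0 ≤ S' := sum_nonneg fun _ _ ↦ sq_nonneg _
  have h2q : (2 : ℝ) ≤ 2 ^ q := Real.self_le_rpow_of_one_le (by norm_num) (by linarith)
  have hsum {a ρ : ℝ} (ha : 0 ≤ a) (hρ : 2 ≤ ρ) :=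
    sum_lacunaryBump_le (s := 1 / 6) (by norm_num) hρ ha m
  have hC := le_multiplierErrorConst q
  have hpow (n : ℕ) : (κ * 2 ^ n) ^ q = κ ^ q * (2 ^ q) ^ n := by
    rw [Real.mul_rpow hκ.le (by positivity), Real.rpow_pow_comm (by norm_num)]
  have hpow_sq (n : ℕ) : (κ * 2 ^ n) ^ 2 = κ ^ 2 * 4 ^ n := by
    rw [mul_pow, ← pow_mul, mul_comm n, pow_mul]
    norm_num
  have hterm (n : ℕ) : multiplierError q d (κ * 2 ^ n) φ ^ 2 ≤ 3 * multiplierErrorConst q *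
      (lacunaryBump (1 / 6) (κ * 2 ^ n) + lacunaryBump (1 / 6) (d * κ ^ q * (2 ^ q) ^ n)
        + lacunaryBump (1 / 6) (κ ^ q * min S S' * (2 ^ q) ^ n)
        + lacunaryBump (1 / 6) (κ ^ 2 * S * 4 ^ n)) := by
    have hκn : 0 < κ * 2 ^ n := by positivity
    have hNn : 1 ≤ d * (κ * 2 ^ n) ^ q := by
      rw [hpow, ← mul_assoc]
      exact one_le_mul_of_one_le_of_one_le hN (one_le_pow₀ (by linarith))
    have hthree := abs_multiplierError_le_three (by linarith : 0 < q) hκn hd φ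
    have hle := abs_multiplierError_le hq hκn hd hNn hφ
    rw [hpow, hpow_sq, ← mul_assoc, mul_right_comm (κ ^ q), mul_right_comm (κ ^ 2)] at hle
    calc multiplierError q d (κ * 2 ^ n) φ ^ 2
        = |multiplierError q d (κ * 2 ^ n) φ| * |multiplierError q d (κ * 2 ^ n) φ| := by
          rw [← sq, sq_abs]
      _ ≤ 3 * _ := mul_le_mul hthree hle (abs_nonneg _) (by norm_num)
      _ = _ := (mul_assoc _ _ _).symm
  refine (sum_le_sum fun n _ ↦ hterm n).trans ?_
  rw [← mul_sum, sum_add_distrib, sum_add_distrib, sum_add_distrib]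
  have h₁ := hsum hκ.le le_rfl
  have h₂ := hsum (by positivity : 0 ≤ d * κ ^ q) h2q
  have h₃ := hsum (mul_nonneg (Real.rpow_nonneg hκ.le q) (le_min hS hS')) h2q
  have h₄ := hsum (mul_nonneg (sq_nonneg κ) hS) (by norm_num : (2 : ℝ) ≤ 4)
  nlinarith

end MultiplierError

/-! ### Square functions on the lattice -/

section Plancherel

open MeasureTheory
open scoped AddMonoidAlgebra

variable {G ι : Type*} [Fintype ι]

/-- The squared `ℓ²` norm of a finitely supported function, encoded as an element of a group
algebra so that the product is convolution. -/
noncomputable def l2NormSq (a : ℝ[G]) : ℝ := ∑ x ∈ a.coeff.support, a.coeff x ^ 2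

lemma sum_sq_coeff_le_l2NormSq (a : ℝ[G]) (s : Finset G) :
    ∑ x ∈ s, a.coeff x ^ 2 ≤ l2NormSq a := by
  rw [l2NormSq, ← sum_filter_ne_zero (s := s)]
  refine sum_le_sum_of_subset_of_nonneg (fun x hx ↦ ?_) fun _ _ _ ↦ sq_nonneg _
  exact Finsupp.mem_support_iff.2 (pow_ne_zero_iff two_ne_zero |>.1 (mem_filter.1 hx).2)

/-- The normalized Haar measure on the torus. Mathlib's measure on `UnitAddTorus` is only a local
instance. -/
noncomputable def torusMeasure (ι : Type*) [Fintype ι] : Measure (UnitAddTorus ι) :=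
  Measure.pi fun _ ↦ AddCircle.haarAddCircle

instance : IsProbabilityMeasure (torusMeasure ι) := by
  unfold torusMeasure
  infer_instance

/-- The Fourier series of a finitely supported function, i.e. the multiplier of the convolution
operator that it defines. -/
noncomputable def symbol (ι : Type*) [Fintype ι] : ℝ[ι → ℤ] →ₐ[ℝ] C(UnitAddTorus ι, ℂ) :=
  AddMonoidAlgebra.lift ℝ _ (ι → ℤ)
    { toFun := fun x ↦ UnitAddTorus.mFourier x.toAdd
      map_one' := UnitAddTorus.mFourier_zero
      map_mul' := fun _ _ ↦ by ext; exact UnitAddTorus.mFourier_add }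

lemma symbol_eq_sum (a : ℝ[ι → ℤ]) :
    symbol ι a = ∑ x ∈ a.coeff.support, (a.coeff x : ℂ) • UnitAddTorus.mFourier x :=
  AddMonoidAlgebra.lift_apply _ _

lemma symbol_single (x : ι → ℤ) (r : ℝ) :
    symbol ι (.single x r) = r • UnitAddTorus.mFourier x :=
  AddMonoidAlgebra.lift_single _ _ _

lemma integral_sq_norm_symbol (a : ℝ[ι → ℤ]) :
    ∫ t, ‖symbol ι a t‖ ^ 2 ∂torusMeasure ι = l2NormSq a := by
  have hsum : ∑ x ∈ a.coeff.support, (a.coeff x : ℂ) • UnitAddTorus.mFourierLp 2 x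
      = ContinuousMap.toLp (E := ℂ) 2 (torusMeasure ι) ℂ (symbol ι a) := by
    rw [symbol_eq_sum, map_sum]
    simp only [map_smul]
    rfl
  have hparseval := UnitAddTorus.orthonormal_mFourier.inner_sum
    (fun x ↦ (a.coeff x : ℂ)) (fun x ↦ (a.coeff x : ℂ)) a.coeff.support
  simp only [hsum] at hparseval
  have hintegral := (ContinuousMap.inner_toLp (torusMeasure ι) _ _).symm.trans hparseval
  simp only [Complex.mul_conj', Complex.conj_mul', Complex.norm_real, Real.norm_eq_abs,
    ← Complex.ofReal_pow, sq_abs, ← Complex.ofReal_sum] at hintegral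
  exact Complex.ofReal_injective (integral_complex_ofReal.symm.trans hintegral)

lemma sum_l2NormSq_mul_le {α : Type*} (s : Finset α) (E : α → ℝ[ι → ℤ]) {C : ℝ}
    (hE : ∀ t, ∑ n ∈ s, ‖symbol ι (E n) t‖ ^ 2 ≤ C) (f : ℝ[ι → ℤ]) :
    ∑ n ∈ s, l2NormSq (E n * f) ≤ C * l2NormSq f := by
  have h_sq (a : ℝ[ι → ℤ]) : Integrable (fun t ↦ ‖symbol ι a t‖ ^ 2) (torusMeasure ι) :=
    Continuous.integrable_of_hasCompactSupport (by fun_prop) (HasCompactSupport.of_compactSpace _)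
  simp only [← integral_sq_norm_symbol]
  rw [← integral_finsetSum _ fun n _ ↦ h_sq _, ← integral_const_mul]
  refine integral_mono (integrable_finsetSum _ fun n _ ↦ h_sq _) ((h_sq f).const_mul C) fun t ↦ ?_
  simp only [map_mul, ContinuousMap.mul_apply, norm_mul, mul_pow, ← sum_mul]
  exact mul_le_mul_of_nonneg_right (hE t) (sq_nonneg _)

end Plancherel

section ConvolutionKernels

open scoped AddMonoidAlgebra

variable {ι : Type*}

/-- The point of the torus with angles `φ`. -/
noncomputable def torusPoint (φ : ι → ℝ) : UnitAddTorus ι := fun i ↦ (φ i / (2 * Real.pi) : ℝ)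

lemma exists_torusPoint_eq (t : UnitAddTorus ι) :
    ∃ φ : ι → ℝ, (∀ i, |φ i| ≤ Real.pi) ∧ torusPoint φ = t := by
  choose y hy using fun i ↦ QuotientAddGroup.mk_surjective (t i)
  have hpi := Real.pi_pos
  refine ⟨fun i ↦ 2 * Real.pi * (y i - round (y i)), fun i ↦ ?_, funext fun i ↦ ?_⟩
  · rw [abs_mul, abs_of_pos (by positivity)]
    nlinarith [abs_sub_round (y i)]
  · rw [torusPoint, mul_div_cancel_left₀ _ (by positivity), AddCircle.coe_sub,
      (AddCircle.coe_eq_zero_iff 1 (x := (round (y i) : ℝ))).2 ⟨round (y i), zsmul_one _⟩, sub_zero]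
    exact hy i

lemma mFourier_torusPoint [Fintype ι] (x : ι → ℤ) (φ : ι → ℝ) :
    UnitAddTorus.mFourier x (torusPoint φ) = ∏ i, Complex.exp (Complex.I * (x i * φ i)) := by
  refine prod_congr rfl fun i _ ↦ ?_
  rw [torusPoint, fourier_coe_apply]
  congr 1
  have : (Real.pi : ℂ) ≠ 0 := by exact_mod_cast Real.pi_ne_zero
  push_cast
  field_simp

/-- The average of the first `K` powers of `a`. -/
noncomputable def ergodicAverage {A : Type*} [Semiring A] [Algebra ℝ A] (a : A) (K : ℕ) : A :=
  (K : ℝ)⁻¹ • ∑ k ∈ range K, a ^ k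

/-- The uniform probability distribution on `powerBall q d N`. -/
noncomputable def ballMeasure (q : ℝ) (d : ℕ) (N : ℝ) : ℝ[Fin d → ℤ] :=
  ((powerBall q d N).card : ℝ)⁻¹ • ∑ y ∈ powerBall q d N, .single y 1

/-- The step distribution of the lazy simple random walk for `ε = 1`. For `ε = -1` it is twisted
by the character with frequency `(π, …, π)`. -/
noncomputable def lazyWalk (d : ℕ) (ε : ℝ) : ℝ[Fin d → ℤ] :=
  (d : ℝ)⁻¹ • ∑ i, (.single 0 (1 / 2) + .single (Pi.single i 1) (ε / 4)
    + .single (-Pi.single i 1) (ε / 4))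

/-- The convolution kernel with symbol `multiplierError q d κ`. -/
noncomputable def ballError (q : ℝ) (d : ℕ) (κ : ℝ) : ℝ[Fin d → ℤ] :=
  ballMeasure q d (d * κ ^ q) - ergodicAverage (lazyWalk d 1) (cesaroLength q d κ)
    - antipodalCoeff q d κ • ergodicAverage (lazyWalk d (-1)) (cesaroLength q d κ)

variable {q κ : ℝ} {d : ℕ}

lemma symbol_ballMeasure (hq : 0 < q) (N : ℝ) (φ : Fin d → ℝ) :
    symbol (Fin d) (ballMeasure q d N) (torusPoint φ) = ballMultiplier q d N φ := by
  rw [← expect_powerBall_prod_exp hq, expect_eq_sum_div_card, ballMeasure, map_smul, map_sum]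
  simp only [symbol_single, one_smul, ContinuousMap.smul_apply, ContinuousMap.sum_apply,
    mFourier_torusPoint, Complex.real_smul]
  push_cast
  rw [inv_mul_eq_div]

lemma symbol_ergodicAverage {a : ℝ[Fin d → ℤ]} {t : UnitAddTorus (Fin d)} {s : ℝ}
    (ha : symbol (Fin d) a t = ((1 - s : ℝ) : ℂ)) (K : ℕ) :
    symbol (Fin d) (ergodicAverage a K) t = cesaroMean K s := by
  rw [ergodicAverage, cesaroMean, expect_eq_sum_div_card, map_smul, map_sum]
  simp only [map_pow, ContinuousMap.smul_apply, ContinuousMap.sum_apply, ContinuousMap.pow_apply,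
    ha, Complex.real_smul, card_range]
  push_cast
  rw [inv_mul_eq_div]

lemma symbol_lazyWalk (ε : ℝ) (φ : Fin d → ℝ) :
    symbol (Fin d) (lazyWalk d ε) (torusPoint φ)
      = (((∑ j, (1 + ε * Real.cos (φ j)) / 2) / d : ℝ) : ℂ) := by
  have hcharacter : ∀ i, UnitAddTorus.mFourier (Pi.single i 1) (torusPoint φ)
      = Complex.exp (φ i * Complex.I) := fun i ↦ by
    rw [mFourier_torusPoint, prod_eq_single i (fun j _ hj ↦ by simp [hj]) (by simp)]
    simp [mul_comm]
  rw [lazyWalk, map_smul, map_sum]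
  simp only [map_add, symbol_single, ContinuousMap.smul_apply, ContinuousMap.sum_apply,
    ContinuousMap.add_apply, UnitAddTorus.mFourier_neg, UnitAddTorus.mFourier_zero, hcharacter,
    ContinuousMap.one_apply, Complex.real_smul, add_assoc, ← mul_add, Complex.add_conj,
    Complex.exp_ofReal_mul_I_re]
  push_cast
  rw [inv_mul_eq_div]
  congr 1
  exact sum_congr rfl fun j _ ↦ by ring

lemma symbol_lazyWalk_one (hd : 0 < d) (φ : Fin d → ℝ) :
    symbol (Fin d) (lazyWalk d 1) (torusPoint φ)
      = ((1 - (∑ j, Real.sin (φ j / 2) ^ 2) / d : ℝ) : ℂ) := by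
  have : (d : ℝ) ≠ 0 := by exact_mod_cast hd.ne'
  have hcos : ∀ j, (1 + 1 * Real.cos (φ j)) / 2 = 1 - Real.sin (φ j / 2) ^ 2 := fun j ↦ by
    rw [Real.sin_sq_eq_half_sub, mul_div_cancel₀ _ two_ne_zero]
    ring
  simp only [symbol_lazyWalk, hcos, sum_sub_distrib, sum_const, card_univ, Fintype.card_fin,
    nsmul_one, sub_div, div_self this]

lemma symbol_lazyWalk_neg_one (hd : 0 < d) (φ : Fin d → ℝ) :
    symbol (Fin d) (lazyWalk d (-1)) (torusPoint φ)
      = ((1 - (∑ j, Real.cos (φ j / 2) ^ 2) / d : ℝ) : ℂ) := by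
  have : (d : ℝ) ≠ 0 := by exact_mod_cast hd.ne'
  have hcos : ∀ j, (1 + -1 * Real.cos (φ j)) / 2 = 1 - Real.cos (φ j / 2) ^ 2 := fun j ↦ by
    rw [Real.cos_sq, mul_div_cancel₀ _ two_ne_zero]
    ring
  simp only [symbol_lazyWalk, hcos, sum_sub_distrib, sum_const, card_univ, Fintype.card_fin,
    nsmul_one, sub_div, div_self this]

lemma symbol_ballError (hq : 0 < q) (hd : 0 < d) (φ : Fin d → ℝ) :
    symbol (Fin d) (ballError q d κ) (torusPoint φ) = multiplierError q d κ φ := by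
  simp only [ballError, multiplierError, map_sub, map_smul, ContinuousMap.sub_apply,
    ContinuousMap.smul_apply, symbol_ballMeasure hq, Complex.real_smul, Complex.ofReal_sub,
    Complex.ofReal_mul, symbol_ergodicAverage (symbol_lazyWalk_one hd φ),
    symbol_ergodicAverage (symbol_lazyWalk_neg_one hd φ)]

/-- The constant in the square function estimate for `ballError`. -/
noncomputable def squareFunctionConst (q : ℝ) : ℝ :=
  12 * multiplierErrorConst q * ((1 - 2 ^ (-(1 / 6) : ℝ))⁻¹ + 2)

lemma sum_l2NormSq_ballError_mul_le (hq : 2 ≤ q) (hκ : 0 < κ) (hd : 0 < d) (hN : 1 ≤ d * κ ^ q)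
    (m : ℕ) (f : ℝ[Fin d → ℤ]) :
    ∑ n ∈ range m, l2NormSq (ballError q d (κ * 2 ^ n) * f)
      ≤ squareFunctionConst q * l2NormSq f := by
  refine sum_l2NormSq_mul_le _ _ (fun t ↦ ?_) f
  obtain ⟨φ, hφ, rfl⟩ := exists_torusPoint_eq t
  simp only [symbol_ballError (by linarith : 0 < q) hd, Complex.norm_real, Real.norm_eq_abs,
    sq_abs]
  exact sum_sq_multiplierError_le hq hκ hd hN hφ m

end ConvolutionKernels

/-! ### The maximal ergodic theorem for convolution powers -/

section LayerCake

lemma intervalIntegrable_indicator_le {φ : ℝ → ℝ} (hφ : Continuous φ) (c a b : ℝ) :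
    IntervalIntegrable ({l | l ≤ c}.indicator φ) MeasureTheory.volume a b :=
  ⟨(hφ.intervalIntegrable a b).1.indicator measurableSet_Iic,
    (hφ.intervalIntegrable a b).2.indicator measurableSet_Iic⟩

lemma sum_sq_le_of_weak_type {X : Type*} {s : Finset X} {f F : X → ℝ} (hF : ∀ x ∈ s, 0 ≤ F x)
    (hweak : ∀ l : ℝ, 0 < l → ∑ x ∈ s with l ≤ F x, l ≤ ∑ x ∈ s with l ≤ F x, f x) :
    ∑ x ∈ s, F x ^ 2 ≤ 4 * ∑ x ∈ s, f x ^ 2 := by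
  have hmem : ∀ x ∈ s, F x ∈ Set.Icc 0 (∑ y ∈ s, F y) :=
    fun x hx ↦ ⟨hF x hx, single_le_sum hF hx⟩
  have hlayers : ∀ φ : X → ℝ → ℝ, (∀ x, Continuous (φ x)) →
      ∫ l in 0..∑ y ∈ s, F y, ∑ x ∈ s, {l | l ≤ F x}.indicator (φ x) l
        = ∑ x ∈ s, ∫ l in 0..F x, φ x l := fun φ hφ ↦ by
    rw [intervalIntegral.integral_finsetSum
      fun x _ ↦ intervalIntegrable_indicator_le (hφ x) _ _ _]
    exact sum_congr rfl fun x hx ↦ intervalIntegral.integral_indicator (hmem x hx)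
  have hintegrable : ∀ φ : X → ℝ → ℝ, (∀ x, Continuous (φ x)) →
      IntervalIntegrable (fun l ↦ ∑ x ∈ s, {l | l ≤ F x}.indicator (φ x) l)
        MeasureTheory.volume 0 (∑ y ∈ s, F y) := fun φ hφ ↦ by
    simpa only [sum_fn] using IntervalIntegrable.sum s
      fun x _ ↦ intervalIntegrable_indicator_le (hφ x) (F x) 0 (∑ y ∈ s, F y)
  have hlayer : ∑ x ∈ s, F x ^ 2 / 2 ≤ ∑ x ∈ s, F x * f x := by
    have h := intervalIntegral.integral_mono_on_of_le_Ioo (sum_nonneg hF)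
      (hintegrable (fun _ l ↦ l) fun _ ↦ continuous_id)
      (hintegrable (fun x _ ↦ f x) fun _ ↦ continuous_const) fun l hl ↦ by
        simpa only [Set.indicator_apply, Set.mem_ofPred_eq, ← sum_filter] using hweak l hl.1
    rw [hlayers (fun _ l ↦ l) fun _ ↦ continuous_id,
      hlayers (fun x _ ↦ f x) fun _ ↦ continuous_const] at h
    simpa using h
  have hamgm : ∑ x ∈ s, F x * f x ≤ ∑ x ∈ s, (F x ^ 2 / 4 + f x ^ 2) :=
    sum_le_sum fun x _ ↦ by linarith [sq_nonneg (F x / 2 - f x)]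
  rw [sum_add_distrib, ← sum_div] at hamgm
  rw [← sum_div] at hlayer
  linarith

end LayerCake

section MaximalErgodic

open scoped AddMonoidAlgebra

variable {G : Type*} [AddGroup G] {P a b f g : ℝ[G]}

/-- The sum of all coefficients. -/
noncomputable def mass : ℝ[G] →ₐ[ℝ] ℝ := AddMonoidAlgebra.lift ℝ ℝ G 1

lemma mass_single (x : G) (r : ℝ) : mass (.single x r : ℝ[G]) = r := by
  simp [mass]

lemma mass_eq_sum {s : Finset G} (hs : a.coeff.support ⊆ s) : mass a = ∑ x ∈ s, a.coeff x := by
  rw [mass, AddMonoidAlgebra.lift_apply, Finsupp.sum_of_support_subset _ hs _ (by simp)]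
  simp

lemma coeff_mul_eq_sum {s : Finset G} (hs : a.coeff.support ⊆ s) (f : ℝ[G]) (x : G) :
    (a * f).coeff x = ∑ y ∈ s, a.coeff y * f.coeff (-y + x) := by
  rw [AddMonoidAlgebra.coeff_mul_apply_left, Finsupp.sum_of_support_subset _ hs _ (by simp)]

lemma abs_coeff_mul_le (hab : ∀ x, |a.coeff x| ≤ b.coeff x) (hfg : ∀ x, |f.coeff x| ≤ g.coeff x)
    (x : G) : |(a * f).coeff x| ≤ (b * g).coeff x := by
  classical
  rw [coeff_mul_eq_sum (subset_union_left (s₂ := b.coeff.support)),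
    coeff_mul_eq_sum (subset_union_right (s₁ := a.coeff.support))]
  refine (abs_sum_le_sum_abs _ _).trans (sum_le_sum fun y _ ↦ ?_)
  rw [abs_mul]
  exact mul_le_mul (hab y) (hfg _) (abs_nonneg _) ((abs_nonneg _).trans (hab y))

lemma abs_coeff_pow_le (hab : ∀ x, |a.coeff x| ≤ b.coeff x) (k : ℕ) (x : G) :
    |(a ^ k).coeff x| ≤ (b ^ k).coeff x := by
  classical
  induction k generalizing x with
  | zero =>
    rw [pow_zero, pow_zero, AddMonoidAlgebra.one_def, AddMonoidAlgebra.coeff_single,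
      Finsupp.single_apply]
    split_ifs <;> simp
  | succ k ih =>
    rw [pow_succ, pow_succ]
    exact abs_coeff_mul_le ih hab x

lemma coeff_ergodicAverage (a : ℝ[G]) (K : ℕ) (x : G) :
    (ergodicAverage a K).coeff x = (K : ℝ)⁻¹ * ∑ k ∈ range K, (a ^ k).coeff x := by
  rw [ergodicAverage, AddMonoidAlgebra.coeff_smul_apply, AddMonoidAlgebra.coeff_sum,
    Finsupp.finsetSum_apply, smul_eq_mul]

lemma abs_coeff_ergodicAverage_le (hab : ∀ x, |a.coeff x| ≤ b.coeff x) (K : ℕ) (x : G) :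
    |(ergodicAverage a K).coeff x| ≤ (ergodicAverage b K).coeff x := by
  rw [coeff_ergodicAverage, coeff_ergodicAverage, abs_mul, abs_of_nonneg (by positivity)]
  gcongr
  exact (abs_sum_le_sum_abs _ _).trans (sum_le_sum fun k _ ↦ abs_coeff_pow_le hab k x)

lemma ergodicAverage_zero (a : ℝ[G]) : ergodicAverage a 0 = 0 := by
  simp [ergodicAverage]

lemma succ_smul_ergodicAverage (a : ℝ[G]) (K : ℕ) :
    ((K + 1 : ℕ) : ℝ) • ergodicAverage a (K + 1) = 1 + a * ((K : ℝ) • ergodicAverage a K) := by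
  have hsum : ∀ K : ℕ, (K : ℝ) • ergodicAverage a K = ∑ k ∈ range K, a ^ k := fun K ↦ by
    rcases eq_or_ne K 0 with rfl | hK
    · simp
    · rw [ergodicAverage, smul_inv_smul₀ (by exact_mod_cast hK)]
  simp only [hsum, sum_range_succ', pow_succ', mul_sum, pow_zero, add_comm]

/-- Nonnegative distributions on a group of total mass at most one. Convolution with such a
distribution is a positive contraction. -/
structure IsSubprobability (P : ℝ[G]) : Prop where
  coeff_nonneg : ∀ x, 0 ≤ P.coeff x
  mass_le_one : mass P ≤ 1

lemma IsSubprobability.coeff_mul_le_add (hP : IsSubprobability P) {c : ℝ} (hc : 0 ≤ c)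
    (hfg : ∀ x, f.coeff x ≤ g.coeff x + c) (x : G) :
    (P * f).coeff x ≤ (P * g).coeff x + c := by
  rw [coeff_mul_eq_sum subset_rfl, coeff_mul_eq_sum subset_rfl]
  calc ∑ y ∈ P.coeff.support, P.coeff y * f.coeff (-y + x)
      ≤ ∑ y ∈ P.coeff.support, P.coeff y * (g.coeff (-y + x) + c) :=
        sum_le_sum fun y _ ↦ mul_le_mul_of_nonneg_left (hfg _) (hP.coeff_nonneg y)
    _ = ∑ y ∈ P.coeff.support, P.coeff y * g.coeff (-y + x) + mass P * c := by
        simp only [mul_add, sum_add_distrib, mass_eq_sum subset_rfl, sum_mul]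
    _ ≤ ∑ y ∈ P.coeff.support, P.coeff y * g.coeff (-y + x) + c := by
        gcongr
        exact mul_le_of_le_one_left hc hP.mass_le_one

/-- The maximal function of the averages of at most `K₀` convolution powers of `P`. The empty
average contributes the value zero. -/
noncomputable def ergodicMax (P f : ℝ[G]) (K₀ : ℕ) (x : G) : ℝ :=
  (range (K₀ + 1)).sup' nonempty_range_add_one fun K ↦ (ergodicAverage P K * f).coeff x

/-- The quantity `max_{K ≤ K₀} (S_K f - K l)`, where `S_K f` is the sum of the convolutions of `f`
with the first `K` powers of `P`. -/
noncomputable def ergodicExcess (P f : ℝ[G]) (l : ℝ) (K₀ : ℕ) (x : G) : ℝ :=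
  (range (K₀ + 1)).sup' nonempty_range_add_one
    fun K ↦ K * ((ergodicAverage P K * f).coeff x - l)

lemma coeff_ergodicAverage_mul_le_ergodicMax {K K₀ : ℕ} (hK : K ≤ K₀) (x : G) :
    (ergodicAverage P K * f).coeff x ≤ ergodicMax P f K₀ x :=
  le_sup' (fun K ↦ (ergodicAverage P K * f).coeff x) (mem_range_succ_iff.2 hK)

lemma ergodicMax_nonneg (P f : ℝ[G]) (K₀ : ℕ) (x : G) : 0 ≤ ergodicMax P f K₀ x := by
  simpa [ergodicAverage_zero]
    using coeff_ergodicAverage_mul_le_ergodicMax (P := P) (f := f) K₀.zero_le x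

lemma mul_sub_le_ergodicExcess {K K₀ : ℕ} (hK : K ≤ K₀) (l : ℝ) (x : G) :
    K * ((ergodicAverage P K * f).coeff x - l) ≤ ergodicExcess P f l K₀ x :=
  le_sup' (fun K : ℕ ↦ K * ((ergodicAverage P K * f).coeff x - l)) (mem_range_succ_iff.2 hK)

lemma ergodicExcess_nonneg (P f : ℝ[G]) (l : ℝ) (K₀ : ℕ) (x : G) :
    0 ≤ ergodicExcess P f l K₀ x := by
  simpa using mul_sub_le_ergodicExcess (P := P) (f := f) K₀.zero_le l x

lemma ergodicExcess_eq_zero_of_ergodicMax_lt {l : ℝ} {K₀ : ℕ} {x : G}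
    (h : ergodicMax P f K₀ x < l) : ergodicExcess P f l K₀ x = 0 := by
  refine le_antisymm (sup'_le _ _ fun K hK ↦ ?_) (ergodicExcess_nonneg P f l K₀ x)
  have := coeff_ergodicAverage_mul_le_ergodicMax (P := P) (f := f) (mem_range_succ_iff.1 hK) x
  exact mul_nonpos_of_nonneg_of_nonpos K.cast_nonneg (by linarith)

lemma finite_support_ergodicMax (P f : ℝ[G]) (K₀ : ℕ) :
    (Function.support (ergodicMax P f K₀)).Finite := by
  classical
  refine ((range (K₀ + 1)).biUnion
    fun K ↦ (ergodicAverage P K * f).coeff.support).finite_toSet.subset fun x hx ↦ ?_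
  obtain ⟨K, hK, hKx⟩ := exists_mem_eq_sup' (nonempty_range_add_one (n := K₀))
    fun K ↦ (ergodicAverage P K * f).coeff x
  exact mem_biUnion.2 ⟨K, hK, Finsupp.mem_support_iff.2 (hKx ▸ hx)⟩

lemma exists_coeff_eq_ergodicExcess (P f : ℝ[G]) {l : ℝ} (hl : 0 < l) (K₀ : ℕ) :
    ∃ H : ℝ[G], ∀ x, H.coeff x = ergodicExcess P f l K₀ x := by
  have hfin : (Function.support (ergodicExcess P f l K₀)).Finite := by
    refine (finite_support_ergodicMax P f K₀).subset fun x hx hmax ↦ hx ?_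
    exact ergodicExcess_eq_zero_of_ergodicMax_lt (hmax.trans_lt hl)
  exact ⟨.ofCoeff (Finsupp.ofSupportFinite _ hfin), fun _ ↦ rfl⟩

lemma IsSubprobability.succ_mul_sub_le (hP : IsSubprobability P) {l : ℝ} (hl : 0 ≤ l) {K₀ : ℕ}
    {H : ℝ[G]} (hH : ∀ x, H.coeff x = ergodicExcess P f l K₀ x) {K : ℕ} (hK : K ≤ K₀) (x : G) :
    (K + 1 : ℕ) * ((ergodicAverage P (K + 1) * f).coeff x - l)
      ≤ f.coeff x - l + (P * H).coeff x := by
  have hrec : (K + 1 : ℕ) * (ergodicAverage P (K + 1) * f).coeff x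
      = f.coeff x + (P * ((K : ℝ) • (ergodicAverage P K * f))).coeff x := by
    rw [← smul_eq_mul, ← AddMonoidAlgebra.coeff_smul_apply, ← smul_mul_assoc,
      succ_smul_ergodicAverage, add_mul, one_mul, mul_assoc, smul_mul_assoc]
    rfl
  have hdom := hP.coeff_mul_le_add (f := (K : ℝ) • (ergodicAverage P K * f)) (g := H)
    (mul_nonneg K.cast_nonneg hl) (fun y ↦ by
      have := mul_sub_le_ergodicExcess (P := P) (f := f) hK l y
      rw [AddMonoidAlgebra.coeff_smul_apply, smul_eq_mul, hH]
      linarith) x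
  rw [mul_sub, hrec]
  push_cast
  linarith

lemma IsSubprobability.ergodicExcess_le (hP : IsSubprobability P) {l : ℝ} (hl : 0 < l) {K₀ : ℕ}
    {H : ℝ[G]} (hH : ∀ x, H.coeff x = ergodicExcess P f l K₀ x) {x : G}
    (hx : l ≤ ergodicMax P f K₀ x) :
    ergodicExcess P f l K₀ x ≤ f.coeff x - l + (P * H).coeff x := by
  have hsucc := fun {K} hK ↦ hP.succ_mul_sub_le hl.le hH (K := K) hK x
  refine sup'_le _ _ fun K hK ↦ ?_
  rcases K with _ | K
  · obtain ⟨L, hL, hLx⟩ := (le_sup'_iff _).1 hx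
    rcases L with _ | L
    · simp only [ergodicAverage_zero, zero_mul, AddMonoidAlgebra.coeff_zero,
        Finsupp.zero_apply] at hLx
      linarith
    · rw [Nat.cast_zero, zero_mul]
      exact (mul_nonneg (Nat.cast_nonneg _) (sub_nonneg.2 hLx)).trans
        (hsucc (by have := mem_range.1 hL; omega))
  · exact hsucc (by have := mem_range.1 hK; omega)

-- Garsia's argument: sum the pointwise inequality `H ≤ f - l + P * H` over `{l ≤ ergodicMax}`.
lemma IsSubprobability.weak_type_ergodicMax (hP : IsSubprobability P) (f : ℝ[G]) (K₀ : ℕ)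
    {s : Finset G} (hs : ∀ x, ergodicMax P f K₀ x ≠ 0 → x ∈ s) {l : ℝ} (hl : 0 < l) :
    ∑ x ∈ s with l ≤ ergodicMax P f K₀ x, l
      ≤ ∑ x ∈ s with l ≤ ergodicMax P f K₀ x, f.coeff x := by
  classical
  obtain ⟨H, hH⟩ := exists_coeff_eq_ergodicExcess P f hl K₀
  have hH_zero : ∀ x, ¬ l ≤ ergodicMax P f K₀ x → H.coeff x = 0 := fun x hx ↦
    (hH x).trans (ergodicExcess_eq_zero_of_ergodicMax_lt (not_le.1 hx))
  have hH_nonneg : ∀ x, 0 ≤ H.coeff x := fun x ↦ hH x ▸ ergodicExcess_nonneg P f l K₀ x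
  have hPH_nonneg : ∀ x, 0 ≤ (P * H).coeff x := fun x ↦ by
    simpa using hP.coeff_mul_le_add le_rfl (f := 0) (g := H) (by simpa using hH_nonneg) x
  have hmassH : mass H = ∑ x ∈ s with l ≤ ergodicMax P f K₀ x, H.coeff x := by
    refine mass_eq_sum fun x hx ↦ ?_
    have hlx : l ≤ ergodicMax P f K₀ x := by
      by_contra hlx
      exact Finsupp.mem_support_iff.1 hx (hH_zero x hlx)
    exact mem_filter.2 ⟨hs x (by linarith), hlx⟩
  have hmassPH : ∑ x ∈ s with l ≤ ergodicMax P f K₀ x, (P * H).coeff x ≤ mass (P * H) := by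
    rw [mass_eq_sum (subset_union_right (s₁ := {x ∈ s | l ≤ ergodicMax P f K₀ x}))]
    exact sum_le_sum_of_subset_of_nonneg subset_union_left fun x _ _ ↦ hPH_nonneg x
  have hcontract : mass (P * H) ≤ mass H := by
    rw [map_mul]
    refine mul_le_of_le_one_left ?_ hP.mass_le_one
    rw [hmassH]
    exact sum_nonneg fun x _ ↦ hH_nonneg x
  have hsum : mass H ≤ ∑ x ∈ s with l ≤ ergodicMax P f K₀ x,
      (f.coeff x - l + (P * H).coeff x) := by
    rw [hmassH]
    refine sum_le_sum fun x hx ↦ ?_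
    rw [hH]
    exact hP.ergodicExcess_le hl hH (mem_filter.1 hx).2
  rw [sum_add_distrib, sum_sub_distrib] at hsum
  linarith

lemma IsSubprobability.sum_sq_ergodicMax_le (hP : IsSubprobability P) (f : ℝ[G]) (K₀ : ℕ)
    (s : Finset G) : ∑ x ∈ s, ergodicMax P f K₀ x ^ 2 ≤ 4 * l2NormSq f := by
  classical
  set u := s ∪ (finite_support_ergodicMax P f K₀).toFinset
  calc ∑ x ∈ s, ergodicMax P f K₀ x ^ 2 ≤ ∑ x ∈ u, ergodicMax P f K₀ x ^ 2 :=
        sum_le_sum_of_subset_of_nonneg subset_union_left fun _ _ _ ↦ sq_nonneg _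
    _ ≤ 4 * ∑ x ∈ u, f.coeff x ^ 2 :=
        sum_sq_le_of_weak_type (fun x _ ↦ ergodicMax_nonneg P f K₀ x) fun l hl ↦
          hP.weak_type_ergodicMax f K₀
            (fun x hx ↦ mem_union_right _ ((Set.Finite.mem_toFinset _).2 hx)) hl
    _ ≤ 4 * l2NormSq f := by
        gcongr
        exact sum_sq_coeff_le_l2NormSq f u

end MaximalErgodic

section LazyWalk

variable {d : ℕ}

lemma abs_coeff_lazyWalk_le {ε : ℝ} (hε : |ε| ≤ 1) (x : Fin d → ℤ) :
    |(lazyWalk d ε).coeff x| ≤ (lazyWalk d 1).coeff x := by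
  classical
  have hsingle : ∀ (z : Fin d → ℤ) {r r' : ℝ}, |r| ≤ r' →
      |Finsupp.single z r x| ≤ Finsupp.single z r' x := fun z r r' hr ↦ by
    rw [Finsupp.single_apply, Finsupp.single_apply]
    split_ifs
    exacts [hr, abs_zero.le]
  have hcoeff : ∀ ε : ℝ, (lazyWalk d ε).coeff x = (d : ℝ)⁻¹ * ∑ i, (Finsupp.single 0 (1 / 2) x
      + Finsupp.single (Pi.single i 1) (ε / 4) x
      + Finsupp.single (-Pi.single i 1) (ε / 4) x) := fun ε ↦ by
    simp only [lazyWalk, AddMonoidAlgebra.coeff_smul_apply, AddMonoidAlgebra.coeff_sum,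
      Finsupp.finsetSum_apply, AddMonoidAlgebra.coeff_add, Finsupp.add_apply,
      AddMonoidAlgebra.coeff_single, smul_eq_mul]
  have hquarter : |ε / 4| ≤ 1 / 4 := by
    rw [abs_div, abs_of_pos (four_pos (α := ℝ))]
    gcongr
  rw [hcoeff, hcoeff, abs_mul, abs_of_nonneg (by positivity)]
  gcongr
  refine (abs_sum_le_sum_abs _ _).trans (sum_le_sum fun i _ ↦ (abs_add_three _ _ _).trans ?_)
  exact add_le_add_three (hsingle _ (abs_of_nonneg (by norm_num)).le) (hsingle _ hquarter)
    (hsingle _ hquarter)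

lemma isSubprobability_lazyWalk (d : ℕ) : IsSubprobability (lazyWalk d 1) where
  coeff_nonneg x := (abs_nonneg _).trans (abs_coeff_lazyWalk_le abs_one.le x)
  mass_le_one := by
    have hstep : (1 / 2 + 1 / 4 + 1 / 4 : ℝ) = 1 := by norm_num
    simp only [lazyWalk, map_smul, map_sum, map_add, mass_single, hstep, sum_const, card_univ,
      Fintype.card_fin, nsmul_one, smul_eq_mul]
    exact inv_mul_le_one

end LazyWalk

/-! ### Dyadic maximal functions -/

section Linearization

open scoped AddMonoidAlgebra

variable {q κ : ℝ} {d : ℕ}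

/-- The constant in the `ℓ²` estimate for the dyadic maximal function. -/
noncomputable def maximalConst (q : ℝ) : ℝ := 2 * squareFunctionConst q + 32

lemma one_le_maximalConst (q : ℝ) : 1 ≤ maximalConst q := by
  have hmultiplier := le_multiplierErrorConst q
  have hratio : (2 : ℝ) ^ (-(1 / 6) : ℝ) ≤ 1 :=
    Real.rpow_le_one_of_one_le_of_nonpos one_le_two (by norm_num)
  have hinv : 0 ≤ (1 - 2 ^ (-(1 / 6) : ℝ) : ℝ)⁻¹ := inv_nonneg.2 (by linarith)
  have : 0 ≤ squareFunctionConst q := mul_nonneg (by linarith) (by linarith)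
  rw [maximalConst]
  linarith

lemma coeff_ballMeasure_mul (N : ℝ) (f : ℝ[Fin d → ℤ]) (x : Fin d → ℤ) :
    (ballMeasure q d N * f).coeff x = 𝔼 y ∈ powerBall q d N, f.coeff (x - y) := by
  simp only [ballMeasure, expect_eq_sum_div_card, smul_mul_assoc, sum_mul,
    AddMonoidAlgebra.coeff_smul_apply, AddMonoidAlgebra.coeff_sum, Finsupp.finsetSum_apply,
    AddMonoidAlgebra.coeff_single_mul_apply, one_mul, smul_eq_mul, inv_mul_eq_div,
    neg_add_eq_sub]

lemma sq_coeff_ballMeasure_mul_le (hq : 0 < q) (hκ : 0 ≤ κ) {f : ℝ[Fin d → ℤ]}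
    (hf : ∀ x, 0 ≤ f.coeff x) {K₀ : ℕ} (hK₀ : cesaroLength q d κ ≤ K₀) (x : Fin d → ℤ) :
    (ballMeasure q d (d * κ ^ q) * f).coeff x ^ 2
      ≤ 2 * (ballError q d κ * f).coeff x ^ 2 + 8 * ergodicMax (lazyWalk d 1) f K₀ x ^ 2 := by
  set K := cesaroLength q d κ
  set F := ergodicMax (lazyWalk d 1) f K₀ x
  have hdecomp : (ballMeasure q d (d * κ ^ q) * f).coeff x = (ballError q d κ * f).coeff x
      + ((ergodicAverage (lazyWalk d 1) K * f).coeff x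
        + antipodalCoeff q d κ * (ergodicAverage (lazyWalk d (-1)) K * f).coeff x) := by
    have hsplit : ballMeasure q d (d * κ ^ q) * f = ballError q d κ * f
        + (ergodicAverage (lazyWalk d 1) K * f
          + antipodalCoeff q d κ • (ergodicAverage (lazyWalk d (-1)) K * f)) := by
      rw [← smul_mul_assoc, ← add_mul, ← add_mul, ballError]
      congr 1
      abel
    rw [hsplit]
    rfl
  have hdom : ∀ ε : ℝ, |ε| ≤ 1 → |(ergodicAverage (lazyWalk d ε) K * f).coeff x| ≤ F :=
    fun ε hε ↦ (abs_coeff_mul_le (abs_coeff_ergodicAverage_le (abs_coeff_lazyWalk_le hε) K)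
      (fun y ↦ (abs_of_nonneg (hf y)).le) x).trans (coeff_ergodicAverage_mul_le_ergodicMax hK₀ x)
  have hmain : |(ergodicAverage (lazyWalk d 1) K * f).coeff x
      + antipodalCoeff q d κ * (ergodicAverage (lazyWalk d (-1)) K * f).coeff x| ≤ 2 * F := by
    rw [two_mul]
    refine (abs_add_le _ _).trans (add_le_add (hdom 1 abs_one.le) ?_)
    rw [abs_mul]
    exact (mul_le_of_le_one_left (abs_nonneg _) (abs_antipodalCoeff_le_one hq hκ)).trans
      (hdom (-1) (by simp))
  rw [hdecomp]
  refine (add_sq_le).trans ?_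
  linarith [sq_le_sq' (abs_le.1 hmain).1 (abs_le.1 hmain).2]

lemma sum_sq_coeff_ballMeasure_mul_le (hq : 2 ≤ q) (hκ : 0 < κ) (hd : 0 < d) (hN : 1 ≤ d * κ ^ q)
    {f : ℝ[Fin d → ℤ]} (hf : ∀ x, 0 ≤ f.coeff x) (s : Finset (Fin d → ℤ))
    (ν : (Fin d → ℤ) → ℕ) :
    ∑ x ∈ s, (ballMeasure q d (d * (κ * 2 ^ ν x) ^ q) * f).coeff x ^ 2
      ≤ maximalConst q * l2NormSq f := by
  set m := s.sup ν + 1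
  have hm : ∀ x ∈ s, ν x ∈ range m := fun x hx ↦ mem_range_succ_iff.2 (le_sup hx)
  set K₀ := (range m).sup fun n ↦ cesaroLength q d (κ * 2 ^ n)
  calc ∑ x ∈ s, (ballMeasure q d (d * (κ * 2 ^ ν x) ^ q) * f).coeff x ^ 2
      ≤ ∑ x ∈ s, (2 * ∑ n ∈ range m, (ballError q d (κ * 2 ^ n) * f).coeff x ^ 2
          + 8 * ergodicMax (lazyWalk d 1) f K₀ x ^ 2) := sum_le_sum fun x hx ↦ by
        refine (sq_coeff_ballMeasure_mul_le (by linarith) (by positivity) hf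
          (le_sup (f := fun n ↦ cesaroLength q d (κ * 2 ^ n)) (hm x hx)) x).trans ?_
        gcongr
        exact single_le_sum (f := fun n ↦ (ballError q d (κ * 2 ^ n) * f).coeff x ^ 2)
          (fun _ _ ↦ sq_nonneg _) (hm x hx)
    _ = 2 * ∑ n ∈ range m, ∑ x ∈ s, (ballError q d (κ * 2 ^ n) * f).coeff x ^ 2
          + 8 * ∑ x ∈ s, ergodicMax (lazyWalk d 1) f K₀ x ^ 2 := by
        rw [sum_add_distrib, ← mul_sum, ← mul_sum, sum_comm]
    _ ≤ 2 * (squareFunctionConst q * l2NormSq f) + 8 * (4 * l2NormSq f) := by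
        gcongr
        · exact (sum_le_sum fun n _ ↦ sum_sq_coeff_le_l2NormSq _ s).trans
            (sum_l2NormSq_ballError_mul_le hq hκ hd hN m f)
        · exact (isSubprobability_lazyWalk d).sum_sq_ergodicMax_le f K₀ s
    _ = maximalConst q * l2NormSq f := by
        rw [maximalConst]
        ring

lemma latticeBall_eq_powerBall (hq : 0 < q) {t : ℝ} (ht : 0 ≤ t) :
    latticeBall q d t = powerBall q d (t ^ q) := by
  ext x
  rw [mem_powerBall hq, latticeBall, mem_filter, and_iff_right_iff_imp]
  intro hx
  have hcoord : ∀ i, |x i| ≤ (⌈t⌉₊ : ℤ) := fun i ↦ by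
    have : |(x i : ℝ)| ≤ t := (Real.rpow_le_rpow_iff (abs_nonneg _) ht hq).1 <|
      (single_le_sum (fun j _ ↦ abs_rpow_nonneg q (x j)) (mem_univ i)).trans hx
    exact_mod_cast this.trans (Nat.le_ceil t)
  exact mem_Icc.2 ⟨fun i ↦ (abs_le.1 (hcoord i)).1, fun i ↦ (abs_le.1 (hcoord i)).2⟩

lemma latticeBall_nonempty (hq : 0 < q) {t : ℝ} (ht : 0 ≤ t) : (latticeBall q d t).Nonempty := by
  rw [latticeBall_eq_powerBall hq ht]
  exact powerBall_nonempty hq (by positivity)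

lemma exists_sum_sq_expect_latticeBall_le (hq : 2 ≤ q) (hd : 0 < d) {g : (Fin d → ℤ) → ℝ}
    (hg : ∀ x, 0 ≤ g x) (s : Finset (Fin d → ℤ)) (ν : (Fin d → ℤ) → ℕ) :
    ∃ u : Finset (Fin d → ℤ), ∑ x ∈ s, (𝔼 y ∈ latticeBall q d (2 ^ ν x), g (x - y)) ^ 2
      ≤ maximalConst q * ∑ x ∈ u, g x ^ 2 := by
  classical
  set u := s.biUnion fun x ↦ (latticeBall q d (2 ^ ν x)).image fun y ↦ x - y
  set f : ℝ[Fin d → ℤ] := .ofCoeff (.indicator u fun x _ ↦ g x)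
  have hf : ∀ x, f.coeff x = if x ∈ u then g x else 0 := fun x ↦ by
    simp [f, Finsupp.indicator_apply]
  have hf_nonneg : ∀ x, 0 ≤ f.coeff x := fun x ↦ by
    rw [hf]
    exact ite_nonneg (hg x) le_rfl
  have hsupport : f.coeff.support ⊆ u := fun x hx ↦ by
    by_contra hxu
    exact Finsupp.mem_support_iff.1 hx ((hf x).trans (if_neg hxu))
  have hnorm : l2NormSq f = ∑ x ∈ u, g x ^ 2 := by
    rw [l2NormSq, sum_subset hsupport fun x _ hx ↦ by
      rw [Finsupp.notMem_support_iff.1 hx, zero_pow two_ne_zero]]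
    exact sum_congr rfl fun x hx ↦ by rw [hf, if_pos hx]
  set κ : ℝ := (d : ℝ) ^ (-q⁻¹)
  have hκ (n : ℕ) : d * (κ * 2 ^ n) ^ q = (2 ^ n) ^ q := by
    have hd' : (0 : ℝ) < d := by exact_mod_cast hd
    rw [Real.mul_rpow (by positivity) (by positivity), ← Real.rpow_mul hd'.le, neg_mul,
      inv_mul_cancel₀ (by linarith), Real.rpow_neg_one, mul_inv_cancel_left₀ hd'.ne']
  refine ⟨u, hnorm ▸ le_of_eq_of_le (sum_congr rfl fun x hx ↦ ?_)
    (sum_sq_coeff_ballMeasure_mul_le hq (by positivity : 0 < κ) hd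
      (by simpa using (hκ 0).ge) hf_nonneg s ν)⟩
  rw [coeff_ballMeasure_mul, hκ, ← latticeBall_eq_powerBall (by linarith) (by positivity)]
  congr 1
  refine expect_congr rfl fun y hy ↦ ?_
  rw [hf, if_pos (mem_biUnion.2 ⟨x, hx, mem_image_of_mem _ hy⟩)]

end Linearization

section MaximalFunction

variable {q t : ℝ} {d : ℕ} {f : (Fin d → ℤ) → ℂ}

lemma norm_avgOp_le (q t : ℝ) (f : (Fin d → ℤ) → ℂ) (x : Fin d → ℤ) :
    ‖avgOp q d t f x‖ ≤ 𝔼 y ∈ latticeBall q d t, ‖f (x - y)‖ := by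
  rw [avgOp, norm_mul, norm_inv, Complex.norm_natCast, expect_eq_sum_div_card, inv_mul_eq_div]
  gcongr
  exact norm_sum_le _ _

lemma norm_avgOp_rpow_le (hq : 0 < q) (ht : 0 ≤ t) (f : (Fin d → ℤ) → ℂ) (x : Fin d → ℤ) {r : ℝ}
    (hr : 1 ≤ r) : ‖avgOp q d t f x‖ ^ r ≤ 𝔼 y ∈ latticeBall q d t, ‖f (x - y)‖ ^ r := by
  have hcard : (#(latticeBall q d t) : ℝ) ≠ 0 := by
    exact_mod_cast (latticeBall_nonempty hq ht).card_ne_zero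
  have hjensen := Real.rpow_arith_mean_le_arith_mean_rpow (latticeBall q d t)
    (fun _ ↦ (#(latticeBall q d t) : ℝ)⁻¹) (fun y ↦ ‖f (x - y)‖) (fun _ _ ↦ by positivity)
    (by rw [sum_const, nsmul_eq_mul, mul_inv_cancel₀ hcard]) (fun _ _ ↦ norm_nonneg _) hr
  rw [← mul_sum, ← mul_sum, inv_mul_eq_div, inv_mul_eq_div, ← expect_eq_sum_div_card,
    ← expect_eq_sum_div_card] at hjensen
  exact (Real.rpow_le_rpow (norm_nonneg _) (norm_avgOp_le q t f x) (by linarith)).trans hjensen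

lemma enorm_avgOp_le (hq : 0 < q) (ht : 0 ≤ t) {M : ℝ≥0∞} (hf : ∀ x, ‖f x‖ₑ ≤ M)
    (x : Fin d → ℤ) : ‖avgOp q d t f x‖ₑ ≤ M := by
  cases M with
  | top => exact le_top
  | coe M =>
    have hbound : ‖avgOp q d t f x‖ ≤ M := (norm_avgOp_le q t f x).trans <|
      expect_le (latticeBall_nonempty hq ht) fun y _ ↦ by exact_mod_cast hf (x - y)
    exact_mod_cast hbound

lemma sum_iSup_eq_iSup_sum {X ι : Type*} [Nonempty ι] (s : Finset X) (b : X → ι → ℝ≥0∞) :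
    ∑ x ∈ s, ⨆ i, b x i = ⨆ ν : X → ι, ∑ x ∈ s, b x (ν x) := by
  classical
  rw [← ENNReal.finsetSum_iSup fun ν μ ↦ ⟨fun x ↦ if b x (ν x) ≤ b x (μ x) then μ x else ν x,
    fun x ↦ ?_⟩]
  · exact sum_congr rfl fun x _ ↦
      ((Function.surjective_eval (β := fun _ ↦ ι) x).iSup_comp fun i ↦ b x i).symm
  · dsimp only
    split_ifs with h
    exacts [⟨h, le_rfl⟩, ⟨le_rfl, (not_le.1 h).le⟩]

lemma enorm_rpow_eq_ofReal (z : ℂ) {r : ℝ} (hr : 0 ≤ r) : ‖z‖ₑ ^ r = ENNReal.ofReal (‖z‖ ^ r) := by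
  rw [← ofReal_norm, ENNReal.ofReal_rpow_of_nonneg (norm_nonneg _) hr]

lemma sum_enorm_avgOp_rpow_le (hq : 2 ≤ q) (hd : 0 < d) {r : ℝ} (hr : 2 ≤ r)
    (f : (Fin d → ℤ) → ℂ) (s : Finset (Fin d → ℤ)) (ν : (Fin d → ℤ) → ℕ) :
    ∑ x ∈ s, ‖avgOp q d (2 ^ ν x) f x‖ₑ ^ r
      ≤ ENNReal.ofReal (maximalConst q) * ∑' x, ‖f x‖ₑ ^ r := by
  have hsq : ∀ z : ℂ, (‖z‖ ^ (r / 2)) ^ 2 = ‖z‖ ^ r := fun z ↦ by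
    rw [← Real.rpow_mul_natCast (norm_nonneg z), Nat.cast_ofNat, div_mul_cancel₀ _ two_ne_zero]
  obtain ⟨u, hu⟩ := exists_sum_sq_expect_latticeBall_le hq hd (g := fun x ↦ ‖f x‖ ^ (r / 2))
    (fun x ↦ by positivity) s ν
  have hreal : ∑ x ∈ s, ‖avgOp q d (2 ^ ν x) f x‖ ^ r ≤ maximalConst q * ∑ x ∈ u, ‖f x‖ ^ r := by
    simp only [hsq] at hu
    refine (sum_le_sum fun x _ ↦ ?_).trans hu
    rw [← hsq]
    gcongr
    exact norm_avgOp_rpow_le (by linarith) (by positivity) f x (by linarith)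
  have hofReal : ∀ (v : Finset (Fin d → ℤ)) (F : (Fin d → ℤ) → ℂ),
      ∑ x ∈ v, ‖F x‖ₑ ^ r = ENNReal.ofReal (∑ x ∈ v, ‖F x‖ ^ r) := fun v F ↦ by
    rw [ENNReal.ofReal_sum_of_nonneg fun _ _ ↦ by positivity]
    exact sum_congr rfl fun x _ ↦ enorm_rpow_eq_ofReal _ (by linarith)
  calc ∑ x ∈ s, ‖avgOp q d (2 ^ ν x) f x‖ₑ ^ r
      = ENNReal.ofReal (∑ x ∈ s, ‖avgOp q d (2 ^ ν x) f x‖ ^ r) := hofReal s _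
    _ ≤ ENNReal.ofReal (maximalConst q * ∑ x ∈ u, ‖f x‖ ^ r) := ENNReal.ofReal_le_ofReal hreal
    _ = ENNReal.ofReal (maximalConst q) * ∑ x ∈ u, ‖f x‖ₑ ^ r := by
        rw [ENNReal.ofReal_mul (by linarith [one_le_maximalConst q]), hofReal]
    _ ≤ ENNReal.ofReal (maximalConst q) * ∑' x, ‖f x‖ₑ ^ r := by
        gcongr
        exact ENNReal.sum_le_tsum u

lemma tsum_iSup_enorm_avgOp_rpow_le (hq : 2 ≤ q) (hd : 0 < d) {r : ℝ} (hr : 2 ≤ r)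
    (f : (Fin d → ℤ) → ℂ) :
    ∑' x, (⨆ n : ℕ, ‖avgOp q d (2 ^ n) f x‖ₑ) ^ r
      ≤ ENNReal.ofReal (maximalConst q) * ∑' x, ‖f x‖ₑ ^ r := by
  have hrpow : ∀ b : ℕ → ℝ≥0∞, (⨆ n, b n) ^ r = ⨆ n, b n ^ r :=
    (ENNReal.orderIsoRpow r (by linarith)).map_iSup
  rw [ENNReal.tsum_eq_iSup_sum]
  simp only [hrpow, sum_iSup_eq_iSup_sum]
  exact iSup₂_le fun s ν ↦ sum_enorm_avgOp_rpow_le hq hd hr f s ν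

end MaximalFunction

end DyadicMaximal

theorem stmt1 (q : ℝ) (hq : 2 ≤ q) :
    ∃ C : ℝ≥0, 0 < C ∧ ∀ p : ℝ≥0∞, 2 ≤ p →
      ∀ d : ℕ, 0 < d → ∀ f : (Fin d → ℤ) → ℂ,
      lpNorm p (fun x => ⨆ n : ℕ, (‖avgOp q d ((2 : ℝ) ^ n) f x‖₊ : ℝ≥0∞))
        ≤ (C : ℝ≥0∞) * lpNorm p (fun x => (‖f x‖₊ : ℝ≥0∞)) := by
  have hone : 1 ≤ (DyadicMaximal.maximalConst q).toNNReal :=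
    Real.one_le_toNNReal.2 (DyadicMaximal.one_le_maximalConst q)
  have hone' : (1 : ℝ≥0∞) ≤ (DyadicMaximal.maximalConst q).toNNReal := by exact_mod_cast hone
  refine ⟨_, one_pos.trans_le hone, fun p hp d hd f ↦ ?_⟩
  unfold lpNorm
  split_ifs with htop
  · refine iSup₂_le fun x n ↦ le_trans ?_ (le_mul_of_one_le_left zero_le hone')
    exact DyadicMaximal.enorm_avgOp_le (by linarith) (by positivity)
      (fun y ↦ le_iSup (fun x ↦ ‖f x‖ₑ) y) x
  · have hr : 2 ≤ p.toReal := ENNReal.toReal_mono htop hp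
    have hinv : 0 ≤ 1 / p.toReal := by positivity
    refine (ENNReal.rpow_le_rpow
      (DyadicMaximal.tsum_iSup_enorm_avgOp_rpow_le hq hd hr f) hinv).trans ?_
    rw [ENNReal.mul_rpow_of_nonneg _ _ hinv]
    refine mul_le_mul_left ?_ _
    exact (ENNReal.rpow_le_rpow_of_exponent_le hone'
      ((div_le_one (by linarith)).2 (by linarith))).trans_eq (ENNReal.rpow_one _)
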